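/- arXiv:2501.06840 — 2 statements merged into one kernel-verified Lean document; each statement's English description precedes it below -/
import Mathlib

section
/- Let n ≥ 3 and let φ : GL(n) → M_n be a continuous, commutativity-preserving and spectrum-shrinking map. Then there exists T ∈ GL(n) such that either φ(X) = T X T⁻¹ for all X ∈ GL(n), or φ(X) = T Xᵗ T⁻¹ for all X ∈ GL(n) (where Xᵗ denotes the transpose). -/
open Matrix


/-- `p` restricted to any complex line is a polynomial. -/
def PolyLine {E : Type*} [AddCommGroup E] [Module ℂ E] (p : E → ℂ) : Prop :=
  ∀ a b : E, ∃ q : Polynomial ℂ, ∀ z : ℂ, p (a + z • b) = q.eval z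

section PL
variable {E : Type*} [AddCommGroup E] [Module ℂ E]

theorem PolyLine.const (c : ℂ) : PolyLine (fun _ : E => c) :=
  fun _ _ => ⟨Polynomial.C c, fun z => by simp⟩

theorem PolyLine.lin (f : E →ₗ[ℂ] ℂ) : PolyLine (fun x : E => f x) :=
  fun a b => ⟨Polynomial.C (f a) + Polynomial.X * Polynomial.C (f b), fun z => by
    simp; ring⟩

theorem PolyLine.add {p q : E → ℂ} (hp : PolyLine p) (hq : PolyLine q) :
    PolyLine (fun x => p x + q x) := fun a b => by
  obtain ⟨r, hr⟩ := hp a b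
  obtain ⟨s, hs⟩ := hq a b
  exact ⟨r + s, fun z => by simp [hr, hs]⟩

theorem PolyLine.mul {p q : E → ℂ} (hp : PolyLine p) (hq : PolyLine q) :
    PolyLine (fun x => p x * q x) := fun a b => by
  obtain ⟨r, hr⟩ := hp a b
  obtain ⟨s, hs⟩ := hq a b
  exact ⟨r * s, fun z => by simp [hr, hs]⟩

theorem PolyLine.sum {ι : Type*} (s : Finset ι) {p : ι → E → ℂ} (hp : ∀ i, PolyLine (p i)) :
    PolyLine (fun x => ∑ i ∈ s, p i x) := by
  classical
  induction s using Finset.induction_on with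
  | empty => simpa using PolyLine.const (E := E) 0
  | insert a s ha ih => simpa [Finset.sum_insert ha] using (hp a).add ih

theorem PolyLine.prod {ι : Type*} (s : Finset ι) {p : ι → E → ℂ} (hp : ∀ i, PolyLine (p i)) :
    PolyLine (fun x => ∏ i ∈ s, p i x) := by
  classical
  induction s using Finset.induction_on with
  | empty => simpa using PolyLine.const (E := E) 1
  | insert a s ha ih => simpa [Finset.prod_insert ha] using (hp a).mul ih

theorem PolyLine.det {n : ℕ} {p : E → Matrix (Fin n) (Fin n) ℂ}
    (hp : ∀ i j, PolyLine (fun x => p x i j)) : PolyLine (fun x => (p x).det) := by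
  simp only [Matrix.det_apply']
  exact PolyLine.sum _ fun σ => (PolyLine.const _).mul (PolyLine.prod _ fun i => hp _ _)

theorem PolyLine.mmul {n : ℕ} {p q : E → Matrix (Fin n) (Fin n) ℂ}
    (hp : ∀ i j, PolyLine (fun x => p x i j)) (hq : ∀ i j, PolyLine (fun x => q x i j)) :
    ∀ i j, PolyLine (fun x => (p x * q x) i j) := by
  intro i j
  simp only [Matrix.mul_apply]
  exact PolyLine.sum _ fun k => (hp i k).mul (hq k j)

theorem PolyLine.mpow {n : ℕ} {p : E → Matrix (Fin n) (Fin n) ℂ}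
    (hp : ∀ i j, PolyLine (fun x => p x i j)) (k : ℕ) :
    ∀ i j, PolyLine (fun x => ((p x) ^ k) i j) := by
  induction k with
  | zero => intro i j; simpa using PolyLine.const _
  | succ k ih => simp only [pow_succ]; exact PolyLine.mmul ih hp

variable [TopologicalSpace E] [ContinuousAdd E] [ContinuousSMul ℂ E]

theorem PolyLine.preconn {p : E → ℂ} (hp : PolyLine p) : IsPreconnected {x | p x ≠ 0} := by
  apply isPreconnected_of_forall_pair
  intro a ha b hb
  obtain ⟨q, hq⟩ := hp a (b - a)
  have h0 : q.eval 0 ≠ 0 := by rw [← hq]; simpa using ha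
  have h1 : q.eval 1 ≠ 0 := by rw [← hq]; simpa using hb
  have hq0 : q ≠ 0 := by rintro rfl; simp at h0
  have hfin : {z : ℂ | q.eval z = 0}.Finite := by
    have := q.rootSet_finite ℂ
    refine this.subset ?_
    intro z hz
    simpa [Polynomial.mem_rootSet, hq0] using hz
  have hc : IsPathConnected ({z : ℂ | q.eval z = 0}ᶜ) :=
    hfin.countable.isPathConnected_compl_of_one_lt_rank (by rw [Complex.rank_real_complex]; norm_num)
  have hcont : Continuous (fun z : ℂ => a + z • (b - a)) := by fun_prop
  refine ⟨(fun z : ℂ => a + z • (b - a)) '' ({z : ℂ | q.eval z = 0}ᶜ), ?_, ⟨0, h0, by simp⟩,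
    ⟨1, h1, by simp⟩, hc.isConnected.isPreconnected.image _ hcont.continuousOn⟩
  rintro _ ⟨z, hz, rfl⟩
  simpa [hq] using hz

theorem PolyLine.dense {p : E → ℂ} (hp : PolyLine p) {b : E} (hb : p b ≠ 0) (a : E) :
    a ∈ closure {x | p x ≠ 0} := by
  obtain ⟨q, hq⟩ := hp a (b - a)
  have h1 : q.eval 1 ≠ 0 := by rw [← hq]; simpa using hb
  have hq0 : q ≠ 0 := by rintro rfl; simp at h1
  have hfin : {z : ℂ | q.eval z = 0}.Finite := by
    have := q.rootSet_finite ℂ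
    refine this.subset ?_
    intro z hz
    simpa [Polynomial.mem_rootSet, hq0] using hz
  have hd : Dense ({z : ℂ | q.eval z = 0}ᶜ) := hfin.countable.dense_compl ℂ
  have hcont : Continuous (fun z : ℂ => a + z • (b - a)) := by fun_prop
  have h0 := hd 0
  have := image_closure_subset_closure_image hcont ⟨0, h0, rfl⟩
  simp only [zero_smul, add_zero] at this
  refine closure_mono ?_ this
  rintro _ ⟨z, hz, rfl⟩
  simpa [hq] using hz
end PL

theorem clopen_partition {X ι : Type*} [TopologicalSpace X] [PreconnectedSpace X] [Finite ι]
    (C : ι → Set X) (hC : ∀ i, IsClosed (C i)) (hd : ∀ x i j, x ∈ C i → x ∈ C j → i = j)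
    (hcov : ∀ x, ∃ i, x ∈ C i) {i : ι} {x : X} (hx : x ∈ C i) (y : X) : y ∈ C i := by
  have h1 : (C i)ᶜ = ⋃ j : {j // j ≠ i}, C j.1 := by
    ext z
    simp only [Set.mem_compl_iff, Set.mem_iUnion]
    constructor
    · intro hz
      obtain ⟨j, hj⟩ := hcov z
      exact ⟨⟨j, fun h => hz (h ▸ hj)⟩, hj⟩
    · rintro ⟨⟨j, hj⟩, hz⟩ hz'
      exact hj (hd z j i hz hz')
  have h2 : IsClopen (C i) := by
    refine ⟨hC i, ?_⟩
    rw [← isClosed_compl_iff, h1]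
    exact isClosed_iUnion_of_finite fun j => hC _
  rw [h2.eq_univ ⟨x, hx⟩]
  trivial


abbrev Mn (n : ℕ) := Matrix (Fin n) (Fin n) ℂ

theorem mem_spec_iff {n : ℕ} (A : Mn n) (c : ℂ) :
    c ∈ spectrum ℂ A ↔ (c • (1 : Mn n) - A).det = 0 := by
  rw [spectrum.mem_iff, Matrix.isUnit_iff_isUnit_det, isUnit_iff_ne_zero, not_not,
    Algebra.algebraMap_eq_smul_one]

theorem spec_conj {n : ℕ} (A S : Mn n) (hS : IsUnit S) :
    spectrum ℂ (S * A * S⁻¹) = spectrum ℂ A := by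
  have hd := (Matrix.isUnit_iff_isUnit_det S).1 hS
  ext c
  rw [mem_spec_iff, mem_spec_iff]
  have : c • (1 : Mn n) - S * A * S⁻¹ = S * (c • (1 : Mn n) - A) * S⁻¹ := by
    rw [mul_sub, sub_mul]; simp [Matrix.mul_nonsing_inv S hd]
  rw [this, Matrix.det_conj hS]

theorem diagonalize {n : ℕ} (A : Mn n) (l : Fin n → ℂ) (hl : Function.Injective l)
    (h : ∀ i, l i ∈ spectrum ℂ A) : ∃ S : Mn n, IsUnit S ∧ A = S * diagonal l * S⁻¹ := by
  have h1 : ∀ i, ∃ v : Fin n → ℂ, v ≠ 0 ∧ A *ᵥ v = l i • v := by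
    intro i
    have := (mem_spec_iff A (l i)).1 (h i)
    obtain ⟨v, hv, hv'⟩ := Matrix.exists_mulVec_eq_zero_iff.2 this
    refine ⟨v, hv, ?_⟩
    rw [Matrix.sub_mulVec, Matrix.smul_mulVec, Matrix.one_mulVec, sub_eq_zero] at hv'
    exact hv'.symm
  choose v hv0 hv using h1
  have hli : LinearIndependent ℂ v := by
    apply Module.End.eigenvectors_linearIndependent' (Matrix.toLin' A) l hl v
    intro i
    rw [Module.End.hasEigenvector_iff]
    refine ⟨?_, hv0 i⟩
    rw [Module.End.mem_eigenspace_iff]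
    simpa using hv i
  let S : Mn n := (Matrix.of v)ᵀ
  have hS : IsUnit S := by
    rw [← Matrix.linearIndependent_cols_iff_isUnit]
    exact hli
  have hd := (Matrix.isUnit_iff_isUnit_det S).1 hS
  refine ⟨S, hS, ?_⟩
  have : A * S = S * diagonal l := by
    ext i j
    have := congrFun (hv j) i
    simp only [Matrix.mul_diagonal]
    simpa [S, Matrix.mul_apply, Matrix.mulVec, dotProduct, mul_comm] using this
  rw [← this, Matrix.mul_assoc, Matrix.mul_nonsing_inv S hd, Matrix.mul_one]

structure HH {n : ℕ} (φ : Mn n → Mn n) : Prop where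
  cont : ContinuousOn φ {X | IsUnit X}
  comm : ∀ X Y, IsUnit X → IsUnit Y → X * Y = Y * X → φ X * φ Y = φ Y * φ X
  spec : ∀ X, IsUnit X → spectrum ℂ (φ X) ⊆ spectrum ℂ X

theorem HH.conj {n : ℕ} {φ : Mn n → Mn n} (h : HH φ) (S : Mn n) (hS : IsUnit S) :
    HH (fun X => φ (S * X * S⁻¹)) := by
  have hd := (Matrix.isUnit_iff_isUnit_det S).1 hS
  have hS' : IsUnit S⁻¹ := by rwa [Matrix.isUnit_nonsing_inv_iff]
  have hu : ∀ X, IsUnit X → IsUnit (S * X * S⁻¹) := fun X hX => (hS.mul hX).mul hS'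
  have hm : ∀ X Y : Mn n, (S * X * S⁻¹) * (S * Y * S⁻¹) = S * (X * Y) * S⁻¹ := by
    intro X Y
    calc (S * X * S⁻¹) * (S * Y * S⁻¹) = S * X * (S⁻¹ * S) * Y * S⁻¹ := by noncomm_ring
      _ = _ := by rw [Matrix.nonsing_inv_mul S hd]; noncomm_ring
  refine ⟨?_, ?_, ?_⟩
  · apply h.cont.comp (t := {X | IsUnit X})
    · fun_prop
    · exact fun X hX => hu X hX
  · intro X Y hX hY hXY
    apply h.comm _ _ (hu X hX) (hu Y hY)
    rw [hm, hm, hXY]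
  · intro X hX
    refine (h.spec _ (hu X hX)).trans ?_
    rw [spec_conj X S hS]

theorem HH.transpose {n : ℕ} {φ : Mn n → Mn n} (h : HH φ) :
    HH (fun X => φ Xᵀ) := by
  have hu : ∀ X : Mn n, IsUnit X → IsUnit Xᵀ := by
    intro X hX
    rw [Matrix.isUnit_iff_isUnit_det, Matrix.det_transpose]
    exact (Matrix.isUnit_iff_isUnit_det X).1 hX
  refine ⟨?_, ?_, ?_⟩
  · apply h.cont.comp (t := {X | IsUnit X})
    · exact (Continuous.matrix_transpose continuous_id).continuousOn
    · exact fun X hX => hu X hX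
  · intro X Y hX hY hXY
    apply h.comm _ _ (hu X hX) (hu Y hY)
    rw [← Matrix.transpose_mul, ← Matrix.transpose_mul, hXY]
  · intro X hX
    refine (h.spec _ (hu X hX)).trans ?_
    intro c hc
    rw [mem_spec_iff] at hc ⊢
    rw [← Matrix.det_transpose]
    simpa using hc

/-- discriminant-like polynomial -/
noncomputable def dis {n : ℕ} (l : Fin n → ℂ) : ℂ :=
  (∏ i, l i) * ∏ i, ∏ j, if i = j then 1 else (l i - l j)

theorem dis_ne {n : ℕ} (l : Fin n → ℂ) :
    dis l ≠ 0 ↔ (∀ i, l i ≠ 0) ∧ Function.Injective l := by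
  unfold dis
  rw [mul_ne_zero_iff, Finset.prod_ne_zero_iff]
  simp only [Finset.mem_univ, true_implies, Finset.prod_ne_zero_iff]
  refine and_congr Iff.rfl ⟨fun h i j hij => ?_, fun h i j => ?_⟩
  · by_contra hne
    have := h i j
    rw [if_neg hne] at this
    exact this (sub_eq_zero.2 hij)
  · split_ifs with hij
    · exact one_ne_zero
    · exact sub_ne_zero.2 fun h' => hij (h h')

theorem PolyLine.dis {E : Type*} [AddCommGroup E] [Module ℂ E] {n : ℕ} {p : E → Fin n → ℂ}
    (hp : ∀ i, PolyLine (fun x => p x i)) : PolyLine (fun x => dis (p x)) := by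
  unfold _root_.dis
  refine (PolyLine.prod _ hp).mul (PolyLine.prod _ fun i => PolyLine.prod _ fun j => ?_)
  by_cases hij : i = j
  · simpa [hij] using PolyLine.const (E := E) 1
  · have := (hp i).add ((PolyLine.const (-1)).mul (hp j))
    simpa [hij, sub_eq_add_neg] using this

theorem dis_std (n : ℕ) : dis (fun i : Fin n => ((i : ℕ) + 1 : ℂ)) ≠ 0 := by
  rw [dis_ne]
  refine ⟨fun i => Nat.cast_add_one_ne_zero _, fun i j h => ?_⟩
  simp only [add_left_inj, Nat.cast_inj] at h
  exact Fin.ext h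

theorem isUnit_diag {n : ℕ} {l : Fin n → ℂ} (hl : ∀ i, l i ≠ 0) : IsUnit (diagonal l : Mn n) := by
  rw [Matrix.isUnit_iff_isUnit_det, Matrix.det_diagonal, isUnit_iff_ne_zero]
  exact Finset.prod_ne_zero_iff.2 fun i _ => hl i

theorem isUnit_conj {n : ℕ} {X S : Mn n} (hS : IsUnit S) (hX : IsUnit X) : IsUnit (S * X * S⁻¹) :=
  (hS.mul hX).mul (by rwa [Matrix.isUnit_nonsing_inv_iff])

/-- distinct roots: exponents are determined -/
theorem exps_unique {n : ℕ} (l : Fin n → ℂ) (hl : Function.Injective l) (k m : Fin n → ℕ)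
    (h : ∀ c : ℂ, ∏ j, (c - l j) ^ k j = ∏ j, (c - l j) ^ m j) : k = m := by
  have hp : (∏ j, (Polynomial.X - Polynomial.C (l j)) ^ k j : Polynomial ℂ)
      = ∏ j, (Polynomial.X - Polynomial.C (l j)) ^ m j := by
    apply Polynomial.funext
    intro c
    simpa [Polynomial.eval_prod] using h c
  have key : ∀ (k : Fin n → ℕ) (i : Fin n),
      (∏ j, (Polynomial.X - Polynomial.C (l j)) ^ k j : Polynomial ℂ).rootMultiplicity (l i)
        = k i := by
    intro k i
    rw [← Polynomial.count_roots, Polynomial.roots_prod]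
    · simp [Multiset.count_bind, Polynomial.roots_pow, Multiset.count_singleton,
        Multiset.count_nsmul, hl.eq_iff]
      rw [List.sum_ofFn]
      simp
    · exact Finset.prod_ne_zero_iff.2 fun j _ => pow_ne_zero _ (Polynomial.X_sub_C_ne_zero _)
  funext i
  rw [← key k i, hp, key m i]

/-- existence of exponents -/
theorem exps_exist {n : ℕ} (A : Mn n) (l : Fin n → ℂ) (hl : Function.Injective l)
    (h : spectrum ℂ A ⊆ Set.range l) :
    ∃ k : Fin n → Fin (n + 1), ∀ c : ℂ, (c • (1 : Mn n) - A).det = ∏ j, (c - l j) ^ (k j : ℕ) := by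
  classical
  have hs : A.charpoly.Splits := IsAlgClosed.splits _
  have hmon := A.charpoly_monic
  have hcount : ∀ j, A.charpoly.roots.count (l j) < n + 1 := by
    intro j
    have h1 := Multiset.count_le_card (l j) A.charpoly.roots
    have h2 := A.charpoly.card_roots'
    rw [A.charpoly_natDegree_eq_dim, Fintype.card_fin] at h2
    omega
  refine ⟨fun j => ⟨A.charpoly.roots.count (l j), hcount j⟩, fun c => ?_⟩
  have he : (c • (1 : Mn n) - A).det = A.charpoly.eval c := by
    rw [Matrix.eval_charpoly]; congr 1
    rw [Matrix.scalar_apply, Matrix.smul_one_eq_diagonal]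
  rw [he]
  conv_lhs => rw [hs.eq_prod_roots_of_monic hmon]
  rw [Polynomial.eval_multiset_prod, Multiset.map_map]
  simp only [Function.comp_def, Polynomial.eval_sub, Polynomial.eval_X, Polynomial.eval_C]
  rw [Finset.prod_multiset_map_count]
  have hsub : A.charpoly.roots.toFinset ⊆ Finset.univ.image l := by
    intro x hx
    rw [Multiset.mem_toFinset, Polynomial.mem_roots hmon.ne_zero,
      ← Matrix.mem_spectrum_iff_isRoot_charpoly] at hx
    obtain ⟨i, rfl⟩ := h hx
    simp
  rw [Finset.prod_subset hsub, Finset.prod_image (fun a _ b _ hab => hl hab)]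
  intro x _ hx
  rw [Multiset.mem_toFinset] at hx
  rw [Multiset.count_eq_zero_of_notMem hx, pow_zero]


theorem cont_conj_diag {n : ℕ} {φ : Mn n → Mn n} (h : HH φ) :
    Continuous (fun p : {p : Mn n × (Fin n → ℂ) | p.1.det * dis p.2 ≠ 0} =>
      φ (p.1.1 * diagonal p.1.2 * p.1.1⁻¹)) := by
  have hU : ∀ p : {p : Mn n × (Fin n → ℂ) | p.1.det * dis p.2 ≠ 0}, p.1.1.det ≠ 0 :=
    fun p => left_ne_zero_of_mul p.2
  apply h.cont.comp_continuous
  · have h1 : Continuous (fun p : {p : Mn n × (Fin n → ℂ) | p.1.det * dis p.2 ≠ 0} => p.1.1) := by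
      fun_prop
    have h2 : Continuous (fun p : {p : Mn n × (Fin n → ℂ) | p.1.det * dis p.2 ≠ 0} =>
        (diagonal p.1.2 : Mn n)) := by
      apply Continuous.matrix_diagonal
      fun_prop
    have h3 : Continuous (fun p : {p : Mn n × (Fin n → ℂ) | p.1.det * dis p.2 ≠ 0} =>
        p.1.1⁻¹) := by
      simp only [Matrix.inv_def, Ring.inverse_eq_inv']
      exact (h1.matrix_det.inv₀ hU).smul h1.matrix_adjugate
    exact (h1.mul h2).mul h3
  · intro p
    refine isUnit_conj ?_ (isUnit_diag ((dis_ne _).1 (right_ne_zero_of_mul p.2)).1)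
    rw [Matrix.isUnit_iff_isUnit_det, isUnit_iff_ne_zero]
    exact hU p

theorem full_spec {n : ℕ} {φ : Mn n → Mn n} (h : HH φ) (S : Mn n) (hS : IsUnit S)
    (l : Fin n → ℂ) (hl : dis l ≠ 0) (j : Fin n) :
    l j ∈ spectrum ℂ (φ (S * diagonal l * S⁻¹)) := by
  classical
  let U := {p : Mn n × (Fin n → ℂ) | p.1.det * dis p.2 ≠ 0}
  have hUc : IsPreconnected U := by
    apply PolyLine.preconn
    refine PolyLine.mul (PolyLine.det fun i j => ?_) (PolyLine.dis fun i => ?_)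
    · exact PolyLine.lin ((LinearMap.proj j).comp ((LinearMap.proj i : (Fin n → Fin n → ℂ) →ₗ[ℂ] _).comp
        (LinearMap.fst ℂ (Mn n) (Fin n → ℂ))))
    · exact PolyLine.lin ((LinearMap.proj i).comp (LinearMap.snd ℂ (Mn n) (Fin n → ℂ)))
  have : PreconnectedSpace U := Subtype.preconnectedSpace hUc
  let f : U → Mn n := fun p => φ (p.1.1 * diagonal p.1.2 * p.1.1⁻¹)
  have hf : Continuous f := cont_conj_diag h
  have hinj : ∀ p : U, Function.Injective p.1.2 := fun p =>
    ((dis_ne _).1 (right_ne_zero_of_mul p.2)).2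
  let C : (Fin n → Fin (n + 1)) → Set U := fun k =>
    {p | ∀ c : ℂ, (c • (1 : Mn n) - f p).det = ∏ j, (c - p.1.2 j) ^ (k j : ℕ)}
  have hC : ∀ k, IsClosed (C k) := by
    intro k
    simp only [C, Set.ofPred_forall]
    refine isClosed_iInter fun c => isClosed_eq ?_ ?_
    · exact (continuous_const.sub hf).matrix_det
    · fun_prop
  have hd : ∀ x i j, x ∈ C i → x ∈ C j → i = j := by
    intro p k m hk hm
    have := exps_unique p.1.2 (hinj p) (fun j => (k j : ℕ)) (fun j => (m j : ℕ))
      (fun c => (hk c).symm.trans (hm c))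
    funext i
    exact Fin.ext (congrFun this i)
  have hcov : ∀ p, ∃ k, p ∈ C k := by
    intro p
    apply exps_exist (f p) p.1.2 (hinj p)
    have hu : IsUnit p.1.1 := by
      rw [Matrix.isUnit_iff_isUnit_det, isUnit_iff_ne_zero]
      exact left_ne_zero_of_mul p.2
    refine (h.spec _ (isUnit_conj hu
      (isUnit_diag ((dis_ne _).1 (right_ne_zero_of_mul p.2)).1))).trans ?_
    rw [spec_conj _ _ hu, spectrum_diagonal]
  have hSd : S.det ≠ 0 := by
    rwa [Matrix.isUnit_iff_isUnit_det, isUnit_iff_ne_zero] at hS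
  let p : U := ⟨(S, l), mul_ne_zero hSd hl⟩
  obtain ⟨k, hk⟩ := hcov p
  have hlc := (dis_ne _).1 hl
  have hsym : ∀ i, k i = k j := by
    intro i
    let σ : Equiv.Perm (Fin n) := Equiv.swap i j
    have hS'd : (S.submatrix (Equiv.refl _) σ).det ≠ 0 := by
      have : IsUnit (S.submatrix (Equiv.refl _) σ) := (Matrix.isUnit_submatrix_equiv _ _).2 hS
      rwa [Matrix.isUnit_iff_isUnit_det, isUnit_iff_ne_zero] at this
    let p' : U := ⟨(S.submatrix (Equiv.refl _) σ, l ∘ σ), mul_ne_zero hS'd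
      ((dis_ne _).2 ⟨fun i => hlc.1 _, hlc.2.comp σ.injective⟩)⟩
    have hp' := clopen_partition C hC hd hcov hk p'
    have hfp : f p' = f p := by
      simp only [f, p', p]
      congr 1
      rw [Matrix.inv_submatrix_equiv, ← Matrix.submatrix_diagonal_equiv,
        Matrix.submatrix_mul_equiv, Matrix.submatrix_mul_equiv]
      rfl
    have := exps_unique l hlc.2 (fun m => (k m : ℕ)) (fun m => (k (σ m) : ℕ)) (by
      intro c
      rw [← hk c, ← hfp, hp' c]
      simp only [p', Function.comp]
      rw [← Equiv.prod_comp σ (fun m => (c - l m) ^ (k (σ m) : ℕ))]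
      simp [σ])
    have h2 := congrFun this i
    simp only [σ, Equiv.swap_apply_left] at h2
    exact Fin.ext h2
  rw [mem_spec_iff]
  by_cases hk0 : (k j : ℕ) = 0
  · exfalso
    have : Nonempty (Fin n) := ⟨j⟩
    have : Nontrivial (Mn n) := inferInstance
    obtain ⟨c, hc⟩ := spectrum.nonempty_of_isAlgClosed_of_finiteDimensional ℂ (f p)
    rw [mem_spec_iff, hk c] at hc
    simp [hsym, hk0] at hc
  · have := hk (l j)
    refine this.trans ?_
    apply Finset.prod_eq_zero (Finset.mem_univ j)
    simp [p, hk0]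

theorem inv_conj {n : ℕ} {T A B : Mn n} (hT : IsUnit T) (h : T⁻¹ * A * T = B) :
    A = T * B * T⁻¹ := by
  have hd := (Matrix.isUnit_iff_isUnit_det T).1 hT
  rw [← h]
  calc A = (T * T⁻¹) * A * (T * T⁻¹) := by rw [Matrix.mul_nonsing_inv T hd]; simp
    _ = _ := by noncomm_ring

/-- Step A -/
theorem diag_form {n : ℕ} {φ : Mn n → Mn n} (h : HH φ) :
    ∃ T : Mn n, IsUnit T ∧ ∀ l : Fin n → ℂ, (∀ i, l i ≠ 0) →
      φ (diagonal l) = T * diagonal l * T⁻¹ := by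
  classical
  set l0 : Fin n → ℂ := fun i => ((i : ℕ) + 1 : ℂ) with hl0
  have hd0 : dis l0 ≠ 0 := dis_std n
  have hl0c := (dis_ne _).1 hd0
  obtain ⟨T, hT, hTe⟩ := diagonalize (φ (diagonal l0)) l0 hl0c.2 (fun i => by
    simpa using full_spec h 1 isUnit_one l0 hd0 i)
  have hTd := (Matrix.isUnit_iff_isUnit_det T).1 hT
  refine ⟨T, hT, ?_⟩
  let m : (Fin n → ℂ) → Mn n := fun l => T⁻¹ * φ (diagonal l) * T
  have hm0 : m l0 = diagonal l0 := by
    simp only [m]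
    rw [hTe]
    calc T⁻¹ * (T * diagonal l0 * T⁻¹) * T = (T⁻¹ * T) * diagonal l0 * (T⁻¹ * T) := by noncomm_ring
      _ = _ := by rw [Matrix.nonsing_inv_mul T hTd]; simp
  have hmd : ∀ l : Fin n → ℂ, (∀ i, l i ≠ 0) → ∀ i j, i ≠ j → m l i j = 0 := by
    intro l hl i j hij
    have h1 := h.comm (diagonal l) (diagonal l0) (isUnit_diag hl) (isUnit_diag hl0c.1) (by
      simp [mul_comm])
    have h2 : m l * m l0 = m l0 * m l := by
      simp only [m]
      calc T⁻¹ * φ (diagonal l) * T * (T⁻¹ * φ (diagonal l0) * T)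
          = T⁻¹ * φ (diagonal l) * (T * T⁻¹) * φ (diagonal l0) * T := by noncomm_ring
        _ = T⁻¹ * (φ (diagonal l) * φ (diagonal l0)) * T := by
            rw [Matrix.mul_nonsing_inv T hTd]; noncomm_ring
        _ = T⁻¹ * (φ (diagonal l0) * φ (diagonal l)) * T := by rw [h1]
        _ = T⁻¹ * φ (diagonal l0) * (T * T⁻¹) * φ (diagonal l) * T := by
            rw [Matrix.mul_nonsing_inv T hTd]; noncomm_ring
        _ = _ := by noncomm_ring
    rw [hm0] at h2
    have h3 := congrFun (congrFun h2 i) j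
    rw [Matrix.mul_diagonal, Matrix.diagonal_mul] at h3
    have h4 : m l i j * (l0 j - l0 i) = 0 := by linear_combination h3
    rcases mul_eq_zero.1 h4 with h5 | h5
    · exact h5
    · exact absurd (hl0c.2 (sub_eq_zero.1 h5)).symm hij
  have hmdiag : ∀ l : Fin n → ℂ, (∀ i, l i ≠ 0) → m l = diagonal (fun i => m l i i) := by
    intro l hl
    ext i j
    by_cases hij : i = j
    · subst hij; simp
    · rw [hmd l hl i j hij, Matrix.diagonal_apply_ne _ hij]
  have hms : ∀ l : Fin n → ℂ, (∀ i, l i ≠ 0) → ∀ i, ∃ j, l j = m l i i := by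
    intro l hl i
    have h1 : m l i i ∈ spectrum ℂ (m l) := by
      rw [hmdiag l hl, spectrum_diagonal]
      exact ⟨i, by simp⟩
    have h2 : φ (diagonal l) = T * m l * T⁻¹ := inv_conj hT rfl
    rw [← spec_conj (m l) T hT, ← h2] at h1
    have := h.spec _ (isUnit_diag hl) h1
    rwa [spectrum_diagonal] at this
  have hmc : ContinuousOn m {l | ∀ i, l i ≠ 0} := by
    have : ContinuousOn (fun l : Fin n → ℂ => φ (diagonal l)) {l | ∀ i, l i ≠ 0} := by
      apply h.cont.comp (t := {X | IsUnit X})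
      · exact (Continuous.matrix_diagonal continuous_id).continuousOn
      · exact fun l hl => isUnit_diag hl
    exact (continuousOn_const.mul this).mul continuousOn_const
  let V := {l : Fin n → ℂ | dis l ≠ 0}
  have hpl : PolyLine (fun l : Fin n → ℂ => dis l) :=
    PolyLine.dis fun i => PolyLine.lin (LinearMap.proj i : (Fin n → ℂ) →ₗ[ℂ] ℂ)
  have hVc : IsPreconnected V := hpl.preconn
  have : PreconnectedSpace V := Subtype.preconnectedSpace hVc
  have hmV : Continuous (fun l : V => m l.1) :=
    hmc.comp_continuous continuous_subtype_val fun l => ((dis_ne _).1 l.2).1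
  have hV : ∀ l ∈ V, ∀ i, m l i i = l i := by
    intro l hl i
    let C : Fin n → Set V := fun j => {l | m l.1 i i = l.1 j}
    refine clopen_partition C ?_ ?_ ?_ (i := i) (x := ⟨l0, hd0⟩) ?_ ⟨l, hl⟩
    · intro j
      refine isClosed_eq ?_ ((continuous_apply j).comp continuous_subtype_val)
      exact (continuous_apply i).comp ((continuous_apply i).comp hmV)
    · intro x a b ha hb
      exact ((dis_ne _).1 x.2).2 (Eq.trans (Eq.symm ha) hb)
    · intro x
      obtain ⟨j, hj⟩ := hms x.1 ((dis_ne _).1 x.2).1 i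
      exact ⟨j, hj.symm⟩
    · change m l0 i i = l0 i
      rw [hm0]; simp
  intro l hl
  apply inv_conj hT
  change m l = diagonal l
  rw [hmdiag l hl]
  congr 1
  funext i
  have hcl : l ∈ closure V := hpl.dense hd0 l
  have hmi : ContinuousWithinAt (fun l => m l i i) V l := by
    have h1 : ContinuousWithinAt m V l := (hmc l hl).mono fun x hx => ((dis_ne _).1 hx).1
    exact ((continuous_apply i).comp (continuous_apply i)).continuousAt.comp_continuousWithinAt h1
  have hli : ContinuousWithinAt (fun l : Fin n → ℂ => l i) V l :=
    (continuous_apply i).continuousWithinAt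
  have := mem_closure_iff_nhdsWithin_neBot.1 hcl
  refine tendsto_nhds_unique hmi.tendsto (hli.tendsto.congr' ?_)
  filter_upwards [self_mem_nhdsWithin] with x hx
  exact (hV x hx i).symm


theorem frame {n : ℕ} {φ : Mn n → Mn n} (h : HH φ) (S : Mn n) (hS : IsUnit S) :
    ∃ T : Mn n, IsUnit T ∧ ∀ (d : Fin n → ℂ) (c : ℂ), (∀ i, c + d i ≠ 0) →
      φ (c • 1 + S * diagonal d * S⁻¹) = c • 1 + T * diagonal d * T⁻¹ := by
  obtain ⟨T, hT, hT'⟩ := diag_form (h.conj S hS)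
  have key : ∀ (S : Mn n), IsUnit S → ∀ (d : Fin n → ℂ) (c : ℂ),
      S * diagonal (fun i => c + d i) * S⁻¹ = c • 1 + S * diagonal d * S⁻¹ := by
    intro S hS d c
    have hd := (Matrix.isUnit_iff_isUnit_det S).1 hS
    have : (diagonal (fun i => c + d i) : Mn n) = c • 1 + diagonal d := by
      rw [Matrix.smul_one_eq_diagonal, Matrix.diagonal_add]
    rw [this, mul_add, add_mul]
    simp [Matrix.mul_nonsing_inv S hd]
  refine ⟨T, hT, fun d c hc => ?_⟩
  rw [← key S hS, ← key T hT]
  exact hT' _ hc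

theorem frame_sum {n : ℕ} {φ : Mn n → Mn n} (h : HH φ) (S : Mn n) (hS : IsUnit S) :
    ∑ k, (φ (1 + S * single k k 1 * S⁻¹) - 1) = 1 := by
  obtain ⟨T, hT, hT'⟩ := frame h S hS
  have hd := (Matrix.isUnit_iff_isUnit_det T).1 hT
  have : ∀ k, φ (1 + S * single k k 1 * S⁻¹) - 1 = T * single k k 1 * T⁻¹ := by
    intro k
    have := hT' (Pi.single k 1) 1 (by
      intro i
      by_cases hi : i = k
      · subst hi; norm_num
      · simp [hi])
    rw [one_smul, Matrix.diagonal_single] at this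
    rw [this]; abel
  simp only [this]
  rw [← Finset.sum_mul, ← Finset.mul_sum]
  have h1 : ∑ k : Fin n, single k k (1 : ℂ) = (1 : Mn n) := by
    ext i j
    simp only [Matrix.sum_apply, Matrix.single_apply, Matrix.one_apply]
    by_cases hij : i = j
    · subst hij; simp
    · rw [if_neg hij]
      refine Finset.sum_eq_zero fun k _ => if_neg ?_
      rintro ⟨rfl, rfl⟩
      exact hij rfl
  rw [h1, Matrix.mul_one, Matrix.mul_nonsing_inv T hd]

theorem frame_scale {n : ℕ} {φ : Mn n → Mn n} (h : HH φ) (S : Mn n) (hS : IsUnit S) (k : Fin n)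
    (c e : ℂ) (hc : c ≠ 0) (hce : c + e ≠ 0) :
    φ (c • 1 + e • (S * single k k 1 * S⁻¹)) =
      c • 1 + e • (φ (1 + S * single k k 1 * S⁻¹) - 1) := by
  obtain ⟨T, hT, hT'⟩ := frame h S hS
  have h1 := hT' (Pi.single k 1) 1 (by
      intro i
      by_cases hi : i = k
      · subst hi; norm_num
      · simp [hi])
  have h2 := hT' (Pi.single k e) c (by
      intro i
      by_cases hi : i = k
      · subst hi; simpa using hce
      · simpa [hi] using hc)
  have h3 : (single k k e : Mn n) = e • single k k 1 := by simp
  rw [one_smul, Matrix.diagonal_single] at h1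
  rw [Matrix.diagonal_single, h3] at h2
  rw [h1, add_sub_cancel_left]
  rwa [mul_smul_comm, smul_mul_assoc, mul_smul_comm, smul_mul_assoc] at h2

/-- row matrix -/
def RR {n : ℕ} (i : Fin n) (a : Fin n → ℂ) : Mn n := vecMulVec (Pi.single i 1) a

theorem RR_add {n : ℕ} (i : Fin n) (a b : Fin n → ℂ) : RR i (a + b) = RR i a + RR i b := by
  simp [RR, Matrix.vecMulVec_add]

theorem RR_smul {n : ℕ} (i : Fin n) (c : ℂ) (a : Fin n → ℂ) : RR i (c • a) = c • RR i a := by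
  simp [RR, Matrix.vecMulVec_smul]

theorem RR_single {n : ℕ} (i k : Fin n) (c : ℂ) : RR i (Pi.single k c) = single i k c := by
  ext p q
  simp only [RR, Matrix.vecMulVec_apply, Matrix.single_apply, Pi.single_apply]
  split_ifs <;> simp_all

theorem RR_mul {n : ℕ} (i : Fin n) (a b : Fin n → ℂ) : RR i a * RR i b = a i • RR i b := by
  ext p q
  simp [RR, Matrix.mul_apply, Matrix.vecMulVec_apply, Pi.single_apply]

theorem isUnit_RR {n : ℕ} (i : Fin n) (a : Fin n → ℂ) (c : ℂ) (hc : c ≠ 0) (hca : c + a i ≠ 0) :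
    IsUnit (c • 1 + RR i a) := by
  have : (c • 1 + RR i a) * (c⁻¹ • 1 - (c * (c + a i))⁻¹ • RR i a) = 1 := by
    simp only [add_mul, mul_sub, smul_mul_assoc, mul_smul_comm, Matrix.one_mul, Matrix.mul_one,
      RR_mul]
    ext p q
    simp only [Matrix.add_apply, Matrix.sub_apply, Matrix.smul_apply, smul_eq_mul]
    field_simp
    ring
  exact IsUnit.of_mul_eq_one _ this

theorem U_inv {n : ℕ} (i : Fin n) (b : Fin n → ℂ) (hb : b i = 0) :
    (1 - RR i b) * (1 + RR i b) = 1 := by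
  rw [sub_mul, mul_add, mul_add, RR_mul, hb]; simp

theorem U_unit {n : ℕ} (i : Fin n) (b : Fin n → ℂ) (hb : b i = 0) :
    IsUnit (1 - RR i b) ∧ (1 - RR i b)⁻¹ = 1 + RR i b :=
  ⟨IsUnit.of_mul_eq_one _ (U_inv i b hb), Matrix.inv_eq_right_inv (U_inv i b hb)⟩

theorem RR_mul_single {n : ℕ} (i : Fin n) (b : Fin n → ℂ) (k : Fin n) :
    RR i b * single k k 1 = single i k (b k) := by
  ext p q
  simp [RR, Matrix.mul_apply, Matrix.vecMulVec_apply, Pi.single_apply, Matrix.single_apply, ite_and]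
  split_ifs <;> simp_all

theorem U_conj_self {n : ℕ} (i : Fin n) (b : Fin n → ℂ) (hb : b i = 0) :
    (1 - RR i b) * single i i 1 * (1 - RR i b)⁻¹ = RR i (Pi.single i 1 + b) := by
  rw [(U_unit i b hb).2, sub_mul, RR_mul_single, hb, Matrix.one_mul, RR_add, RR_single, mul_add]
  have : single i i (1 : ℂ) * RR i b = RR i b := by
    rw [← RR_single, RR_mul]; simp
  simp [this]

theorem U_conj_ne {n : ℕ} (i : Fin n) (b : Fin n → ℂ) (hb : b i = 0) (k : Fin n) (hk : k ≠ i) :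
    (1 - RR i b) * single k k 1 * (1 - RR i b)⁻¹ = single k k 1 - single i k (b k) := by
  rw [(U_unit i b hb).2, sub_mul, RR_mul_single, Matrix.one_mul, mul_add, Matrix.mul_one]
  have : ∀ (p : Fin n) (c : ℂ), single p k c * RR i b = 0 := by
    intro p c
    ext s t
    simp [RR, Matrix.mul_apply, Matrix.vecMulVec_apply, Pi.single_apply, Matrix.single_apply, hk]
  rw [sub_mul, this, this]; simp

theorem row_split {n : ℕ} {φ : Mn n → Mn n} (h : HH φ) (i : Fin n) :
    ∃ g : Fin n → ℂ → Mn n, (∀ k, g k 0 = 0) ∧ (∀ t, g i t = 0) ∧ ∀ b : Fin n → ℂ, b i = 0 →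
      φ (1 + RR i (Pi.single i 1 + b)) = φ (1 + RR i (Pi.single i 1)) + ∑ k, g k (b k) := by
  classical
  let f : Fin n → ℂ → Mn n := fun k t => φ (1 + (single k k 1 - single i k t)) - 1
  have key : ∀ b : Fin n → ℂ, b i = 0 →
      φ (1 + RR i (Pi.single i 1 + b)) - 1 + ∑ k ∈ Finset.univ.erase i, f k (b k) = 1 := by
    intro b hb
    have hs := frame_sum h _ (U_unit i b hb).1
    rw [← Finset.add_sum_erase _ _ (Finset.mem_univ i), U_conj_self i b hb] at hs
    refine Eq.trans (congrArg₂ _ rfl (Finset.sum_congr rfl fun k hk => ?_)) hs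
    rw [U_conj_ne i b hb k (Finset.ne_of_mem_erase hk)]
  refine ⟨fun k t => if k = i then 0 else f k 0 - f k t, fun k => by simp, fun t => by simp,
    fun b hb => ?_⟩
  have h1 := key b hb
  have h2 := key 0 rfl
  rw [← Finset.add_sum_erase Finset.univ
    (fun k => if k = i then (0 : Mn n) else f k 0 - f k (b k)) (Finset.mem_univ i)]
  have h3 : ∑ k ∈ Finset.univ.erase i, (if k = i then (0 : Mn n) else f k 0 - f k (b k))
      = ∑ k ∈ Finset.univ.erase i, f k 0 - ∑ k ∈ Finset.univ.erase i, f k (b k) := by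
    rw [← Finset.sum_sub_distrib]
    refine Finset.sum_congr rfl fun k hk => ?_
    rw [if_neg (Finset.ne_of_mem_erase hk)]
  rw [h3]
  simp only [Pi.zero_apply, add_zero] at h2
  simp only [if_true, zero_add]
  have h4 := h1.trans h2.symm
  rw [← sub_eq_zero] at h4 ⊢
  rw [← h4]
  abel

theorem row_add {n : ℕ} (hn : 3 ≤ n) {φ : Mn n → Mn n} (h : HH φ) (i : Fin n)
    (g : Fin n → ℂ → Mn n) (hg0 : ∀ k, g k 0 = 0) (hgi : ∀ t, g i t = 0)
    (hg : ∀ b : Fin n → ℂ, b i = 0 →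
      φ (1 + RR i (Pi.single i 1 + b)) = φ (1 + RR i (Pi.single i 1)) + ∑ k, g k (b k))
    (k : Fin n) (s t : ℂ) : g k (s + t) = g k s + g k t := by
  classical
  by_cases hki : k = i
  · subst hki; simp [hgi]
  obtain ⟨j, hji, hjk⟩ : ∃ j : Fin n, j ≠ i ∧ j ≠ k := by
    have : ({i, k} : Finset (Fin n)).card < Fintype.card (Fin n) := by
      rw [Fintype.card_fin]; exact (Finset.card_le_two).trans_lt hn
    obtain ⟨j, hj⟩ := Finset.exists_mem_notMem_of_card_lt_card
      (s := ({i, k} : Finset (Fin n))) (t := Finset.univ) (by simpa using this)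
    simp at hj
    exact ⟨j, hj.1, hj.2⟩
  have hu := U_unit j (Pi.single k s) (by simp [hjk])
  obtain ⟨g', hg0', hgi', hg'⟩ := row_split (h.conj _ hu.1) i
  have hc1 : (1 - RR j (Pi.single k s)) * 1 * (1 - RR j (Pi.single k s))⁻¹ = 1 := by
    rw [Matrix.mul_one, Matrix.mul_nonsing_inv _ ((Matrix.isUnit_iff_isUnit_det _).1 hu.1)]
  have hc2 : ∀ a : Fin n → ℂ, (1 - RR j (Pi.single k s)) * RR i a * (1 - RR j (Pi.single k s))⁻¹ =
      RR i (a + Pi.single k (a j * s)) := by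
    intro a
    rw [hu.2, sub_mul]
    have e1 : RR j (Pi.single k s) * RR i a = 0 := by
      rw [RR_single]; ext p q
      simp [RR, Matrix.mul_apply, Matrix.vecMulVec_apply, Pi.single_apply, Matrix.single_apply, hki]
    have e2 : RR i a * RR j (Pi.single k s) = RR i (Pi.single k (a j * s)) := by
      have e3 : (Pi.single k (a j * s) : Fin n → ℂ) = a j • Pi.single k s := by
        ext l
        by_cases hl : l = k
        · subst hl; simp
        · simp [hl]
      rw [e3, RR_smul]
      simp only [RR]
      rw [Matrix.vecMulVec_mul_vecMulVec, Matrix.vecMulVec_smul]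
      simp
    rw [e1, sub_zero, Matrix.one_mul, mul_add, Matrix.mul_one, e2, RR_add]
  have hc3 : ∀ a : Fin n → ℂ,
      (1 - RR j (Pi.single k s)) * (1 + RR i a) * (1 - RR j (Pi.single k s))⁻¹ =
      1 + RR i (a + Pi.single k (a j * s)) := by
    intro a
    rw [mul_add, add_mul, hc1, hc2]
  simp only [hc3] at hg'
  have hij : i ≠ j := hji.symm
  have hik : i ≠ k := fun e => hki e.symm
  have two : ∀ (G : Fin n → ℂ → Mn n), (∀ k, G k 0 = 0) → ∀ x y : ℂ,
      ∑ l, G l ((Pi.single j x + Pi.single k y : Fin n → ℂ) l) = G j x + G k y := by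
    intro G hG x y
    rw [Finset.sum_eq_add_of_mem j k (Finset.mem_univ _) (Finset.mem_univ _) hjk]
    · rw [Pi.add_apply, Pi.add_apply, Pi.single_eq_same, Pi.single_eq_same, Pi.single_eq_of_ne hjk,
        Pi.single_eq_of_ne hjk.symm, add_zero, zero_add]
    · rintro l - ⟨h1, h2⟩
      simp [h1, h2, hG]
  have P : ∀ x y : ℂ, g' j x + g' k y = g j x + g k (x * s + y) := by
    intro x y
    have h1 := hg' (Pi.single j x + Pi.single k y) (by simp [hij, hik])
    have h2 := hg (Pi.single j x + Pi.single k (x * s + y)) (by simp [hij, hik])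
    rw [two _ hg0'] at h1
    rw [two _ hg0] at h2
    have e : (Pi.single i 1 + (Pi.single j x + Pi.single k y) +
        Pi.single k ((Pi.single i 1 + (Pi.single j x + Pi.single k y) : Fin n → ℂ) j * s)
          : Fin n → ℂ) = Pi.single i 1 + (Pi.single j x + Pi.single k (x * s + y)) := by
      simp [hji, hjk, Pi.single_add]
      abel
    have e0 : (Pi.single i 1 + Pi.single k ((Pi.single i 1 : Fin n → ℂ) j * s) : Fin n → ℂ)
        = Pi.single i 1 := by
      simp [hji]
    rw [e, e0, h2] at h1
    exact (add_left_cancel h1).symm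
  have P1 := P 1 t
  have P2 := P 1 0
  have P3 := P 0 t
  simp only [hg0, hg0', one_mul, zero_mul, zero_add, add_zero] at P1 P2 P3
  rw [P3, P2, add_assoc] at P1
  exact (add_left_cancel P1).symm


theorem row_lin {n : ℕ} (hn : 3 ≤ n) {φ : Mn n → Mn n} (h : HH φ) (i : Fin n) :
    ∃ Q : (Fin n → ℂ) →ₗ[ℂ] Mn n, ∀ (a : Fin n → ℂ) (c : ℂ), c ≠ 0 → c + a i ≠ 0 →
      φ (c • 1 + RR i a) = c • 1 + Q a := by
  classical
  obtain ⟨g, hg0, hgi, hg⟩ := row_split h i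
  have hadd := row_add hn h i g hg0 hgi hg
  set ψ : Mn n := φ (1 + RR i (Pi.single i 1)) - 1 with hψ
  let G : (Fin n → ℂ) → Mn n := fun b => ∑ k, g k (b k)
  have hGmul : ∀ (m : ℕ) b, G ((m : ℂ) • b) = (m : ℂ) • G b := by
    intro m b
    simp only [G]
    rw [Finset.smul_sum]
    refine Finset.sum_congr rfl fun k _ => ?_
    have := map_nsmul (AddMonoidHom.mk' (g k) (hadd k)) m (b k)
    simp only [AddMonoidHom.mk'_apply] at this
    rw [Pi.smul_apply, smul_eq_mul, ← nsmul_eq_mul, this, Nat.cast_smul_eq_nsmul]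
  -- formula for nonzero `e`
  have A : ∀ (c e : ℂ) (b : Fin n → ℂ), b i = 0 → c ≠ 0 → c + e ≠ 0 → e ≠ 0 →
      φ (c • 1 + RR i (e • Pi.single i 1 + b)) = c • 1 + e • ψ + e • G (e⁻¹ • b) := by
    intro c e b hb hc hce he
    have hb' : (e⁻¹ • b) i = 0 := by simp [hb]
    have h1 := frame_scale h _ (U_unit i (e⁻¹ • b) hb').1 i c e hc hce
    rw [U_conj_self i _ hb', hg _ hb', ← RR_smul, smul_add, smul_smul, mul_inv_cancel₀ he,
      one_smul] at h1
    rw [h1, hψ, add_sub_right_comm, smul_add, add_assoc]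
  -- limit
  have B : ∀ (c u : ℂ) (b : Fin n → ℂ), b i = 0 → c ≠ 0 → u ≠ 0 →
      φ (c • 1 + RR i b) = c • 1 + u • G (u⁻¹ • b) := by
    intro c u b hb hc hu
    let e : ℕ → ℂ := fun m => u / ((m : ℂ) + 1)
    have he0 : ∀ m, e m ≠ 0 := fun m => div_ne_zero hu (Nat.cast_add_one_ne_zero m)
    have hlim : Filter.Tendsto e Filter.atTop (nhds 0) := by
      have := (tendsto_one_div_add_atTop_nhds_zero_nat (𝕜 := ℂ)).const_mul u
      simpa [e, div_eq_mul_inv] using this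
    have hev : ∀ᶠ m in Filter.atTop, c + e m ≠ 0 := by
      have : Filter.Tendsto (fun m => c + e m) Filter.atTop (nhds c) := by
        simpa using hlim.const_add c
      exact this.eventually_ne hc
    have hL1 : Filter.Tendsto (fun m => c • (1 : Mn n) + RR i (e m • Pi.single i 1 + b))
        Filter.atTop (nhds (c • 1 + RR i b)) := by
      simp only [RR_add, RR_smul]
      have := ((hlim.smul_const (RR i (Pi.single i 1))).add_const (RR i b)).const_add
        (c • (1 : Mn n))
      simpa using this
    have hL2 : Filter.Tendsto (fun m => φ (c • (1 : Mn n) + RR i (e m • Pi.single i 1 + b)))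
        Filter.atTop (nhds (φ (c • 1 + RR i b))) := by
      have hc0 : ContinuousWithinAt φ {X | IsUnit X} (c • 1 + RR i b) :=
        h.cont _ (isUnit_RR i b c hc (by simpa [hb] using hc))
      refine hc0.tendsto.comp (tendsto_nhdsWithin_iff.2 ⟨hL1, ?_⟩)
      filter_upwards [hev] with m hm
      exact isUnit_RR i _ c hc (by simpa [hb] using hm)
    have hR : Filter.Tendsto (fun m => c • (1 : Mn n) + e m • ψ + u • G (u⁻¹ • b))
        Filter.atTop (nhds (c • 1 + u • G (u⁻¹ • b))) := by
      have := ((hlim.smul_const ψ).const_add (c • (1 : Mn n))).add_const (u • G (u⁻¹ • b))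
      simpa using this
    refine tendsto_nhds_unique hL2 (hR.congr' ?_)
    filter_upwards [hev] with m hm
    rw [A c (e m) b hb hc hm (he0 m)]
    congr 1
    have : (e m)⁻¹ • b = ((m + 1 : ℕ) : ℂ) • (u⁻¹ • b) := by
      rw [smul_smul]; congr 1
      simp only [e]; push_cast; rw [inv_div, div_eq_mul_inv]
    rw [this, hGmul, smul_smul]
    congr 1
    simp only [e]; push_cast
    rw [div_mul_cancel₀ _ (Nat.cast_add_one_ne_zero m)]
  have hGs : ∀ k t, G (Pi.single k t) = g k t := by
    intro k t
    simp only [G]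
    rw [Finset.sum_eq_single k]
    · simp
    · intro l _ hl; simp [hl, hg0]
    · simp
  have hhom : ∀ k t, g k t = t • g k 1 := by
    intro k t
    by_cases hk : k = i
    · subst hk; simp [hgi]
    by_cases ht : t = 0
    · subst ht; simp [hg0]
    have hb : (Pi.single k 1 : Fin n → ℂ) i = 0 := by simp [Ne.symm hk]
    have h1 := B 1 1 (Pi.single k 1) hb one_ne_zero one_ne_zero
    have h2 := B 1 t⁻¹ (Pi.single k 1) hb one_ne_zero (inv_ne_zero ht)
    have h3 := add_left_cancel (h1.symm.trans h2)
    have e3 : t • (Pi.single k 1 : Fin n → ℂ) = Pi.single k t := by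
      ext l
      by_cases hl : l = k
      · subst hl; simp
      · simp [hl]
    rw [inv_inv, inv_one, one_smul, one_smul, e3, hGs, hGs] at h3
    rw [h3, smul_smul, mul_inv_cancel₀ ht, one_smul]
  have hGlin : ∀ b : Fin n → ℂ, G b = ∑ k, b k • g k 1 := fun b =>
    Finset.sum_congr rfl fun k _ => hhom k _
  refine ⟨∑ k, (LinearMap.proj k : (Fin n → ℂ) →ₗ[ℂ] ℂ).smulRight (g k 1 + if k = i then ψ else 0),
    fun a c hc hca => ?_⟩
  have hQ : (∑ k, (LinearMap.proj k : (Fin n → ℂ) →ₗ[ℂ] ℂ).smulRight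
      (g k 1 + if k = i then ψ else 0)) a = a i • ψ + ∑ k, a k • g k 1 := by
    simp [LinearMap.sum_apply, smul_add, Finset.sum_add_distrib, add_comm]
  rw [hQ]
  by_cases ha : a i = 0
  · rw [B c 1 a ha hc one_ne_zero, ha]
    simp [hGlin]
  · let b : Fin n → ℂ := a - a i • Pi.single i 1
    have hb : b i = 0 := by simp [b]
    have hab : a = a i • Pi.single i 1 + b := by simp [b]
    have h1 := A c (a i) b hb hc hca ha
    rw [← hab] at h1
    rw [h1, hGlin, add_assoc, Finset.smul_sum]
    congr 2
    refine Finset.sum_congr rfl fun k _ => ?_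
    by_cases hk : k = i
    · subst hk; simp [hgi]
    · have : b k = a k := by simp [b, hk]
      rw [Pi.smul_apply, this, smul_smul, smul_eq_mul, mul_inv_cancel_left₀ ha]

theorem row_gen {n : ℕ} (hn : 3 ≤ n) {φ : Mn n → Mn n} (h : HH φ) (x : Fin n → ℂ) (hx : x ≠ 0) :
    ∃ Q : (Fin n → ℂ) →ₗ[ℂ] Mn n, ∀ (y : Fin n → ℂ) (c : ℂ), c ≠ 0 → c + y ⬝ᵥ x ≠ 0 →
      φ (c • 1 + vecMulVec x y) = c • 1 + Q y := by
  classical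
  obtain ⟨k, hk⟩ := Function.ne_iff.1 hx
  let S : Mn n := (1 : Mn n).updateCol k x
  have hS : IsUnit S := by
    rw [Matrix.isUnit_iff_isUnit_det, isUnit_iff_ne_zero, ← Matrix.cramer_apply, Matrix.cramer_one]
    exact hk
  have hd := (Matrix.isUnit_iff_isUnit_det S).1 hS
  have hSk : S *ᵥ Pi.single k 1 = x := by
    ext l
    simp [S]
  obtain ⟨Q, hQ⟩ := row_lin hn (h.conj S hS) k
  refine ⟨Q.comp (Matrix.vecMulLinear S), fun y c hc hcy => ?_⟩
  have h1 := hQ (y ᵥ* S) c hc (by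
    have : (y ᵥ* S) k = y ⬝ᵥ x := by
      rw [← hSk, Matrix.dotProduct_mulVec]; simp
    rwa [this])
  have h2 : S * (c • 1 + RR k (y ᵥ* S)) * S⁻¹ = c • 1 + vecMulVec x y := by
    rw [mul_add, add_mul, RR, Matrix.mul_vecMulVec, Matrix.vecMulVec_mul, hSk,
      Matrix.vecMul_vecMul, Matrix.mul_nonsing_inv S hd]
    simp [Matrix.mul_nonsing_inv S hd]
  simp only [h2] at h1
  simpa using h1

theorem exists_lin {n : ℕ} (hn : 3 ≤ n) {φ : Mn n → Mn n} (h : HH φ) :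
    ∃ Φ : Mn n →ₗ[ℂ] Mn n, ∀ (x y : Fin n → ℂ) (c : ℂ), x ≠ 0 → c ≠ 0 → c + y ⬝ᵥ x ≠ 0 →
      φ (c • 1 + vecMulVec x y) = c • 1 + Φ (vecMulVec x y) := by
  classical
  have h1 : ∀ x : Fin n → ℂ, ∃ Q : (Fin n → ℂ) →ₗ[ℂ] Mn n, (x = 0 → Q = 0) ∧
      (x ≠ 0 → ∀ (y : Fin n → ℂ) (c : ℂ), c ≠ 0 → c + y ⬝ᵥ x ≠ 0 →
      φ (c • 1 + vecMulVec x y) = c • 1 + Q y) := by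
    intro x
    by_cases hx : x = 0
    · exact ⟨0, fun _ => rfl, fun h => absurd hx h⟩
    · obtain ⟨Q, hQ⟩ := row_gen hn h x hx
      exact ⟨Q, fun h => absurd h hx, fun _ => hQ⟩
  choose Q hQ0 hQ using h1
  have h2 : ∀ y : Fin n → ℂ, y ≠ 0 → ∃ P : (Fin n → ℂ) →ₗ[ℂ] Mn n, ∀ x, Q x y = P x := by
    intro y hy
    obtain ⟨P, hP⟩ := row_gen hn h.transpose y hy
    refine ⟨P, fun x => ?_⟩
    by_cases hx : x = 0
    · subst hx; rw [hQ0 _ rfl]; simp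
    obtain ⟨c, hc, hc'⟩ : ∃ c : ℂ, c ≠ 0 ∧ c + y ⬝ᵥ x ≠ 0 := by
      by_cases h1 : 1 + y ⬝ᵥ x = 0
      · refine ⟨2, two_ne_zero, ?_⟩
        have : (2 : ℂ) + y ⬝ᵥ x = 1 + (1 + y ⬝ᵥ x) := by ring
        rw [this, h1]; simp
      · exact ⟨1, one_ne_zero, h1⟩
    have e1 := hQ x hx y c hc hc'
    have e2 := hP x c hc (by rwa [dotProduct_comm])
    have e3 : (c • 1 + vecMulVec y x : Mn n)ᵀ = c • 1 + vecMulVec x y := by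
      simp [Matrix.transpose_vecMulVec]
    simp only [e3] at e2
    exact add_left_cancel (e1.symm.trans e2)
  let B : (Fin n → ℂ) →ₗ[ℂ] (Fin n → ℂ) →ₗ[ℂ] Mn n := LinearMap.mk₂ ℂ (fun x y => Q x y)
    (by
      intro x x' y
      by_cases hy : y = 0
      · subst hy; simp
      · obtain ⟨P, hP⟩ := h2 y hy
        simp [hP])
    (by
      intro c x y
      by_cases hy : y = 0
      · subst hy; simp
      · obtain ⟨P, hP⟩ := h2 y hy
        simp [hP])
    (by intros; simp) (by intros; simp)
  let ee : Fin n → Fin n → ℂ := fun i j => if i = j then 1 else 0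
  let Φ : Mn n →ₗ[ℂ] Mn n :=
    { toFun := fun X => ∑ i, ∑ j, X i j • B (ee i) (ee j)
      map_add' := by intro X Y; simp [add_smul, Finset.sum_add_distrib]
      map_smul' := by intro c X; simp [mul_smul, Finset.smul_sum] }
  have hΦ : ∀ x y, Φ (vecMulVec x y) = Q x y := by
    intro x y
    have : B x y = Q x y := rfl
    rw [← this, LinearMap.pi_apply_eq_sum_univ B x, LinearMap.sum_apply]
    change ∑ i, ∑ j, (x i * y j) • B (ee i) (ee j) = _
    refine Finset.sum_congr rfl fun i _ => ?_
    rw [LinearMap.smul_apply, LinearMap.pi_apply_eq_sum_univ (B _) y, Finset.smul_sum]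
    refine Finset.sum_congr rfl fun j _ => ?_
    rw [smul_smul]
  refine ⟨Φ, fun x y c hx hc hc' => ?_⟩
  rw [hΦ]
  exact hQ x hx y c hc hc'

theorem diag_sum {n : ℕ} (d : Fin n → ℂ) : (diagonal d : Mn n) = ∑ k, d k • single k k 1 := by
  ext i j
  simp only [Matrix.sum_apply, Matrix.smul_apply, Matrix.single_apply, Matrix.diagonal_apply]
  by_cases hij : i = j
  · subst hij; simp
  · rw [if_neg hij]
    refine (Finset.sum_eq_zero fun k _ => ?_).symm
    rw [if_neg, smul_zero]
    rintro ⟨rfl, rfl⟩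
    exact hij rfl

theorem lin_frame {n : ℕ} {φ : Mn n → Mn n} (h : HH φ) (Φ : Mn n →ₗ[ℂ] Mn n)
    (hΦ : ∀ (x y : Fin n → ℂ) (c : ℂ), x ≠ 0 → c ≠ 0 → c + y ⬝ᵥ x ≠ 0 →
      φ (c • 1 + vecMulVec x y) = c • 1 + Φ (vecMulVec x y)) (S : Mn n) (hS : IsUnit S) :
    ∃ T : Mn n, IsUnit T ∧ (∀ d, Φ (S * diagonal d * S⁻¹) = T * diagonal d * T⁻¹) ∧
      ∀ d, (∀ i, d i ≠ 0) → φ (S * diagonal d * S⁻¹) = T * diagonal d * T⁻¹ := by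
  classical
  have hd := (Matrix.isUnit_iff_isUnit_det S).1 hS
  obtain ⟨T, hT, hT'⟩ := frame h S hS
  refine ⟨T, hT, ?_, fun d hd => ?_⟩
  · have key : ∀ k, Φ (S * single k k 1 * S⁻¹) = T * single k k 1 * T⁻¹ := by
      intro k
      have h1 := hT' (Pi.single k 1) 1 (by
        intro i
        by_cases hi : i = k
        · subst hi; norm_num
        · simp [hi])
      rw [Matrix.diagonal_single] at h1
      have e : S * single k k 1 * S⁻¹ =
          vecMulVec (S *ᵥ Pi.single k 1) (Pi.single k 1 ᵥ* S⁻¹) := by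
        rw [← RR_single, RR, Matrix.mul_vecMulVec, Matrix.vecMulVec_mul]
      have e2 : (Pi.single k 1 ᵥ* S⁻¹) ⬝ᵥ (S *ᵥ Pi.single k 1) = (1 : ℂ) := by
        rw [Matrix.dotProduct_mulVec, Matrix.vecMul_vecMul, Matrix.nonsing_inv_mul S hd]
        simp
      have h2 := hΦ (S *ᵥ Pi.single k 1) (Pi.single k 1 ᵥ* S⁻¹) 1 (by
        intro h0; rw [h0] at e2; simp at e2) one_ne_zero (by rw [e2]; norm_num)
      rw [← e] at h2
      exact add_left_cancel (h2.symm.trans h1)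
    intro d
    rw [diag_sum, Finset.mul_sum, Finset.sum_mul, map_sum, Finset.mul_sum, Finset.sum_mul]
    refine Finset.sum_congr rfl fun k _ => ?_
    rw [mul_smul_comm, smul_mul_assoc, mul_smul_comm, smul_mul_assoc, map_smul, key]
  · simpa using hT' d 0 (by simpa using hd)


noncomputable def hank {n : ℕ} (X : Mn n) : ℂ :=
  (Matrix.of fun i j : Fin n => (X ^ ((i : ℕ) + (j : ℕ))).trace).det

theorem hank_polyLine {n : ℕ} : PolyLine (fun X : Mn n => X.det * hank X) := by
  have h0 : ∀ i j : Fin n, PolyLine (fun X : Mn n => X i j) := fun i j =>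
    PolyLine.lin ((LinearMap.proj j).comp (LinearMap.proj i : (Fin n → Fin n → ℂ) →ₗ[ℂ] _))
  refine PolyLine.mul (PolyLine.det h0) (PolyLine.det fun i j => ?_)
  simp only [Matrix.of_apply, Matrix.trace, Matrix.diag]
  exact PolyLine.sum _ fun k => PolyLine.mpow h0 _ k k

theorem hank_std (n : ℕ) : ∃ X : Mn n, X.det * hank X ≠ 0 := by
  have hl := (dis_ne _).1 (dis_std n)
  refine ⟨diagonal fun i : Fin n => ((i : ℕ) + 1 : ℂ), mul_ne_zero ?_ ?_⟩
  · rw [Matrix.det_diagonal]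
    exact Finset.prod_ne_zero_iff.2 fun i _ => hl.1 i
  · have : (Matrix.of fun i j : Fin n =>
        ((diagonal (fun i : Fin n => ((i : ℕ) + 1 : ℂ)) : Mn n) ^ ((i : ℕ) + (j : ℕ))).trace) =
        (vandermonde (fun i : Fin n => ((i : ℕ) + 1 : ℂ)))ᵀ *
          vandermonde (fun i : Fin n => ((i : ℕ) + 1 : ℂ)) := by
      ext i j
      simp [Matrix.mul_apply, Matrix.vandermonde_apply, Matrix.diagonal_pow, Matrix.trace_diagonal,
        pow_add]
    rw [hank, this, Matrix.det_mul, Matrix.det_transpose]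
    have := Matrix.det_vandermonde_ne_zero_iff.2 hl.2
    exact mul_ne_zero this this

theorem hank_spec {n : ℕ} (X : Mn n) (hX : hank X ≠ 0) :
    ∃ l : Fin n → ℂ, Function.Injective l ∧ ∀ i, l i ∈ spectrum ℂ X := by
  classical
  have hmon := X.charpoly_monic
  have hs : X.charpoly.Splits := IsAlgClosed.splits _
  let s := X.charpoly.roots.toFinset
  by_cases hc : n ≤ s.card
  · refine ⟨fun i => (s.equivFin.symm (Fin.castLE hc i)).1, ?_, fun i => ?_⟩
    · intro i j hij
      have := s.equivFin.symm.injective (Subtype.ext hij)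
      exact Fin.castLE_injective hc this
    · have := (s.equivFin.symm (Fin.castLE hc i)).2
      rw [Multiset.mem_toFinset, Polynomial.mem_roots hmon.ne_zero,
        ← Matrix.mem_spectrum_iff_isRoot_charpoly] at this
      exact this
  · exfalso
    push Not at hc
    apply hX
    let m : Polynomial ℂ := ∏ a ∈ s, (Polynomial.X - Polynomial.C a)
    have hm1 : m.Monic := Polynomial.monic_prod_of_monic _ _ fun a _ => Polynomial.monic_X_sub_C a
    have hmd : m.natDegree = s.card := by
      simp only [m]
      rw [Polynomial.natDegree_prod_of_monic _ _ fun a _ => Polynomial.monic_X_sub_C a]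
      simp
    have hdvd : X.charpoly ∣ m ^ n := by
      conv_lhs => rw [hs.eq_prod_roots_of_monic hmon]
      rw [Finset.prod_multiset_map_count, ← Finset.prod_pow]
      refine Finset.prod_dvd_prod_of_dvd _ _ fun a _ => pow_dvd_pow _ ?_
      have h1 := Multiset.count_le_card a X.charpoly.roots
      have h2 := X.charpoly.card_roots'
      rw [X.charpoly_natDegree_eq_dim, Fintype.card_fin] at h2
      omega
    have hnil : IsNilpotent (Polynomial.aeval X m) := by
      refine ⟨n, ?_⟩
      rw [← map_pow]
      obtain ⟨q, hq⟩ := hdvd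
      rw [hq, map_mul, Matrix.aeval_self_charpoly, zero_mul]
    have htr : ∀ j : ℕ, (X ^ j * Polynomial.aeval X m).trace = 0 := by
      intro j
      have hcm : Commute (X ^ j) (Polynomial.aeval X m) := by
        have : X ^ j = Polynomial.aeval X (Polynomial.X ^ j : Polynomial ℂ) := by simp
        rw [this]
        exact (Commute.all (Polynomial.X ^ j : Polynomial ℂ) m).map (Polynomial.aeval X)
      exact (Matrix.isNilpotent_trace_of_isNilpotent (hcm.isNilpotent_mul_left hnil)).eq_zero
    rw [hank]
    apply Matrix.exists_mulVec_eq_zero_iff.1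
    refine ⟨fun i => m.coeff i, ?_, ?_⟩
    · intro h0
      have := congrFun h0 ⟨s.card, hc⟩
      simp only [Pi.zero_apply] at this
      rw [← hmd, hm1.coeff_natDegree] at this
      exact one_ne_zero this
    · ext j
      have h1 := htr j
      rw [Polynomial.aeval_eq_sum_range' (hmd ▸ hc), Finset.mul_sum, Matrix.trace_sum,
        Finset.sum_range] at h1
      simp only [Pi.zero_apply, Matrix.mulVec, dotProduct, Matrix.of_apply]
      rw [← h1]
      refine Finset.sum_congr rfl fun i _ => ?_
      rw [mul_smul_comm, ← pow_add, Matrix.trace_smul, smul_eq_mul, mul_comm]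

theorem lin_ext {n : ℕ} (f g : Mn n →ₗ[ℂ] Mn n)
    (h : ∀ i j, f (single i j 1) = g (single i j 1)) (X : Mn n) : f X = g X := by
  rw [Matrix.matrix_eq_sum_single X]
  simp only [map_sum]
  refine Finset.sum_congr rfl fun i _ => Finset.sum_congr rfl fun j _ => ?_
  have : (single i j (X i j) : Mn n) = X i j • single i j 1 := by simp
  rw [this, map_smul, map_smul, h]

theorem cocycle {n : ℕ} (o : Fin n) (w : Fin n → Fin n → ℂ)
    (h1 : ∀ i j, i ≠ j → w i j * w j i = 1)
    (h2 : ∀ i j k, i ≠ j → j ≠ k → i ≠ k → w i j * w j k = w i k) :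
    ∃ t : Fin n → ℂ, (∀ i, t i ≠ 0) ∧ ∀ i j, i ≠ j → w i j = t i * (t j)⁻¹ := by
  have ht0 : ∀ i, (if i = o then 1 else w i o) ≠ 0 := by
    intro i
    split_ifs with h
    · exact one_ne_zero
    · exact left_ne_zero_of_mul_eq_one (h1 i o h)
  refine ⟨fun i => if i = o then 1 else w i o, ht0, fun i j hij => ?_⟩
  rw [eq_mul_inv_iff_mul_eq₀ (ht0 j)]
  by_cases hj : j = o
  · subst hj; simp [hij]
  · by_cases hi : i = o
    · subst hi; simp [hj, h1 i j hij]
    · simp [hi, hj, h2 i j o hij hj hi]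

theorem peirce_form {n : ℕ} {A : Mn n} {i j : Fin n} (hij : i ≠ j)
    (h1 : A = single i i 1 * A + A * single i i 1)
    (h2 : A = A * single j j 1 + single j j 1 * A) :
    A = A i j • single i j 1 + A j i • single j i 1 := by
  have e : ∀ k a b : Fin n, (single k k 1 * A : Mn n) a b = if k = a then A a b else 0 := by
    intro k a b
    by_cases h : k = a
    · subst h; simp
    · simp [h, Matrix.single_mul_apply_of_ne, Ne.symm h]
  have f : ∀ k a b : Fin n, (A * single k k 1 : Mn n) a b = if k = b then A a b else 0 := by
    intro k a b
    by_cases h : k = b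
    · subst h; simp
    · simp [h, Matrix.mul_single_apply_of_ne, Ne.symm h]
  ext a b
  have h1' := congrFun (congrFun h1 a) b
  have h2' := congrFun (congrFun h2 a) b
  rw [Matrix.add_apply, e, f] at h1' h2'
  simp only [Matrix.add_apply, Matrix.smul_apply, Matrix.single_apply, smul_eq_mul]
  clear h1 h2 e f
  grind

theorem diag_single_diag {n : ℕ} (t s : Fin n → ℂ) (i j : Fin n) :
    (diagonal t * single i j 1 * diagonal s : Mn n) = single i j (t i * s j) := by
  ext a b
  rw [Matrix.mul_diagonal, Matrix.diagonal_mul, Matrix.single_apply, Matrix.single_apply]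
  grind

theorem jordan_std {n : ℕ} (o : Fin n) (Ψ : Mn n →ₗ[ℂ] Mn n) (hJ : ∀ X, Ψ (X * X) = Ψ X * Ψ X)
    (hE : ∀ k, Ψ (single k k 1) = single k k 1) :
    ∃ t : Fin n → ℂ, (∀ i, t i ≠ 0) ∧
      ((∀ X, Ψ X = diagonal t * X * diagonal (fun i => (t i)⁻¹)) ∨
       (∀ X, Ψ X = diagonal (fun i => (t i)⁻¹) * Xᵀ * diagonal t)) := by
  classical
  have hP : ∀ X Y, Ψ (X * Y + Y * X) = Ψ X * Ψ Y + Ψ Y * Ψ X := by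
    intro X Y
    have h1 := hJ (X + Y)
    have e1 : (X + Y) * (X + Y) = X * X + Y * Y + (X * Y + Y * X) := by noncomm_ring
    have e2 : (Ψ X + Ψ Y) * (Ψ X + Ψ Y) = Ψ X * Ψ X + Ψ Y * Ψ Y + (Ψ X * Ψ Y + Ψ Y * Ψ X) := by
      noncomm_ring
    rw [map_add Ψ X Y, e1, e2, map_add Ψ (X * X + Y * Y), map_add Ψ (X * X), hJ, hJ] at h1
    exact add_left_cancel h1
  let q : Fin n → Fin n → ℂ := fun i j => Ψ (single i j 1) i j
  let r : Fin n → Fin n → ℂ := fun i j => Ψ (single i j 1) j i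
  have hform : ∀ i j, i ≠ j → Ψ (single i j 1) = q i j • single i j 1 + r i j • single j i 1 := by
    intro i j hij
    have h1 := hP (single i i 1) (single i j 1)
    have h2 := hP (single i j 1) (single j j 1)
    rw [Matrix.single_mul_single_same, Matrix.single_mul_single_of_ne _ _ _ _ hij.symm, hE,
      mul_one, add_zero] at h1
    rw [Matrix.single_mul_single_same, Matrix.single_mul_single_of_ne _ _ _ _ hij.symm, hE,
      mul_one, add_zero] at h2
    exact peirce_form hij h1 h2
  have hqr : ∀ i j, i ≠ j → q i j * r i j = 0 := by
    intro i j hij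
    have h1 := hJ (single i j 1)
    rw [Matrix.single_mul_single_of_ne _ _ _ _ hij.symm, map_zero, hform i j hij] at h1
    have := congrFun (congrFun h1 i) i
    simpa [Matrix.add_mul, Matrix.mul_add, Matrix.single_apply, hij, hij.symm] using this
  have h1 : ∀ i j, i ≠ j → q i j * q j i + r i j * r j i = 1 := by
    intro i j hij
    have h1 := hP (single i j 1) (single j i 1)
    rw [Matrix.single_mul_single_same, Matrix.single_mul_single_same, mul_one, map_add, hE, hE,
      hform i j hij, hform j i hij.symm] at h1
    have := congrFun (congrFun h1 i) i
    simp [Matrix.add_mul, Matrix.mul_add, Matrix.single_apply, hij, hij.symm] at this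
    linear_combination -this
  have h2 : ∀ i j k, i ≠ j → j ≠ k → i ≠ k → q i j * q j k = q i k ∧ r i j * r j k = r i k := by
    intro i j k hij hjk hik
    have h1 := hP (single i j 1) (single j k 1)
    rw [Matrix.single_mul_single_same, Matrix.single_mul_single_of_ne _ _ _ _ hik.symm, mul_one,
      add_zero, hform i j hij, hform j k hjk, hform i k hik] at h1
    have e1 := congrFun (congrFun h1 i) k
    have e2 := congrFun (congrFun h1 k) i
    simp [Matrix.add_mul, Matrix.mul_add, Matrix.single_apply, hij, hij.symm, hjk, hjk.symm,
      hik, hik.symm] at e1 e2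
    exact ⟨by linear_combination -e1, by linear_combination -e2⟩
  by_cases hex : ∃ c d, c ≠ d ∧ q c d ≠ 0
  · obtain ⟨c, d, hcd, hq⟩ := hex
    have hdc : q d c ≠ 0 := by
      have e1 := h1 c d hcd
      have : r c d = 0 := (mul_eq_zero.1 (hqr c d hcd)).resolve_left hq
      rw [this, zero_mul, add_zero] at e1
      exact right_ne_zero_of_mul_eq_one e1
    have hA : ∀ a b, a ≠ b → q a b ≠ 0 → ∀ m, m ≠ a → m ≠ b → q a m ≠ 0 ∧ q m b ≠ 0 := by
      intro a b hab hq m ha hb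
      have := (h2 a m b ha.symm hb hab).1
      rw [← this] at hq
      exact ⟨left_ne_zero_of_mul hq, right_ne_zero_of_mul hq⟩
    have hcm : ∀ m, m ≠ c → q c m ≠ 0 := by
      intro m hm
      by_cases hmd : m = d
      · rwa [hmd]
      · exact (hA c d hcd hq m hm hmd).1
    have hmc : ∀ m, m ≠ c → q m c ≠ 0 := by
      intro m hm
      by_cases hmd : m = d
      · rwa [hmd]
      · exact (hA d c hcd.symm hdc m hmd hm).2
    have hall : ∀ a b, a ≠ b → q a b ≠ 0 := by
      intro a b hab
      by_cases ha : a = c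
      · subst ha; exact hcm b hab.symm
      · by_cases hb : b = c
        · subst hb; exact hmc a hab
        · exact (hA c b (Ne.symm hb) (hcm b hb) a ha hab).2
    have hr : ∀ a b, a ≠ b → r a b = 0 := fun a b hab =>
      (mul_eq_zero.1 (hqr a b hab)).resolve_left (hall a b hab)
    obtain ⟨t, ht, htq⟩ := cocycle o q (fun i j hij => by simpa [hr i j hij] using h1 i j hij)
      (fun i j k a b c => (h2 i j k a b c).1)
    refine ⟨t, ht, Or.inl ?_⟩
    refine lin_ext Ψ ((LinearMap.mulRight ℂ (diagonal (fun i => (t i)⁻¹) : Mn n)).comp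
      (LinearMap.mulLeft ℂ (diagonal t : Mn n))) fun i j => ?_
    simp only [LinearMap.comp_apply, LinearMap.mulLeft_apply, LinearMap.mulRight_apply]
    by_cases hij : i = j
    · subst hij
      rw [hE]
      rw [diag_single_diag, mul_inv_cancel₀ (ht i)]
    · rw [hform i j hij, hr i j hij, htq i j hij]
      rw [diag_single_diag, zero_smul, add_zero, Matrix.smul_single, smul_eq_mul, mul_one]
  · push Not at hex
    obtain ⟨t, ht, htr⟩ := cocycle o r (fun i j hij => by simpa [hex i j hij] using h1 i j hij)
      (fun i j k a b c => (h2 i j k a b c).2)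
    refine ⟨t, ht, Or.inr ?_⟩
    refine lin_ext Ψ ((LinearMap.mulRight ℂ (diagonal t : Mn n)).comp
      ((LinearMap.mulLeft ℂ (diagonal (fun i => (t i)⁻¹) : Mn n)).comp
        (Matrix.transposeLinearEquiv (Fin n) (Fin n) ℂ ℂ).toLinearMap)) fun i j => ?_
    change _ = diagonal (fun i => (t i)⁻¹) * (single i j 1)ᵀ * diagonal t
    rw [Matrix.transpose_single, diag_single_diag]
    by_cases hij : i = j
    · subst hij
      rw [hE, inv_mul_cancel₀ (ht i)]
    · rw [hform i j hij, hex i j hij, htr i j hij]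
      rw [zero_smul, zero_add, Matrix.smul_single, smul_eq_mul, mul_one, mul_comm]


theorem main_total {n : ℕ} (hn : 3 ≤ n) {φ : Mn n → Mn n} (h : HH φ) :
    ∃ T : Mn n, IsUnit T ∧
      ((∀ X, IsUnit X → φ X = T * X * T⁻¹) ∨ (∀ X, IsUnit X → φ X = T * Xᵀ * T⁻¹)) := by
  classical
  obtain ⟨Φ, hΦ⟩ := exists_lin hn h
  have hcΦ : Continuous Φ := LinearMap.continuous_of_finiteDimensional Φ
  have hu : ∀ X : Mn n, X.det * hank X ≠ 0 → IsUnit X := fun X hX =>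
    (Matrix.isUnit_iff_isUnit_det X).2 (isUnit_iff_ne_zero.2 (left_ne_zero_of_mul hX))
  have key : ∀ X : Mn n, X.det * hank X ≠ 0 → φ X = Φ X ∧ Φ (X * X) = Φ X * Φ X := by
    intro X hX
    obtain ⟨l, hl, hs⟩ := hank_spec X (right_ne_zero_of_mul hX)
    obtain ⟨S, hS, hXS⟩ := diagonalize X l hl hs
    have hl0 : ∀ i, l i ≠ 0 := by
      intro i h0
      have := hs i
      rw [h0] at this
      exact (spectrum.zero_notMem_iff ℂ).2 (hu X hX) this
    obtain ⟨T, hT, h1, h2⟩ := lin_frame h Φ hΦ S hS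
    have hSd := (Matrix.isUnit_iff_isUnit_det S).1 hS
    have hTd := (Matrix.isUnit_iff_isUnit_det T).1 hT
    have sq : ∀ U : Mn n, IsUnit U.det → (U * diagonal l * U⁻¹) * (U * diagonal l * U⁻¹)
        = U * diagonal (fun i => l i * l i) * U⁻¹ := by
      intro U hU
      rw [← Matrix.diagonal_mul_diagonal]
      calc _ = U * diagonal l * (U⁻¹ * U) * diagonal l * U⁻¹ := by noncomm_ring
        _ = _ := by rw [Matrix.nonsing_inv_mul U hU]; noncomm_ring
    refine ⟨?_, ?_⟩
    · rw [hXS, h1, h2 l hl0]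
    · rw [hXS, sq S hSd, h1, h1, sq T hTd]
  obtain ⟨X0, hX0⟩ := hank_std n
  have hd : ∀ X : Mn n, X ∈ closure {X : Mn n | X.det * hank X ≠ 0} := fun X =>
    hank_polyLine.dense hX0 X
  have hJ : ∀ X, Φ (X * X) = Φ X * Φ X := by
    intro X
    have hcl : IsClosed {X : Mn n | Φ (X * X) = Φ X * Φ X} :=
      isClosed_eq (hcΦ.comp (continuous_id.mul continuous_id)) (hcΦ.mul hcΦ)
    exact hcl.closure_subset_iff.2 (fun Y hY => (key Y hY).2) (hd X)
  have hφ : ∀ X, IsUnit X → φ X = Φ X := by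
    intro X hX
    have h1 : ContinuousWithinAt φ {X : Mn n | X.det * hank X ≠ 0} X :=
      (h.cont X hX).mono hu
    have := mem_closure_iff_nhdsWithin_neBot.1 (hd X)
    refine tendsto_nhds_unique h1.tendsto (hcΦ.continuousWithinAt.tendsto.congr' ?_)
    filter_upwards [self_mem_nhdsWithin] with Y hY
    exact (key Y hY).1.symm
  obtain ⟨T, hT, h1, -⟩ := lin_frame h Φ hΦ 1 isUnit_one
  have hTd := (Matrix.isUnit_iff_isUnit_det T).1 hT
  let Ψ : Mn n →ₗ[ℂ] Mn n := (LinearMap.mulRight ℂ T).comp ((LinearMap.mulLeft ℂ T⁻¹).comp Φ)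
  have hΨ : ∀ X, Ψ X = T⁻¹ * Φ X * T := fun X => rfl
  have hb : ∀ X, Φ X = T * Ψ X * T⁻¹ := fun X => inv_conj hT (hΨ X).symm
  obtain ⟨t, ht, hor⟩ := jordan_std ⟨0, by omega⟩ Ψ
    (by
      intro X
      rw [hΨ, hΨ, hJ]
      calc _ = T⁻¹ * Φ X * 1 * Φ X * T := by noncomm_ring
        _ = T⁻¹ * Φ X * (T * T⁻¹) * Φ X * T := by rw [Matrix.mul_nonsing_inv T hTd]
        _ = _ := by noncomm_ring)
    (by
      intro k
      have h2 := h1 (Pi.single k 1)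
      rw [inv_one, one_mul, mul_one, Matrix.diagonal_single] at h2
      rw [hΨ, h2]
      calc _ = (T⁻¹ * T) * single k k 1 * (T⁻¹ * T) := by noncomm_ring
        _ = _ := by rw [Matrix.nonsing_inv_mul T hTd, one_mul, mul_one])
  have fin : ∀ s r : Fin n → ℂ, (∀ i, s i * r i = 1) → IsUnit (T * diagonal s) ∧
      (T * diagonal s)⁻¹ = diagonal r * T⁻¹ := by
    intro s r hsr
    have e : (diagonal s * diagonal r : Mn n) = 1 := by
      rw [Matrix.diagonal_mul_diagonal, ← Matrix.diagonal_one]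
      congr 1; funext i; exact hsr i
    have e2 : (T * diagonal s) * (diagonal r * T⁻¹) = 1 := by
      calc _ = T * (diagonal s * diagonal r) * T⁻¹ := by noncomm_ring
        _ = 1 := by rw [e, mul_one, Matrix.mul_nonsing_inv T hTd]
    exact ⟨(Matrix.isUnit_iff_isUnit_det _).2 (Matrix.isUnit_det_of_right_inverse e2),
      Matrix.inv_eq_right_inv e2⟩
  rcases hor with hX | hX
  · obtain ⟨a, b⟩ := fin t (fun i => (t i)⁻¹) fun i => mul_inv_cancel₀ (ht i)
    refine ⟨_, a, Or.inl fun X hu => ?_⟩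
    rw [hφ X hu, hb, hX, b]
    noncomm_ring
  · obtain ⟨a, b⟩ := fin (fun i => (t i)⁻¹) t fun i => inv_mul_cancel₀ (ht i)
    refine ⟨_, a, Or.inr fun X hu => ?_⟩
    rw [hφ X hu, hb, hX, b]
    noncomm_ring

/-- For `n ≥ 3`, any continuous, commutativity-preserving and
spectrum-shrinking map `φ : GL(n) → M_n` is of the form `φ(X) = T X T⁻¹` or
`φ(X) = T Xᵗ T⁻¹` for some `T ∈ GL(n)`. -/
theorem preserver_GLn (n : ℕ) (hn : 3 ≤ n)
    (φ : {X : Matrix (Fin n) (Fin n) ℂ // IsUnit X} → Matrix (Fin n) (Fin n) ℂ)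
    (hcont : Continuous φ)
    (hcomm : ∀ X Y, X.val * Y.val = Y.val * X.val → φ X * φ Y = φ Y * φ X)
    (hshrink : ∀ X, spectrum ℂ (φ X) ⊆ spectrum ℂ X.val) :
    ∃ T : Matrix (Fin n) (Fin n) ℂ, IsUnit T ∧
      ((∀ X, φ X = T * X.val * T⁻¹) ∨ (∀ X, φ X = T * X.val.transpose * T⁻¹)) := by
  classical
  let ψ : Mn n → Mn n := fun X => if h : IsUnit X then φ ⟨X, h⟩ else 0
  have hψ : ∀ X (h : IsUnit X), ψ X = φ ⟨X, h⟩ := fun X h => dif_pos h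
  have H : HH ψ := by
    refine ⟨?_, ?_, ?_⟩
    · rw [continuousOn_iff_continuous_domRestrict]
      have : Set.domRestrict {X : Mn n | IsUnit X} ψ = φ := by
        funext X
        exact hψ X.1 X.2
      rw [this]
      exact hcont
    · intro X Y hX hY hXY
      rw [hψ X hX, hψ Y hY]
      exact hcomm ⟨X, hX⟩ ⟨Y, hY⟩ hXY
    · intro X hX
      rw [hψ X hX]
      exact hshrink ⟨X, hX⟩
  obtain ⟨T, hT, h⟩ := main_total hn H
  refine ⟨T, hT, h.imp (fun h X => ?_) (fun h X => ?_)⟩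
  · rw [← h X.1 X.2, hψ X.1 X.2]
  · rw [← h X.1 X.2, hψ X.1 X.2]
end

section
/- Let n ≥ 3 and let φ : SL(n) → M_n be a continuous, commutativity-preserving and spectrum-shrinking map. Then there exists T ∈ GL(n) such that either φ(X) = T X T⁻¹ for all X ∈ SL(n), or φ(X) = T Xᵗ T⁻¹ for all X ∈ SL(n) (where Xᵗ denotes the transpose). -/
open Matrix


theorem ftpg_norm {k : ℕ} (a b : (Fin (k+3) → ℂ) → (Fin (k+3) → ℂ))
    (hab : ∀ m, m ≠ 0 → ∀ h, h ≠ 0 → (h ⬝ᵥ m = 0 ↔ b h ⬝ᵥ a m = 0))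
    (na : ∀ m, m ≠ 0 → ∀ i, (m i = 0 ↔ a m i = 0))
    (nb : ∀ m, m ≠ 0 → ∀ i, (m i = 0 ↔ b m i = 0))
    (n1 : ∀ i, a (fun _ => 1) i = 1) :
    ∃ τ : ℂ →+* ℂ, (∀ m, m ≠ 0 → ∃ c : ℂ, c ≠ 0 ∧ a m = c • (τ ∘ m)) ∧
      (∀ m, m ≠ 0 → ∃ c : ℂ, c ≠ 0 ∧ b m = c • (τ ∘ m)) := by
  have one_ne : (fun _ => 1 : Fin (k+3) → ℂ) ≠ 0 := fun h => by
    have := congrFun h 0; simp at this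
  have K1 : ∀ i j : Fin (k+3), ∀ z : ℂ, ∃ s : ℂ, i ≠ j → ∀ x, x ≠ 0 → x j = z * x i →
      a x j = s * a x i := by
    intro i j z
    by_cases hij : i = j
    · exact ⟨0, fun h => absurd hij h⟩
    set h : Fin (k+3) → ℂ := fun l => if l = i then z else if l = j then -1 else 0 with hh
    have hj : h j = -1 := by simp [hh, Ne.symm hij]
    have hi : h i = z := by simp [hh]
    have h0 : h ≠ 0 := fun e => by rw [e] at hj; simp at hj
    have bj : b h j ≠ 0 := fun e => by
      have := (nb h h0 j).2 e; rw [hj] at this; simp at this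
    refine ⟨-(b h i) / b h j, fun _ x hx e => ?_⟩
    have s1 : h ⬝ᵥ x = 0 := by
      rw [dotProduct, Fintype.sum_eq_add i j hij]
      · rw [hi, hj, e]; ring
      · rintro l ⟨l1, l2⟩; simp [hh, l1, l2]
    have s2 := (hab x hx h h0).1 s1
    rw [dotProduct, Fintype.sum_eq_add i j hij] at s2
    · field_simp; linear_combination s2
    · rintro l ⟨l1, l2⟩
      have : b h l = 0 := (nb h h0 l).1 (by simp [hh, l1, l2])
      simp [this]
  choose σ hσ using K1
  have K0 : ∀ i j, ∀ x, x ≠ 0 → x i = x j → a x i = a x j := by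
    intro i j x hx e
    by_cases hij : i = j
    · rw [hij]
    have h1 := hσ i j 1 hij _ one_ne (by simp)
    rw [n1, n1] at h1
    have h2 := hσ i j 1 hij x hx (by rw [e]; ring)
    rw [h2]; linear_combination (a x i) * h1
  have row : ∀ i j l z, i ≠ j → i ≠ l → σ i j z = σ i l z := by
    intro i j l z hij hil
    set x : Fin (k+3) → ℂ := fun t => if t = i then 1 else z with hx
    have hi : x i = 1 := by simp [hx]
    have hj : x j = z := by simp [hx, Ne.symm hij]
    have hl : x l = z := by simp [hx, Ne.symm hil]
    have x0 : x ≠ 0 := fun e => by rw [e] at hi; simp at hi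
    have ai : a x i ≠ 0 := fun e => by
      have := (na x x0 i).2 e; rw [hi] at this; simp at this
    have e1 := hσ i j z hij x x0 (by rw [hi, hj]; ring)
    have e2 := hσ i l z hil x x0 (by rw [hi, hl]; ring)
    have e3 := K0 j l x x0 (by rw [hj, hl])
    apply mul_right_cancel₀ ai
    rw [← e1, ← e2, e3]
  have col : ∀ i j l z, i ≠ j → l ≠ j → σ i j z = σ l j z := by
    intro i j l z hij hlj
    set x : Fin (k+3) → ℂ := fun t => if t = j then z else 1 with hx
    have hi : x i = 1 := by simp [hx, hij]
    have hj : x j = z := by simp [hx]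
    have hl : x l = 1 := by simp [hx, hlj]
    have x0 : x ≠ 0 := fun e => by rw [e] at hi; simp at hi
    have ai : a x i ≠ 0 := fun e => by
      have := (na x x0 i).2 e; rw [hi] at this; simp at this
    have e1 := hσ i j z hij x x0 (by rw [hi, hj]; ring)
    have e2 := hσ l j z hlj x x0 (by rw [hl, hj]; ring)
    have e3 := K0 i l x x0 (by rw [hi, hl])
    apply mul_right_cancel₀ ai
    rw [← e1, e3, ← e2]
  have d01 : (0 : Fin (k+3)) ≠ 1 := by simp
  have d02 : (0 : Fin (k+3)) ≠ 2 := by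
    rw [Ne, Fin.ext_iff, Fin.val_two]; simp
  have d12 : (1 : Fin (k+3)) ≠ 2 := by
    rw [Ne, Fin.ext_iff, Fin.val_two]; simp
  have all : ∀ i j z, i ≠ j → σ i j z = σ 0 1 z := by
    intro i j z hij
    by_cases hj : j = 0
    · subst hj
      rw [col i 0 1 z hij d01.symm, row 1 0 2 z d01.symm d12, col 1 2 0 z d12 d02,
        row 0 2 1 z d02 d01]
    · rw [col i j 0 z hij (Ne.symm hj), row 0 j 1 z (Ne.symm hj) d01]
  set τ := σ 0 1 with hτ
  have key : ∀ i j z x, i ≠ j → x ≠ 0 → x j = z * x i → a x j = τ z * a x i := by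
    intro i j z x hij hx e
    rw [← all i j z hij]; exact hσ i j z hij x hx e
  have τ1 : τ 1 = 1 := by
    have := key 0 1 1 _ d01 one_ne (by simp)
    rw [n1, n1] at this; simpa using this.symm
  -- test vectors
  let v : ℂ → ℂ → ℂ → Fin (k+3) → ℂ := fun p q r l =>
    if l.val = 0 then p else if l.val = 1 then q else if l.val = 2 then r else 0
  have v0 : ∀ p q r, v p q r 0 = p := by intros; simp [v]
  have v1 : ∀ p q r, v p q r 1 = q := by intros; simp [v]
  have v2 : ∀ p q r, v p q r 2 = r := by intros; simp only [v, Fin.val_two]; simp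
  have vs : ∀ p q r (i : Fin k), v p q r i.succ.succ.succ = 0 := by
    intro p q r i
    simp [v]
  have vne : ∀ q r, v 1 q r ≠ 0 := fun q r e => by
    have := v0 1 q r; rw [e] at this; simp at this
  have a0 : ∀ q r, a (v 1 q r) 0 ≠ 0 := fun q r e => by
    have := (na _ (vne q r) 0).2 e; rw [v0] at this; simp at this
  have τ0 : τ 0 = 0 := by
    have h1 := key 0 1 0 _ d01 (vne 0 0) (by rw [v0, v1]; ring)
    rw [(na _ (vne 0 0) 1).1 (v1 _ _ _)] at h1
    rcases mul_eq_zero.1 h1.symm with h | h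
    · exact h
    · exact absurd h (a0 0 0)
  have τm : ∀ z w, τ (z * w) = τ z * τ w := by
    intro z w
    have h1 := key 0 1 z _ d01 (vne z (z*w)) (by rw [v0, v1]; ring)
    have h2 := key 0 2 (z*w) _ d02 (vne z (z*w)) (by rw [v0, v2]; ring)
    have h3 := key 1 2 w _ d12 (vne z (z*w)) (by rw [v1, v2]; ring)
    apply mul_right_cancel₀ (a0 z (z*w))
    rw [← h2, h3, h1]; ring
  have τne : ∀ s, s ≠ 0 → τ s ≠ 0 := by
    intro s hs e
    have := τm s s⁻¹
    rw [mul_inv_cancel₀ hs, τ1, e] at this; simp at this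
  have dotv : ∀ f g : Fin (k+3) → ℂ, (∀ i : Fin k, f i.succ.succ.succ = 0) →
      f ⬝ᵥ g = f 0 * g 0 + f 1 * g 1 + f 2 * g 2 := by
    intro f g hf
    rw [dotProduct, Fin.sum_univ_succ, Fin.sum_univ_succ, Fin.sum_univ_succ]
    simp only [hf]
    simp [Fin.succ_one_eq_two]; ring
  have τs : ∀ s z, s ≠ 0 → τ s = τ z + τ (s - z) := by
    intro s z hs
    set h := v s (-1) (-1) with hh
    have h0 : h ≠ 0 := fun e => by
      have := v1 s (-1) (-1); rw [← hh, e] at this; simp at this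
    have bs : ∀ i : Fin k, b h i.succ.succ.succ = 0 := fun i => (nb h h0 _).1 (vs _ _ _ i)
    have b1 : b h 1 ≠ 0 := fun e => by
      have := (nb h h0 1).2 e; rw [hh, v1] at this; simp at this
    have main : ∀ y, b h 0 + τ y * b h 1 + τ (s - y) * b h 2 = 0 := by
      intro y
      have e := (hab (v 1 y (s-y)) (vne _ _) h h0).1 (by
        rw [dotv _ _ (vs _ _ _)]; simp only [v0, v1, v2]; ring)
      rw [dotv _ _ bs] at e
      have h1 := key 0 1 y _ d01 (vne y (s-y)) (by rw [v0, v1]; ring)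
      have h2 := key 0 2 (s-y) _ d02 (vne y (s-y)) (by rw [v0, v2]; ring)
      rw [h1, h2] at e
      apply mul_right_cancel₀ (a0 y (s-y))
      linear_combination e
    have m1 := main s
    have m2 := main 0
    have m3 := main z
    simp only [sub_self, sub_zero, τ0] at m1 m2
    have hb12 : b h 1 = b h 2 := by
      apply mul_left_cancel₀ (τne s hs); linear_combination m1 - m2
    apply mul_right_cancel₀ b1
    linear_combination m1 - m3 + τ (s - z) * hb12 - τ (s-z) * hb12 - τ (s-z) * hb12
  have τ2 : τ 2 = 2 := by
    have := τs 2 1 two_ne_zero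
    norm_num at this; rw [τ1] at this; rw [this]; norm_num
  have τn : τ (-1) = -1 := by
    have := τs 1 2 one_ne_zero
    norm_num at this; rw [τ1, τ2] at this; linear_combination -this
  have τa : ∀ z w, τ (z + w) = τ z + τ w := by
    intro z w
    by_cases h : z + w = 0
    · rw [h, τ0]
      have : w = -1 * z := by linear_combination h
      rw [this, τm, τn]; ring
    · have := τs (z+w) z h
      rw [this]; congr 2; ring
  let T : ℂ →+* ℂ := { toFun := τ, map_one' := τ1, map_mul' := τm, map_zero' := τ0, map_add' := τa }
  have Ta : ∀ z, T z = τ z := fun _ => rfl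
  have A : ∀ m, m ≠ 0 → ∃ c : ℂ, c ≠ 0 ∧ a m = c • (T ∘ m) := by
    intro m hm
    obtain ⟨i, hi⟩ := Function.ne_iff.1 hm
    simp only [Pi.zero_apply] at hi
    have ai : a m i ≠ 0 := fun e => hi ((na m hm i).2 e)
    have ti : T (m i) ≠ 0 := by simpa using hi
    refine ⟨a m i / T (m i), div_ne_zero ai ti, ?_⟩
    ext j
    simp only [Pi.smul_apply, Function.comp, smul_eq_mul]
    by_cases hij : i = j
    · subst hij; field_simp
    · have := key i j (m j / m i) m hij hm (by field_simp)
      rw [this, ← Ta, map_div₀]; ring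
  refine ⟨T, A, ?_⟩
  intro h hh
  obtain ⟨i, hi⟩ := Function.ne_iff.1 hh
  simp only [Pi.zero_apply] at hi
  have bi : b h i ≠ 0 := fun e => hi ((nb h hh i).2 e)
  have ti : T (h i) ≠ 0 := by simpa using hi
  refine ⟨b h i / T (h i), div_ne_zero bi ti, ?_⟩
  ext j
  simp only [Pi.smul_apply, Function.comp, smul_eq_mul]
  by_cases hij : i = j
  · subst hij; field_simp
  · set x : Fin (k+3) → ℂ := fun l => if l = i then - h j else if l = j then h i else 0 with hx
    have xi : x i = - h j := by simp [hx]
    have xj : x j = h i := by simp [hx, Ne.symm hij]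
    have x0 : x ≠ 0 := fun e => by rw [e] at xj; exact hi xj.symm
    obtain ⟨c, hc, e⟩ := A x x0
    have s1 : h ⬝ᵥ x = 0 := by
      rw [dotProduct, Fintype.sum_eq_add i j hij]
      · rw [xi, xj]; ring
      · rintro l ⟨l1, l2⟩; simp [hx, l1, l2]
    have s2 := (hab x x0 h hh).1 s1
    rw [dotProduct, Fintype.sum_eq_add i j hij] at s2
    · rw [e] at s2
      simp only [Pi.smul_apply, Function.comp, smul_eq_mul, xi, xj, map_neg] at s2
      have : c * (b h j * T (h i)) = c * (b h i * T (h j)) := by linear_combination s2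
      have := mul_left_cancel₀ hc this
      field_simp; exact this
    · rintro l ⟨l1, l2⟩
      have : a x l = 0 := (na x x0 l).1 (by simp [hx, l1, l2])
      simp [this]

theorem ftpg {k : ℕ} (a b : (Fin (k+3) → ℂ) → (Fin (k+3) → ℂ))
    (hab : ∀ m, m ≠ 0 → ∀ h, h ≠ 0 → (h ⬝ᵥ m = 0 ↔ b h ⬝ᵥ a m = 0)) :
    ∃ (T : Matrix (Fin (k+3)) (Fin (k+3)) ℂ) (τ : ℂ →+* ℂ), IsUnit T ∧
      (∀ m, m ≠ 0 → ∃ c : ℂ, c ≠ 0 ∧ a m = c • (T *ᵥ (τ ∘ m))) ∧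
      (∀ m, m ≠ 0 → ∃ c : ℂ, c ≠ 0 ∧ b m ᵥ* T = c • (τ ∘ m)) := by
  let e : Fin (k+3) → Fin (k+3) → ℂ := fun i => Pi.single i 1
  have e0 : ∀ i, e i ≠ 0 := fun i h => by
    have := congrFun h i; simp [e] at this
  have one_ne : (fun _ => 1 : Fin (k+3) → ℂ) ≠ 0 := fun h => by
    have := congrFun h 0; simp at this
  have ee : ∀ i x, e i ⬝ᵥ x = x i := by intro i x; simp [e]
  have ee' : ∀ i x, x ⬝ᵥ e i = x i := by intro i x; simp [e]
  let B : Matrix (Fin (k+3)) (Fin (k+3)) ℂ := Matrix.of fun i j => b (e i) j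
  let T1 : Matrix (Fin (k+3)) (Fin (k+3)) ℂ := Matrix.of fun i j => a (e j) i
  let d : Fin (k+3) → ℂ := fun i => b (e i) ⬝ᵥ a (e i)
  have hd : ∀ i, d i ≠ 0 := fun i h => by
    have := (hab _ (e0 i) _ (e0 i)).2 h
    rw [ee] at this; simp [e] at this
  have BT : B * T1 = diagonal d := by
    ext i j
    rw [Matrix.mul_apply]
    have : ∑ l, B i l * T1 l j = b (e i) ⬝ᵥ a (e j) := rfl
    rw [this]
    by_cases h : i = j
    · subst h; simp [d]
    · rw [diagonal_apply_ne _ h, ← hab _ (e0 j) _ (e0 i), ee]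
      simp [e, h]
  have uT1 : IsUnit T1 := by
    rw [Matrix.isUnit_iff_isUnit_det, isUnit_iff_ne_zero]
    intro h
    have := congrArg det BT
    rw [det_mul, h, det_diagonal, mul_zero] at this
    exact Finset.prod_ne_zero_iff.2 (fun i _ => hd i) this.symm
  have detT1 := (Matrix.isUnit_iff_isUnit_det _).1 uT1
  let w : Fin (k+3) → ℂ := T1⁻¹ *ᵥ a (fun _ => 1)
  have be1 : ∀ i, b (e i) ᵥ* T1 = d i • e i := by
    intro i
    have : b (e i) ᵥ* T1 = (B * T1) i := rfl
    rw [this, BT]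
    ext j; simp [e, diagonal_apply, Pi.single_apply, eq_comm]
  have hw : ∀ i, w i ≠ 0 := by
    intro i h
    have h1 : (b (e i) ᵥ* T1) ⬝ᵥ w = 0 := by rw [be1, smul_dotProduct, ee, h]; simp
    rw [← dotProduct_mulVec] at h1
    simp only [w] at h1
    rw [mulVec_mulVec, mul_nonsing_inv _ detT1, one_mulVec, ← hab _ one_ne _ (e0 i), ee] at h1
    simp at h1
  let T := T1 * diagonal w
  have uT : IsUnit T := by
    refine uT1.mul ?_
    rw [Matrix.isUnit_iff_isUnit_det, isUnit_iff_ne_zero, det_diagonal]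
    exact Finset.prod_ne_zero_iff.2 (fun i _ => hw i)
  have detT := (Matrix.isUnit_iff_isUnit_det _).1 uT
  let a' : (Fin (k+3) → ℂ) → (Fin (k+3) → ℂ) := fun m => T⁻¹ *ᵥ a m
  let b' : (Fin (k+3) → ℂ) → (Fin (k+3) → ℂ) := fun m => b m ᵥ* T
  have hTa : ∀ m, T *ᵥ a' m = a m := by
    intro m; simp only [a']; rw [mulVec_mulVec, mul_nonsing_inv _ detT, one_mulVec]
  have hdot : ∀ m h, b' h ⬝ᵥ a' m = b h ⬝ᵥ a m := by
    intro m h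
    simp only [b']; rw [← dotProduct_mulVec, hTa]
  have hab' : ∀ m, m ≠ 0 → ∀ h, h ≠ 0 → (h ⬝ᵥ m = 0 ↔ b' h ⬝ᵥ a' m = 0) := by
    intro m hm h hh; rw [hdot]; exact hab m hm h hh
  have be' : ∀ i, b' (e i) = (d i * w i) • e i := by
    intro i
    simp only [b', T]
    rw [← vecMul_vecMul, be1]
    ext j
    simp only [vecMul_diagonal, e, Pi.smul_apply, Pi.single_apply, smul_eq_mul]
    by_cases h : j = i
    · subst h; simp
    · simp [h]
  have ae' : ∀ i, ∃ c : ℂ, c ≠ 0 ∧ a' (e i) = c • e i := by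
    intro i
    refine ⟨(w i)⁻¹, inv_ne_zero (hw i), ?_⟩
    have : T *ᵥ ((w i)⁻¹ • e i) = a (e i) := by
      ext j
      simp only [T, e, mulVec_smul, mulVec_single_one, Pi.smul_apply, col_apply, mul_diagonal,
        smul_eq_mul]
      have := hw i
      simp only [T1, e, of_apply]
      field_simp
    simp only [a']
    rw [← this, mulVec_mulVec, nonsing_inv_mul _ detT, one_mulVec]
  have p1 : ∀ m, m ≠ 0 → ∀ i, (m i = 0 ↔ a' m i = 0) := by
    intro m hm i
    rw [← ee i m, hab' m hm _ (e0 i), be', smul_dotProduct, ee]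
    simp [hd i, hw i]
  have p2 : ∀ m, m ≠ 0 → ∀ i, (m i = 0 ↔ b' m i = 0) := by
    intro m hm i
    obtain ⟨c, hc, h⟩ := ae' i
    rw [← ee' i m, hab' _ (e0 i) m hm, h, dotProduct_smul, ee']
    simp [hc]
  have p3 : ∀ i, a' (fun _ => 1) i = 1 := by
    have : T *ᵥ (fun _ => 1) = a (fun _ => 1) := by
      simp only [T]
      rw [← mulVec_mulVec]
      have : diagonal w *ᵥ (fun _ => 1) = w := by ext i; simp [mulVec_diagonal]
      rw [this]
      simp only [w]
      rw [mulVec_mulVec, mul_nonsing_inv _ detT1, one_mulVec]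
    intro i
    simp only [a']
    rw [← this, mulVec_mulVec, nonsing_inv_mul _ detT, one_mulVec]
  obtain ⟨τ, h1, h2⟩ := ftpg_norm a' b' hab' p1 p2 p3
  · refine ⟨T, τ, uT, ?_, h2⟩
    intro m hm
    obtain ⟨c, hc, h⟩ := h1 m hm
    refine ⟨c, hc, ?_⟩
    rw [← mulVec_smul, ← h, hTa]


def Biorth {n : ℕ} {ι : Type} [DecidableEq ι] (x f : ι → Fin n → ℂ) : Prop :=
  ∀ i j, f i ⬝ᵥ x j = if i = j then 1 else 0

def Fr {n : ℕ} (ψ : Matrix (Fin n) (Fin n) ℂ → Matrix (Fin n) (Fin n) ℂ) : Prop :=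
  ∀ x f : Fin n → Fin n → ℂ, Biorth x f → ∃ y g : Fin n → Fin n → ℂ, Biorth y g ∧
    ∀ i, ψ (vecMulVec (x i) (f i)) = vecMulVec (y i) (g i)

/-- a biorthogonal system of full size resolves the identity -/
theorem Biorth.sum_eq_one {n : ℕ} {x f : Fin n → Fin n → ℂ} (h : Biorth x f) :
    ∑ i, vecMulVec (x i) (f i) = 1 := by
  have h1 : (Matrix.of f) * (Matrix.of x)ᵀ = 1 := by
    ext i j
    rw [Matrix.mul_apply, Matrix.one_apply]
    exact h i j
  rw [mul_eq_one_comm] at h1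
  rw [← h1]
  ext i j
  rw [Matrix.sum_apply, Matrix.mul_apply]
  rfl

/-- extension of biorthogonal systems -/
theorem Biorth.extend {n k : ℕ} {x f : Fin k → Fin n → ℂ} (h : Biorth x f) :
    ∃ (r : ℕ) (w u : Fin r → Fin n → ℂ), k + r = n ∧ Biorth (Sum.elim x w) (Sum.elim f u) := by
  let F : (Fin n → ℂ) →ₗ[ℂ] (Fin k → ℂ) := (Matrix.of f).mulVecLin
  have hF : ∀ v i, F v i = f i ⬝ᵥ v := fun v i => rfl
  have surj : Function.Surjective F := by
    intro c
    refine ⟨∑ j, c j • x j, ?_⟩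
    ext i
    rw [hF, dotProduct_sum]
    simp [dotProduct_smul, h i _]
  let W := LinearMap.ker F
  let bw := Module.finBasis ℂ W
  have hr : k + Module.finrank ℂ W = n := by
    have := F.finrank_range_add_finrank_ker
    rw [LinearMap.range_eq_top.2 surj, finrank_top] at this
    simpa using this
  let w : Fin (Module.finrank ℂ W) → Fin n → ℂ := fun j => (bw j : Fin n → ℂ)
  have hfw : ∀ i j, f i ⬝ᵥ w j = 0 := by
    intro i j
    have : F (bw j) = 0 := (bw j).2
    rw [← hF]; exact congrFun this i
  have li : LinearIndependent ℂ (Sum.elim x w) := by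
    rw [Fintype.linearIndependent_iff]
    intro c hc
    rw [Fintype.sum_sum_type] at hc
    simp only [Sum.elim_inl, Sum.elim_inr] at hc
    have c1 : ∀ i, c (Sum.inl i) = 0 := by
      intro i
      have := congrArg (fun v => f i ⬝ᵥ v) hc
      simp only [dotProduct_add, dotProduct_sum, dotProduct_smul, hfw, h i _, dotProduct_zero] at this
      simpa using this
    simp only [c1, zero_smul, Finset.sum_const_zero, zero_add] at hc
    have c2 : ∑ j, c (Sum.inr j) • bw j = 0 := by
      apply Subtype.ext
      simpa using hc
    have c3 := Fintype.linearIndependent_iff.1 bw.linearIndependent (fun j => c (Sum.inr j)) c2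
    rintro (i | j)
    · exact c1 i
    · exact c3 j
  let B := basisOfLinearIndependentOfCardEqFinrank' (K := ℂ) (Sum.elim x w) li (by simp [hr])
  have hB : ∀ i, B i = Sum.elim x w i := fun i => by simp [B]
  let u : Fin (Module.finrank ℂ W) → Fin n → ℂ := fun j a => B.coord (Sum.inr j) (Pi.single a 1)
  have hu : ∀ j v, u j ⬝ᵥ v = B.coord (Sum.inr j) v := by
    intro j v
    conv_rhs => rw [← Finset.univ_sum_single v]
    rw [map_sum, dotProduct]
    refine Finset.sum_congr rfl fun a _ => ?_
    have : (Pi.single a (v a) : Fin n → ℂ) = v a • Pi.single a 1 := by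
      ext b; simp [Pi.single_apply]
    rw [this, map_smul, smul_eq_mul, mul_comm]
  refine ⟨_, w, u, hr, ?_⟩
  rintro (i | i) (j | j)
  · simp [h i j]
  · simp [hfw i j]
  · have := hu i (Sum.elim x w (Sum.inl j))
    rw [← hB] at this
    simp only [Sum.elim_inr, Sum.elim_inl]
    rw [hB] at this
    simp only [Sum.elim_inl] at this
    rw [this]
    have h2 := hB (Sum.inl j)
    simp only [Sum.elim_inl] at h2
    rw [← h2]; simp
  · simp only [Sum.elim_inr]
    rw [hu]
    have h2 := hB (Sum.inr j)
    simp only [Sum.elim_inr] at h2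
    rw [← h2]; simp [Finsupp.single_apply, eq_comm]

theorem Biorth.reindex {n : ℕ} {ι κ : Type} [DecidableEq ι] [DecidableEq κ] {x f : ι → Fin n → ℂ}
    (h : Biorth x f) (e : κ ≃ ι) : Biorth (x ∘ e) (f ∘ e) := by
  intro i j; simp [h (e i) (e j)]

theorem Fr.sum {n k : ℕ} {ψ : Matrix (Fin n) (Fin n) ℂ → Matrix (Fin n) (Fin n) ℂ} (hψ : Fr ψ)
    {x f x' f' : Fin k → Fin n → ℂ} (h : Biorth x f) (h' : Biorth x' f')
    (hs : ∑ i, vecMulVec (x i) (f i) = ∑ i, vecMulVec (x' i) (f' i)) :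
    ∑ i, ψ (vecMulVec (x i) (f i)) = ∑ i, ψ (vecMulVec (x' i) (f' i)) := by
  obtain ⟨r, w, u, hn, hb⟩ := h.extend
  have fw : ∀ i j, f i ⬝ᵥ w j = 0 := fun i j => by simpa using hb (Sum.inl i) (Sum.inr j)
  have ux : ∀ i j, u i ⬝ᵥ x j = 0 := fun i j => by simpa using hb (Sum.inr i) (Sum.inl j)
  have uw : ∀ i j, u i ⬝ᵥ w j = if i = j then 1 else 0 := fun i j => by
    simpa using hb (Sum.inr i) (Sum.inr j)
  have fw' : ∀ i j, f' i ⬝ᵥ w j = 0 := by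
    intro i j
    have e := congrArg (fun M => f' i ⬝ᵥ (M *ᵥ w j)) hs
    simp only [Matrix.sum_mulVec, vecMulVec_mulVec, fw, dotProduct_sum, dotProduct_smul] at e
    simp [h' i _] at e
    exact e.symm
  have ux' : ∀ i j, u i ⬝ᵥ x' j = 0 := by
    intro i j
    have e := congrArg (fun M => u i ⬝ᵥ (M *ᵥ x' j)) hs
    simp only [Matrix.sum_mulVec, vecMulVec_mulVec, dotProduct_sum, dotProduct_smul, ux] at e
    simp [h' _ j] at e
    exact e.symm
  have hb' : Biorth (Sum.elim x' w) (Sum.elim f' u) := by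
    rintro (i | i) (j | j)
    · simp [h' i j]
    · simp [fw' i j]
    · simp [ux' i j]
    · simp [uw i j]
  let e : Fin n ≃ Fin k ⊕ Fin r := (finCongr hn.symm).trans finSumFinEquiv.symm
  have tot : ∀ (x f : Fin k → Fin n → ℂ), Biorth (Sum.elim x w) (Sum.elim f u) →
      ∑ i, ψ (vecMulVec (x i) (f i)) + ∑ j, ψ (vecMulVec (w j) (u j)) = 1 := by
    intro x f hb
    obtain ⟨y, g, hyg, hh⟩ := hψ _ _ (hb.reindex e)
    rw [← hyg.sum_eq_one]
    simp only [← hh]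
    rw [← Equiv.sum_comp e.symm, Fintype.sum_sum_type]
    simp
  have t1 := tot x f hb
  have t2 := tot x' f' hb'
  exact add_right_cancel (t1.trans t2.symm)

theorem Fr.image {n k : ℕ} {ψ : Matrix (Fin n) (Fin n) ℂ → Matrix (Fin n) (Fin n) ℂ} (hψ : Fr ψ)
    {x f : Fin k → Fin n → ℂ} (h : Biorth x f) :
    ∃ y g : Fin k → Fin n → ℂ, Biorth y g ∧
      ∀ i, ψ (vecMulVec (x i) (f i)) = vecMulVec (y i) (g i) := by
  obtain ⟨r, w, u, hn, hb⟩ := h.extend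
  let e : Fin n ≃ Fin k ⊕ Fin r := (finCongr hn.symm).trans finSumFinEquiv.symm
  obtain ⟨y, g, hyg, hh⟩ := hψ _ _ (hb.reindex e)
  refine ⟨fun i => y (e.symm (Sum.inl i)), fun i => g (e.symm (Sum.inl i)), ?_, ?_⟩
  · intro i j
    rw [hyg]; simp
  · intro i
    rw [← hh]; simp

theorem exists_dual {n k : ℕ} {f : Fin k → Fin n → ℂ} (hf : LinearIndependent ℂ f) :
    ∃ x : Fin k → Fin n → ℂ, Biorth x f := by
  let L := Fintype.linearCombination ℂ f
  have hL : LinearMap.ker L = ⊥ := by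
    rw [LinearMap.ker_eq_bot]
    exact linearIndependent_iff_injective_fintypeLinearCombination.1 hf
  obtain ⟨G, hG⟩ := LinearMap.exists_leftInverse_of_injective L hL
  refine ⟨fun j a => G (Pi.single a 1) j, ?_⟩
  intro i j
  have h1 : G (f i) = Pi.single i 1 := by
    have : f i = L (Pi.single i 1) := by simp [L, Fintype.linearCombination_apply]
    rw [this]; exact LinearMap.congr_fun hG _
  have h2 : f i ⬝ᵥ (fun a => G (Pi.single a 1) j) = G (f i) j := by
    conv_rhs => rw [← Finset.univ_sum_single (f i)]
    rw [map_sum, dotProduct, Finset.sum_apply]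
    refine Finset.sum_congr rfl fun a _ => ?_
    have : (Pi.single a (f i a) : Fin n → ℂ) = f i a • Pi.single a 1 := by
      ext b; simp [Pi.single_apply]
    rw [this, map_smul]; rfl
  rw [h2, h1]; simp [Pi.single_apply, eq_comm]

theorem exists_kill {n k : ℕ} (hk : k < n) (x : Fin k → Fin n → ℂ) :
    ∃ h : Fin n → ℂ, h ≠ 0 ∧ ∀ i, h ⬝ᵥ x i = 0 := by
  let F : (Fin n → ℂ) →ₗ[ℂ] (Fin k → ℂ) := (Matrix.of x).mulVecLin
  have := LinearMap.ker_ne_bot_of_finrank_lt (f := F) (by simpa using hk)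
  obtain ⟨h, hh, h0⟩ := Submodule.exists_mem_ne_zero_of_ne_bot this
  refine ⟨h, h0, fun i => ?_⟩
  rw [dotProduct_comm]; exact congrFun (LinearMap.mem_ker.1 hh) i

theorem exists_dot_one {n : ℕ} {m : Fin n → ℂ} (hm : m ≠ 0) : ∃ h : Fin n → ℂ, h ⬝ᵥ m = 1 := by
  obtain ⟨i, hi⟩ := Function.ne_iff.1 hm
  exact ⟨Pi.single i (m i)⁻¹, by simp; exact inv_mul_cancel₀ hi⟩

theorem biorth1 {n : ℕ} {x f : Fin n → ℂ} (h : f ⬝ᵥ x = 1) : Biorth ![x] ![f] := by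
  intro i j
  fin_cases i; fin_cases j; simp [h]

theorem biorth2 {n : ℕ} {x1 x2 f1 f2 : Fin n → ℂ} (h11 : f1 ⬝ᵥ x1 = 1) (h12 : f1 ⬝ᵥ x2 = 0)
    (h21 : f2 ⬝ᵥ x1 = 0) (h22 : f2 ⬝ᵥ x2 = 1) : Biorth ![x1, x2] ![f1, f2] := by
  intro i j
  fin_cases i <;> fin_cases j <;> simp [h11, h12, h21, h22]

theorem biorth3 {n : ℕ} {x1 x2 x3 f1 f2 f3 : Fin n → ℂ}
    (h11 : f1 ⬝ᵥ x1 = 1) (h12 : f1 ⬝ᵥ x2 = 0) (h13 : f1 ⬝ᵥ x3 = 0)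
    (h21 : f2 ⬝ᵥ x1 = 0) (h22 : f2 ⬝ᵥ x2 = 1) (h23 : f2 ⬝ᵥ x3 = 0)
    (h31 : f3 ⬝ᵥ x1 = 0) (h32 : f3 ⬝ᵥ x2 = 0) (h33 : f3 ⬝ᵥ x3 = 1) :
    Biorth ![x1, x2, x3] ![f1, f2, f3] := by
  intro i j
  fin_cases i <;> fin_cases j <;> simp [h11, h12, h13, h21, h22, h23, h31, h32, h33]

/-- rank one idempotent -/
def R1 {n : ℕ} (A : Matrix (Fin n) (Fin n) ℂ) : Prop :=
  ∃ y g : Fin n → ℂ, g ⬝ᵥ y = 1 ∧ A = vecMulVec y g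

def im {n : ℕ} (A : Matrix (Fin n) (Fin n) ℂ) : Set (Fin n → ℂ) := {v | A *ᵥ v = v}
def co {n : ℕ} (A : Matrix (Fin n) (Fin n) ℂ) : Set (Fin n → ℂ) := {v | v ᵥ* A = v}

theorem vv_mul {n : ℕ} (a f b g : Fin n → ℂ) :
    vecMulVec a f * vecMulVec b g = (f ⬝ᵥ b) • vecMulVec a g := by
  rw [vecMulVec_mul_vecMulVec]
  ext i j; simp [vecMulVec_apply]; ring

theorem mem_im {n : ℕ} {a f : Fin n → ℂ} (h : f ⬝ᵥ a = 1) {v : Fin n → ℂ} :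
    v ∈ im (vecMulVec a f) ↔ ∃ c : ℂ, v = c • a := by
  simp only [im, Set.mem_ofPred_eq, vecMulVec_mulVec]
  constructor
  · intro e; exact ⟨f ⬝ᵥ v, by rw [← e]; simp [h]⟩
  · rintro ⟨c, rfl⟩; simp [h]

theorem mem_co {n : ℕ} {a f : Fin n → ℂ} (h : f ⬝ᵥ a = 1) {v : Fin n → ℂ} :
    v ∈ co (vecMulVec a f) ↔ ∃ c : ℂ, v = c • f := by
  simp only [co, Set.mem_ofPred_eq, vecMul_vecMulVec]
  constructor
  · intro e; exact ⟨v ⬝ᵥ a, by rw [← e]; simp [h]⟩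
  · rintro ⟨c, rfl⟩; simp [h]

theorem im_eq_of {n : ℕ} {a f b g : Fin n → ℂ} (h : f ⬝ᵥ a = 1) (h' : g ⬝ᵥ b = 1) {s : ℂ}
    (e : b = s • a) : im (vecMulVec a f) = im (vecMulVec b g) := by
  have hs : s ≠ 0 := by rintro rfl; rw [e] at h'; simp at h'
  ext v
  rw [mem_im h, mem_im h', e]
  constructor
  · rintro ⟨c, rfl⟩; exact ⟨c / s, by rw [smul_smul, div_mul_cancel₀ _ hs]⟩
  · rintro ⟨c, rfl⟩; exact ⟨c * s, by rw [smul_smul]⟩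

theorem co_eq_of {n : ℕ} {a f b g : Fin n → ℂ} (h : f ⬝ᵥ a = 1) (h' : g ⬝ᵥ b = 1) {s : ℂ}
    (e : g = s • f) : co (vecMulVec a f) = co (vecMulVec b g) := by
  have hs : s ≠ 0 := by rintro rfl; rw [e] at h'; simp at h'
  ext v
  rw [mem_co h, mem_co h', e]
  constructor
  · rintro ⟨c, rfl⟩; exact ⟨c / s, by rw [smul_smul, div_mul_cancel₀ _ hs]⟩
  · rintro ⟨c, rfl⟩; exact ⟨c * s, by rw [smul_smul]⟩

theorem im_transpose {n : ℕ} (A : Matrix (Fin n) (Fin n) ℂ) : im Aᵀ = co A := by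
  ext v; simp [im, co, mulVec_transpose]

theorem co_transpose {n : ℕ} (A : Matrix (Fin n) (Fin n) ℂ) : co Aᵀ = im A := by
  ext v; simp [im, co, vecMul_transpose]

theorem R1.mul_im {n : ℕ} {A B : Matrix (Fin n) (Fin n) ℂ} (hB : R1 B)
    (h : im A = im B) : A * B = B := by
  obtain ⟨b, g, hb, rfl⟩ := hB
  have : b ∈ im A := by rw [h, mem_im hb]; exact ⟨1, by simp⟩
  rw [mul_vecMulVec, this]

theorem R1.mul_co {n : ℕ} {A B : Matrix (Fin n) (Fin n) ℂ} (hA : R1 A)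
    (h : co A = co B) : A * B = A := by
  obtain ⟨b, g, hb, rfl⟩ := hA
  have : g ∈ co B := by rw [← h, mem_co hb]; exact ⟨1, by simp⟩
  rw [vecMulVec_mul, this]

theorem R1.sq {n : ℕ} {A : Matrix (Fin n) (Fin n) ℂ} (hA : R1 A) : A * A = A :=
  hA.mul_im rfl

theorem R1.ne_zero {n : ℕ} {A : Matrix (Fin n) (Fin n) ℂ} (hA : R1 A) : A ≠ 0 := by
  obtain ⟨b, g, hb, rfl⟩ := hA
  intro h
  have : b ∈ im (vecMulVec b g) := by rw [mem_im hb]; exact ⟨1, by simp⟩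
  rw [h] at this
  simp [im] at this
  rw [this] at hb; simp at hb

theorem R1.eq_of {n : ℕ} {A B : Matrix (Fin n) (Fin n) ℂ} (hA : R1 A) (hB : R1 B)
    (h1 : A * B = A) (h2 : B * A = A) : A = B := by
  obtain ⟨a, f, ha, rfl⟩ := hA
  obtain ⟨b, g, hb, rfl⟩ := hB
  have h3 : vecMulVec a f = (g ⬝ᵥ a * f ⬝ᵥ b) • vecMulVec b g := by
    conv_lhs => rw [← h2, ← h1]
    rw [vv_mul, mul_smul_comm, vv_mul, smul_smul, mul_comm]
  have h4 := congrArg trace h3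
  rw [trace_smul, trace_vecMulVec, trace_vecMulVec, dotProduct_comm a f, dotProduct_comm b g,
    ha, hb] at h4
  rw [h3]
  simp only [smul_eq_mul, mul_one] at h4
  rw [← h4, one_smul]

section
variable {n : ℕ} {ψ : Matrix (Fin n) (Fin n) ℂ → Matrix (Fin n) (Fin n) ℂ}

theorem Fr.r1 (hψ : Fr ψ) {x f : Fin n → ℂ} (h : f ⬝ᵥ x = 1) : R1 (ψ (vecMulVec x f)) := by
  obtain ⟨y, g, hyg, e⟩ := hψ.image (biorth1 h)
  exact ⟨y 0, g 0, by simpa using hyg 0 0, e 0⟩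

theorem Fr.orth (hψ : Fr ψ) {x1 x2 f1 f2 : Fin n → ℂ} (h11 : f1 ⬝ᵥ x1 = 1) (h12 : f1 ⬝ᵥ x2 = 0)
    (h21 : f2 ⬝ᵥ x1 = 0) (h22 : f2 ⬝ᵥ x2 = 1) :
    ψ (vecMulVec x1 f1) * ψ (vecMulVec x2 f2) = 0 := by
  obtain ⟨y, g, hyg, e⟩ := hψ.image (biorth2 h11 h12 h21 h22)
  have e0 := e 0
  have e1 := e 1
  simp only [Matrix.cons_val_zero, Matrix.cons_val_one] at e0 e1
  have := hyg 0 1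
  rw [e0, e1, vv_mul, this]; simp

theorem Fr.inT (hψ : Fr ψ) : Fr (fun A => ψ Aᵀ) := by
  intro x f h
  have h' : Biorth f x := by
    intro i j; rw [dotProduct_comm, h j i]; simp [eq_comm]
  obtain ⟨y, g, hyg, e⟩ := hψ f x h'
  exact ⟨y, g, hyg, fun i => by simp only [transpose_vecMulVec, e]⟩

theorem Fr.outT (hψ : Fr ψ) : Fr (fun A => (ψ A)ᵀ) := by
  intro x f h
  obtain ⟨y, g, hyg, e⟩ := hψ x f h
  refine ⟨g, y, ?_, fun i => by simp only [transpose_vecMulVec, e]⟩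
  intro i j; rw [dotProduct_comm, hyg j i]; simp [eq_comm]

end


section
variable {n : ℕ} {ψ : Matrix (Fin n) (Fin n) ℂ → Matrix (Fin n) (Fin n) ℂ}

theorem Fr.sum2 (hψ : Fr ψ) {x1 x2 f1 f2 y1 y2 g1 g2 : Fin n → ℂ}
    (h : Biorth ![x1, x2] ![f1, f2]) (h' : Biorth ![y1, y2] ![g1, g2])
    (hs : vecMulVec x1 f1 + vecMulVec x2 f2 = vecMulVec y1 g1 + vecMulVec y2 g2) :
    ψ (vecMulVec x1 f1) + ψ (vecMulVec x2 f2) = ψ (vecMulVec y1 g1) + ψ (vecMulVec y2 g2) := by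
  have := hψ.sum h h' (by simpa [Fin.sum_univ_two] using hs)
  simpa [Fin.sum_univ_two] using this

theorem Fr.sum3 (hψ : Fr ψ) {x1 x2 x3 f1 f2 f3 y1 y2 y3 g1 g2 g3 : Fin n → ℂ}
    (h : Biorth ![x1, x2, x3] ![f1, f2, f3]) (h' : Biorth ![y1, y2, y3] ![g1, g2, g3])
    (hs : vecMulVec x1 f1 + vecMulVec x2 f2 + vecMulVec x3 f3
      = vecMulVec y1 g1 + vecMulVec y2 g2 + vecMulVec y3 g3) :
    ψ (vecMulVec x1 f1) + ψ (vecMulVec x2 f2) + ψ (vecMulVec x3 f3)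
      = ψ (vecMulVec y1 g1) + ψ (vecMulVec y2 g2) + ψ (vecMulVec y3 g3) := by
  have := hψ.sum h h' (by simpa [Fin.sum_univ_three] using hs)
  simpa [Fin.sum_univ_three] using this

theorem dual3 {m h k l : Fin n → ℂ} (hm : h ⬝ᵥ m = 1) (km : k ⬝ᵥ m = 0) (lm : l ⬝ᵥ m = 0)
    (li : LinearIndependent ℂ ![k, l]) : ∃ x y : Fin n → ℂ, h ⬝ᵥ x = 0 ∧ h ⬝ᵥ y = 0 ∧
      k ⬝ᵥ x = 1 ∧ k ⬝ᵥ y = 0 ∧ l ⬝ᵥ x = 0 ∧ l ⬝ᵥ y = 1 := by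
  obtain ⟨z, hz⟩ := exists_dual li
  have h00 := hz 0 0
  have h01 := hz 0 1
  have h10 := hz 1 0
  have h11 := hz 1 1
  simp at h00 h01 h10 h11
  refine ⟨z 0 - (h ⬝ᵥ z 0) • m, z 1 - (h ⬝ᵥ z 1) • m, ?_⟩
  simp [dotProduct_sub, h00, h01, h10, h11, hm, km, lm]

theorem L1 (hψ : Fr ψ) {m h k l : Fin n → ℂ} (hm : h ⬝ᵥ m = 1) (km : k ⬝ᵥ m = 0) (lm : l ⬝ᵥ m = 0)
    (li : LinearIndependent ℂ ![k, l]) (e : ψ (vecMulVec m h) = ψ (vecMulVec m (h + k))) :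
    ψ (vecMulVec m h) = ψ (vecMulVec m (h + l)) := by
  obtain ⟨x, y, hx, hy, kx, ky, lx, ly⟩ := dual3 hm km lm li
  have S := hψ.sum3 (biorth3 (x1 := m) (x2 := x) (x3 := y) (f1 := h) (f2 := k) (f3 := l)
    hm hx hy km kx ky lm lx ly)
    (biorth3 (x1 := m) (x2 := x) (x3 := x + y - m) (f1 := h + l) (f2 := k - l) (f3 := l)
      (by simp [add_dotProduct, *]) (by simp [add_dotProduct, *])
      (by simp [add_dotProduct, dotProduct_add, dotProduct_sub, *])
      (by simp [sub_dotProduct, *]) (by simp [sub_dotProduct, *])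
      (by simp [sub_dotProduct, dotProduct_add, dotProduct_sub, *])
      (by simp [*]) (by simp [*]) (by simp [dotProduct_add, dotProduct_sub, *]))
    (by ext i j; simp [vecMulVec_apply]; ring)
  have o1 := hψ.orth hm hx km kx
  have o1' := hψ.orth kx km hx hm
  have o2 := hψ.orth hm hy lm ly
  have o2' := hψ.orth ly lm hy hm
  have o3 : ψ (vecMulVec m h) * ψ (vecMulVec x (k - l)) = 0 :=
    hψ.orth hm hx (by simp [sub_dotProduct, *]) (by simp [sub_dotProduct, *])
  have o3' : ψ (vecMulVec x (k - l)) * ψ (vecMulVec m h) = 0 :=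
    hψ.orth (by simp [sub_dotProduct, *]) (by simp [sub_dotProduct, *]) hx hm
  have a1 : (h + k) ⬝ᵥ m = 1 := by simp [add_dotProduct, *]
  have a2 : (h + k) ⬝ᵥ (x + y - m) = 0 := by simp [add_dotProduct, dotProduct_add, dotProduct_sub, *]
  have a3 : l ⬝ᵥ (x + y - m) = 1 := by simp [dotProduct_add, dotProduct_sub, *]
  have o4 : ψ (vecMulVec m h) * ψ (vecMulVec (x + y - m) l) = 0 := by
    rw [e]; exact hψ.orth a1 a2 lm a3
  have o4' : ψ (vecMulVec (x + y - m) l) * ψ (vecMulVec m h) = 0 := by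
    rw [e]; exact hψ.orth a3 lm a2 a1
  have q := hψ.r1 hm
  refine q.eq_of (hψ.r1 (by simp [add_dotProduct, *])) ?_ ?_
  · have := congrArg (fun M => ψ (vecMulVec m h) * M) S
    simpa [mul_add, o1, o2, o3, o4, q.sq] using this.symm
  · have := congrArg (fun M => M * ψ (vecMulVec m h)) S
    simpa [add_mul, o1', o2', o3', o4', q.sq] using this.symm

def BI (ψ : Matrix (Fin n) (Fin n) ℂ → Matrix (Fin n) (Fin n) ℂ) (m : Fin n → ℂ) : Prop :=
  ∀ h h' : Fin n → ℂ, h ⬝ᵥ m = 1 → h' ⬝ᵥ m = 1 → ψ (vecMulVec m h) = ψ (vecMulVec m h')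

/-- a functional killing m, independent from k -/
theorem exists_indep (hn : 3 ≤ n) (m : Fin n → ℂ) {k : Fin n → ℂ} (hk : k ≠ 0) :
    ∃ l : Fin n → ℂ, l ≠ 0 ∧ l ⬝ᵥ m = 0 ∧ LinearIndependent ℂ ![k, l] := by
  obtain ⟨p, hp⟩ := exists_dot_one hk
  rw [dotProduct_comm] at hp
  obtain ⟨l, hl, h2⟩ := exists_kill (show 2 < n by omega) ![m, p]
  have h20 := h2 0
  have h21 := h2 1
  simp at h20 h21
  refine ⟨l, hl, h20, ?_⟩
  rw [LinearIndependent.pair_iff]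
  intro s t e
  have hs : s = 0 := by
    have := congrArg (fun v => v ⬝ᵥ p) e
    simpa [add_dotProduct, hp, h21] using this
  refine ⟨hs, ?_⟩
  rw [hs] at e
  simpa [hl] using e

theorem L1full (hn : 3 ≤ n) (hψ : Fr ψ) {m h k : Fin n → ℂ} (hm : h ⬝ᵥ m = 1) (km : k ⬝ᵥ m = 0)
    (k0 : k ≠ 0) (e : ψ (vecMulVec m h) = ψ (vecMulVec m (h + k))) : BI ψ m := by
  have key : ∀ h', h' ⬝ᵥ m = 1 → ψ (vecMulVec m h) = ψ (vecMulVec m h') := by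
    intro h' hm'
    obtain ⟨l0, hl0, l0m, li0⟩ := exists_indep hn m k0
    have e0 := L1 hψ hm km l0m li0 e
    have lm : (h' - h) ⬝ᵥ m = 0 := by simp [sub_dotProduct, *]
    have hh : h' = h + (h' - h) := by abel
    rw [hh]
    by_cases li : LinearIndependent ℂ ![k, h' - h]
    · exact L1 hψ hm km lm li e
    by_cases li' : LinearIndependent ℂ ![l0, h' - h]
    · exact L1 hψ hm l0m lm li' e0
    by_cases hz : h' - h = 0
    · rw [hz, add_zero]
    exfalso
    rw [LinearIndependent.pair_iff' k0] at li
    rw [LinearIndependent.pair_iff' hl0] at li'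
    push Not at li li'
    obtain ⟨a, ha⟩ := li
    obtain ⟨b, hb⟩ := li'
    have := LinearIndependent.pair_iff.1 li0 a (-b) (by rw [ha, neg_smul, hb]; abel)
    rw [this.1] at ha
    exact hz (by simpa using ha.symm)
  intro h1 h2 a b
  rw [← key h1 a, ← key h2 b]

theorem exists_two {m m1 : Fin n → ℂ} (h0 : m ≠ 0) {h : Fin n → ℂ} (hm : h ⬝ᵥ m = 0)
    (hm1 : h ⬝ᵥ m1 = 1) : ∃ f : Fin n → ℂ, f ⬝ᵥ m = 1 ∧ f ⬝ᵥ m1 = 0 := by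
  obtain ⟨f, hf⟩ := exists_dot_one h0
  exact ⟨f - (f ⬝ᵥ m1) • h, by simp [sub_dotProduct, *], by simp [sub_dotProduct, *]⟩

theorem pair_identity (hψ : Fr ψ) {m m1 h f : Fin n → ℂ} (hm : h ⬝ᵥ m = 0)
    (hm1 : h ⬝ᵥ m1 = 1) (fm : f ⬝ᵥ m = 1) (fm1 : f ⬝ᵥ m1 = 0) :
    ψ (vecMulVec m f) + ψ (vecMulVec m1 h) =
      ψ (vecMulVec m (f - h)) + ψ (vecMulVec (m1 + m) h) := by
  refine hψ.sum2 (biorth2 fm fm1 hm hm1) (biorth2 ?_ ?_ ?_ ?_) ?_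
  · simp [sub_dotProduct, *]
  · simp [sub_dotProduct, dotProduct_add, *]
  · simp [*]
  · simp [dotProduct_add, *]
  · ext i j; simp [vecMulVec_apply]; ring

theorem L2 (hn : 3 ≤ n) (hψ : Fr ψ) {m h : Fin n → ℂ} (m0 : m ≠ 0) (h0 : h ≠ 0)
    (hm : h ⬝ᵥ m = 0) (B : BI ψ m) : BI (fun A => ψ Aᵀ) h := by
  obtain ⟨m1, hm1⟩ := exists_dot_one h0
  rw [dotProduct_comm] at hm1
  obtain ⟨f, fm, fm1⟩ := exists_two m0 hm hm1
  have P := pair_identity hψ hm hm1 fm fm1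
  rw [B f (f - h) fm (by simp [sub_dotProduct, *])] at P
  have P := add_left_cancel P
  refine L1full hn hψ.inT (h := m1) (k := m) (by rw [dotProduct_comm]; exact hm1)
    (by rw [dotProduct_comm]; exact hm) m0 ?_
  simpa only [transpose_vecMulVec] using P

theorem L2' (hn : 3 ≤ n) (hψ : Fr ψ) {m h : Fin n → ℂ} (m0 : m ≠ 0) (h0 : h ≠ 0)
    (hm : h ⬝ᵥ m = 0) (B : BI (fun A => ψ Aᵀ) h) : BI ψ m := by
  have := L2 hn hψ.inT h0 m0 (by rw [dotProduct_comm]; exact hm) B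
  simpa only [transpose_transpose] using this

theorem NC (hn : 3 ≤ n) (hψ : Fr ψ) {m h h' : Fin n → ℂ} (hm : h ⬝ᵥ m = 1) (hm' : h' ⬝ᵥ m = 1)
    (ne : h ≠ h') : ψ (vecMulVec m h) ≠ ψ (vecMulVec m h') := by
  intro e
  have m0 : m ≠ 0 := by rintro rfl; simp at hm
  have Bm : BI ψ m := L1full hn hψ (h := h) (k := h' - h) hm (by simp [sub_dotProduct, *])
    (sub_ne_zero.2 ne.symm) (by rw [e]; congr 2; abel)
  have all : ∀ m', m' ≠ 0 → BI ψ m' := by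
    intro m' m0'
    obtain ⟨k, hk, h2⟩ := exists_kill (show 2 < n by omega) ![m, m']
    have h20 := h2 0
    have h21 := h2 1
    simp at h20 h21
    exact L2' hn hψ m0' hk h21 (L2 hn hψ m0 hk h20 Bm)
  have allK : ∀ k, k ≠ 0 → BI (fun A => ψ Aᵀ) k := by
    intro k hk
    obtain ⟨x, hx, h1⟩ := exists_kill (show 1 < n by omega) ![k]
    have h10 := h1 0
    simp at h10
    exact L2 hn hψ hx hk (by rw [dotProduct_comm]; exact h10) (all x hx)
  obtain ⟨k, hk, h2⟩ := exists_kill (show 1 < n by omega) ![m]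
  have km := h2 0
  simp at km
  obtain ⟨p, hp⟩ := exists_dot_one hk
  rw [dotProduct_comm] at hp
  obtain ⟨f, fm, fp⟩ := exists_two m0 km hp
  have o := hψ.orth fm fp km hp
  have p0 : p ≠ 0 := by rintro rfl; simp at hp
  have e1 := all m m0 f (f + k) fm (by simp [add_dotProduct, *])
  have s0 : f + k ≠ 0 := by
    intro h0
    have : (f + k) ⬝ᵥ m = 1 := by rw [add_dotProduct, fm, km, add_zero]
    rw [h0] at this; simp at this
  have e2 := allK (f + k) s0 m p (by rw [dotProduct_comm]; simp [add_dotProduct, *])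
    (by rw [dotProduct_comm]; simp [add_dotProduct, *])
  simp only [transpose_vecMulVec] at e2
  have e3 := all p p0 (f + k) k (by simp [add_dotProduct, *]) hp
  have E := e1.trans (e2.trans e3)
  rw [E, (hψ.r1 hp).sq] at o
  exact (hψ.r1 hp).ne_zero o

end


section
variable {n : ℕ} {ψ : Matrix (Fin n) (Fin n) ℂ → Matrix (Fin n) (Fin n) ℂ}

theorem expand_right {b g a f c w : Fin n → ℂ} (h : g ⬝ᵥ b = 1)
    (e : vecMulVec b g * (vecMulVec a f + vecMulVec c w) = vecMulVec b g) :
    g = (g ⬝ᵥ a) • f + (g ⬝ᵥ c) • w := by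
  have := congrArg (fun M => g ᵥ* M) e
  simp only [mul_add, vv_mul, vecMul_add, vecMul_smul, vecMul_vecMulVec, h, one_smul] at this
  exact this.symm

theorem expand_left {b g a f c w : Fin n → ℂ} (h : g ⬝ᵥ b = 1)
    (e : (vecMulVec a f + vecMulVec c w) * vecMulVec b g = vecMulVec b g) :
    b = (f ⬝ᵥ b) • a + (w ⬝ᵥ b) • c := by
  have := congrArg (fun M => M *ᵥ b) e
  simp only [add_mul, vv_mul, add_mulVec, smul_mulVec, vecMulVec_mulVec, h, one_smul,
    MulOpposite.op_one] at this
  exact this.symm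

theorem L3 (hn : 3 ≤ n) (hψ : Fr ψ) {m h k : Fin n → ℂ} (hm : h ⬝ᵥ m = 1) (km : k ⬝ᵥ m = 0)
    (k0 : k ≠ 0) : im (ψ (vecMulVec m h)) = im (ψ (vecMulVec m (h + k))) ∨
      co (ψ (vecMulVec m h)) = co (ψ (vecMulVec m (h + k))) := by
  obtain ⟨l, hl, lm, li⟩ := exists_indep hn m k0
  obtain ⟨m2, x, hm2, hx, km2, kx, lm2, lx⟩ := dual3 hm km lm li
  obtain ⟨y, g, hyg, e⟩ := hψ.image (biorth3 hm hm2 hx km km2 kx lm lm2 lx)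
  have e0 := e 0
  have e1 := e 1
  have e2 := e 2
  simp at e0 e1 e2
  have q1 : (h + k) ⬝ᵥ m = 1 := by simp [add_dotProduct, *]
  have q2 : (h + k) ⬝ᵥ x = 0 := by simp [add_dotProduct, *]
  have r1 : (l + k) ⬝ᵥ m = 0 := by simp [add_dotProduct, *]
  have r2 : (l + k) ⬝ᵥ x = 1 := by simp [add_dotProduct, *]
  obtain ⟨y', g', hyg', e'⟩ := hψ.image (biorth2 q1 q2 r1 r2)
  have e0' := e' 0
  have e1' := e' 1
  simp at e0' e1'
  have S1 := hψ.sum3 (biorth3 hm hm2 hx km km2 kx lm lm2 lx)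
    (biorth3 (x1 := m) (x2 := m2 - m) (x3 := x) (f1 := h + k) (f2 := k) (f3 := l)
      q1 (by simp [add_dotProduct, dotProduct_sub, *]) q2 km
      (by simp [dotProduct_sub, *]) kx lm (by simp [dotProduct_sub, *]) lx)
    (by ext i j; simp [vecMulVec_apply]; ring)
  have S2 := hψ.sum3 (biorth3 hm hm2 hx km km2 kx lm lm2 lx)
    (biorth3 (x1 := m) (x2 := m2 - x) (x3 := x) (f1 := h) (f2 := k) (f3 := l + k)
      hm (by simp [dotProduct_sub, *]) hx km
      (by simp [dotProduct_sub, *]) kx r1 (by simp [add_dotProduct, dotProduct_sub, *]) r2)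
    (by ext i j; simp [vecMulVec_apply]; ring)
  have s1 : ψ (vecMulVec m (h + k)) * ψ (vecMulVec (m2 - m) k) = 0 :=
    hψ.orth q1 (by simp [add_dotProduct, dotProduct_sub, *]) km (by simp [dotProduct_sub, *])
  have s2 : ψ (vecMulVec (m2 - m) k) * ψ (vecMulVec m (h + k)) = 0 :=
    hψ.orth (by simp [dotProduct_sub, *]) km (by simp [add_dotProduct, dotProduct_sub, *]) q1
  have s3 : ψ (vecMulVec m (h + k)) * ψ (vecMulVec x l) = 0 := hψ.orth q1 q2 lm lx
  have s4 : ψ (vecMulVec x l) * ψ (vecMulVec m (h + k)) = 0 := hψ.orth lx lm q2 q1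
  have t1 : ψ (vecMulVec x (l + k)) * ψ (vecMulVec (m2 - x) k) = 0 :=
    hψ.orth r2 (by simp [add_dotProduct, dotProduct_sub, *]) kx (by simp [dotProduct_sub, *])
  have t2 : ψ (vecMulVec (m2 - x) k) * ψ (vecMulVec x (l + k)) = 0 :=
    hψ.orth (by simp [dotProduct_sub, *]) kx (by simp [add_dotProduct, dotProduct_sub, *]) r2
  have t3 : ψ (vecMulVec x (l + k)) * ψ (vecMulVec m h) = 0 := hψ.orth r2 r1 hx hm
  have t4 : ψ (vecMulVec m h) * ψ (vecMulVec x (l + k)) = 0 := hψ.orth hm hx r1 r2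
  have Qs := (hψ.r1 q1).sq
  have Us := (hψ.r1 r2).sq
  have A1 := congrArg (fun M => ψ (vecMulVec m (h + k)) * M) S1
  have A2 := congrArg (fun M => M * ψ (vecMulVec m (h + k))) S1
  have A3 := congrArg (fun M => ψ (vecMulVec x (l + k)) * M) S2
  have A4 := congrArg (fun M => M * ψ (vecMulVec x (l + k))) S2
  simp only [mul_add, add_mul, s1, s2, s3, s4, t1, t2, t3, t4, Qs, Us, add_zero, zero_add] at A1 A2 A3 A4
  rw [← mul_add, e0, e1, e0'] at A1
  rw [← add_mul, e0, e1, e0'] at A2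
  rw [← mul_add, e1, e2, e1'] at A3
  rw [← add_mul, e1, e2, e1'] at A4
  have b00 : g' 0 ⬝ᵥ y' 0 = 1 := by simpa using hyg' 0 0
  have b01 : g' 0 ⬝ᵥ y' 1 = 0 := by simpa using hyg' 0 1
  have b10 : g' 1 ⬝ᵥ y' 0 = 0 := by simpa using hyg' 1 0
  have b11 : g' 1 ⬝ᵥ y' 1 = 1 := by simpa using hyg' 1 1
  have c00 : g 0 ⬝ᵥ y 0 = 1 := by simpa using hyg 0 0
  have c22 : g 2 ⬝ᵥ y 2 = 1 := by simpa using hyg 2 2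
  have c01 : g 0 ⬝ᵥ y 1 = 0 := by simpa using hyg 0 1
  have c02 : g 0 ⬝ᵥ y 2 = 0 := by simpa using hyg 0 2
  have c10 : g 1 ⬝ᵥ y 0 = 0 := by simpa using hyg 1 0
  have c20 : g 2 ⬝ᵥ y 0 = 0 := by simpa using hyg 2 0
  have E1 := expand_right b00 A1
  have E2 := expand_left b00 A2
  have E3 := expand_right b11 A3
  have E4 := expand_left b11 A4
  rw [e0, e0']
  by_cases z1 : g' 0 ⬝ᵥ y 1 = 0
  · right
    rw [z1, zero_smul, add_zero] at E1
    exact co_eq_of c00 b00 E1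
  by_cases z2 : g 1 ⬝ᵥ y' 0 = 0
  · left
    rw [z2, zero_smul, add_zero] at E2
    exact im_eq_of c00 b00 E2
  exfalso
  have f1 : g 0 ⬝ᵥ y' 1 = 0 := by
    rw [E4]; simp [dotProduct_add, c01, c02]
  have f2 : g' 1 ⬝ᵥ y 0 = 0 := by
    rw [E3]; simp [add_dotProduct, c10, c20]
  have f3 : g 1 ⬝ᵥ y' 1 = 0 := by
    rw [E1] at b01
    simp only [add_dotProduct, smul_dotProduct, f1, smul_eq_mul, mul_zero, zero_add] at b01
    exact (mul_eq_zero.1 b01).resolve_left z1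
  have f4 : g' 1 ⬝ᵥ y 1 = 0 := by
    rw [E2] at b10
    simp only [dotProduct_add, dotProduct_smul, f2, smul_eq_mul, mul_zero, zero_add] at b10
    exact (mul_eq_zero.1 b10).resolve_left z2
  rw [f3, zero_smul, zero_add] at E4
  rw [f4, zero_smul, zero_add] at E3
  refine NC hn hψ (m := x) (h := l) (h' := l + k) lx r2 (by simpa using k0) ?_
  have prod : (g 2 ⬝ᵥ y' 1) * (g' 1 ⬝ᵥ y 2) = 1 := by
    have := b11
    rw [E4, E3] at this
    simp [c22] at this
    linear_combination this
  rw [e2, e1', E4, E3]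
  ext i j
  simp only [vecMulVec_apply, Pi.smul_apply, smul_eq_mul]
  linear_combination (- y 2 i * g 2 j) * prod
end


section
variable {n : ℕ} {ψ : Matrix (Fin n) (Fin n) ℂ → Matrix (Fin n) (Fin n) ℂ}

def SI (ψ : Matrix (Fin n) (Fin n) ℂ → Matrix (Fin n) (Fin n) ℂ) (m : Fin n → ℂ) : Prop :=
  ∀ h h' : Fin n → ℂ, h ⬝ᵥ m = 1 → h' ⬝ᵥ m = 1 → im (ψ (vecMulVec m h)) = im (ψ (vecMulVec m h'))
def TI (ψ : Matrix (Fin n) (Fin n) ℂ → Matrix (Fin n) (Fin n) ℂ) (m : Fin n → ℂ) : Prop :=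
  ∀ h h' : Fin n → ℂ, h ⬝ᵥ m = 1 → h' ⬝ᵥ m = 1 → co (ψ (vecMulVec m h)) = co (ψ (vecMulVec m h'))

theorem L4 (hn : 3 ≤ n) (hψ : Fr ψ) (m : Fin n → ℂ) : SI ψ m ∨ TI ψ m := by
  have L : ∀ h h' : Fin n → ℂ, h ⬝ᵥ m = 1 → h' ⬝ᵥ m = 1 →
      im (ψ (vecMulVec m h)) = im (ψ (vecMulVec m h')) ∨
      co (ψ (vecMulVec m h)) = co (ψ (vecMulVec m h')) := by
    intro h h' hm hm'
    by_cases e : h' - h = 0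
    · rw [sub_eq_zero.1 e]; simp
    · have := L3 hn hψ hm (k := h' - h) (by simp [sub_dotProduct, *]) e
      rwa [add_sub_cancel] at this
  by_contra hc
  push Not at hc
  obtain ⟨h1, h2⟩ := hc
  unfold SI at h1
  unfold TI at h2
  push Not at h1 h2
  obtain ⟨x, y, hx, hy, n1⟩ := h1
  obtain ⟨z, w, hz, hw, n2⟩ := h2
  have a1 := L x y hx hy
  have a2 := L z w hz hw
  have a3 := L x z hx hz
  have a4 := L x w hx hw
  have a5 := L y z hy hz
  have a6 := L y w hy hw
  grind

theorem L5a (hn : 3 ≤ n) (hψ : Fr ψ) {m h : Fin n → ℂ} (m0 : m ≠ 0) (h0 : h ≠ 0)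
    (hm : h ⬝ᵥ m = 0) (h1 : SI ψ m) (h2 : SI (fun A => ψ Aᵀ) h) : False := by
  obtain ⟨m1, hm1⟩ := exists_dot_one h0
  rw [dotProduct_comm] at hm1
  obtain ⟨f, fm, fm1⟩ := exists_two m0 hm hm1
  have P := pair_identity hψ hm hm1 fm fm1
  have fm' : (f - h) ⬝ᵥ m = 1 := by simp [sub_dotProduct, *]
  have hm1' : h ⬝ᵥ (m1 + m) = 1 := by simp [dotProduct_add, *]
  have i1 := (hψ.r1 fm').mul_im (h1 f (f - h) fm fm')
  have i2 := h2 m1 (m1 + m) (by rw [dotProduct_comm]; exact hm1) (by rw [dotProduct_comm]; exact hm1')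
  simp only [transpose_vecMulVec] at i2
  have i2 := (hψ.r1 hm1').mul_im i2
  have o := hψ.orth fm fm1 hm hm1
  have e := congrArg (fun M => ψ (vecMulVec m f) * M) P
  simp only [mul_add, (hψ.r1 fm).sq, o, i1, add_zero] at e
  rw [← i2, ← mul_assoc, o, zero_mul, add_zero] at e
  refine NC hn hψ fm fm' ?_ e
  intro h'
  exact h0 (sub_eq_self.1 h'.symm)

theorem L5b (hn : 3 ≤ n) (hψ : Fr ψ) {m h : Fin n → ℂ} (m0 : m ≠ 0) (h0 : h ≠ 0)
    (hm : h ⬝ᵥ m = 0) (h1 : TI ψ m) (h2 : TI (fun A => ψ Aᵀ) h) : False := by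
  obtain ⟨m1, hm1⟩ := exists_dot_one h0
  rw [dotProduct_comm] at hm1
  obtain ⟨f, fm, fm1⟩ := exists_two m0 hm hm1
  have P := pair_identity hψ hm hm1 fm fm1
  have fm' : (f - h) ⬝ᵥ m = 1 := by simp [sub_dotProduct, *]
  have hm1' : h ⬝ᵥ (m1 + m) = 1 := by simp [dotProduct_add, *]
  have i1 := (hψ.r1 fm').mul_co (h1 (f - h) f fm' fm)
  have i2 := h2 (m1 + m) m1 (by rw [dotProduct_comm]; exact hm1') (by rw [dotProduct_comm]; exact hm1)
  simp only [transpose_vecMulVec] at i2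
  have i2 := (hψ.r1 hm1').mul_co i2
  have o := hψ.orth hm1 hm fm1 fm
  have e := congrArg (fun M => M * ψ (vecMulVec m f)) P
  simp only [add_mul, (hψ.r1 fm).sq, o, i1, add_zero] at e
  rw [← i2, mul_assoc, o, mul_zero, add_zero] at e
  refine NC hn hψ fm fm' ?_ e
  intro h'
  exact h0 (sub_eq_self.1 h'.symm)

theorem kill1 (hn : 3 ≤ n) (m : Fin n → ℂ) : ∃ h : Fin n → ℂ, h ≠ 0 ∧ h ⬝ᵥ m = 0 := by
  obtain ⟨h, h0, h1⟩ := exists_kill (show 1 < n by omega) ![m]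
  exact ⟨h, h0, by simpa using h1 0⟩

theorem kill2 (hn : 3 ≤ n) (m m' : Fin n → ℂ) : ∃ h : Fin n → ℂ, h ≠ 0 ∧ h ⬝ᵥ m = 0 ∧ h ⬝ᵥ m' = 0 := by
  obtain ⟨h, h0, h1⟩ := exists_kill (show 2 < n by omega) ![m, m']
  exact ⟨h, h0, by simpa using h1 0, by simpa using h1 1⟩

theorem L6 (hn : 3 ≤ n) (hψ : Fr ψ) :
    ((∀ m, m ≠ 0 → SI ψ m) ∧ (∀ h, h ≠ 0 → TI (fun A => ψ Aᵀ) h)) ∨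
    ((∀ m, m ≠ 0 → TI ψ m) ∧ (∀ h, h ≠ 0 → SI (fun A => ψ Aᵀ) h)) := by
  by_cases hex : ∃ m, m ≠ 0 ∧ SI ψ m
  · left
    obtain ⟨m0, hm0, s0⟩ := hex
    have all : ∀ m, m ≠ 0 → SI ψ m := by
      intro m hm
      obtain ⟨h, h0, a, b⟩ := kill2 hn m0 m
      have t := (L4 hn hψ.inT h).resolve_left (fun c => L5a hn hψ hm0 h0 a s0 c)
      exact (L4 hn hψ m).resolve_right (fun c => L5b hn hψ hm h0 b c t)
    refine ⟨all, fun h h0 => ?_⟩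
    obtain ⟨m, hm, a⟩ := kill1 hn h
    rw [dotProduct_comm] at a
    exact (L4 hn hψ.inT h).resolve_left (fun c => L5a hn hψ hm h0 a (all m hm) c)
  · right
    push Not at hex
    have all : ∀ m, m ≠ 0 → TI ψ m := fun m hm => (L4 hn hψ m).resolve_left (hex m hm)
    refine ⟨all, fun h h0 => ?_⟩
    obtain ⟨m, hm, a⟩ := kill1 hn h
    rw [dotProduct_comm] at a
    exact (L4 hn hψ.inT h).resolve_right (fun c => L5b hn hψ hm h0 a (all m hm) c)

theorem R1.of_mem {A : Matrix (Fin n) (Fin n) ℂ} (hA : R1 A) {a b : Fin n → ℂ} (a0 : a ≠ 0) (b0 : b ≠ 0)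
    (ha : A *ᵥ a = a) (hb : b ᵥ* A = b) : b ⬝ᵥ a ≠ 0 ∧ A = (b ⬝ᵥ a)⁻¹ • vecMulVec a b := by
  obtain ⟨y, g, h, rfl⟩ := hA
  obtain ⟨c, rfl⟩ := (mem_im h).1 ha
  obtain ⟨d, rfl⟩ := (mem_co h).1 hb
  have hc : c ≠ 0 := by rintro rfl; simp at a0
  have hd : d ≠ 0 := by rintro rfl; simp at b0
  have : (d • g) ⬝ᵥ (c • y) = d * c := by simp [h, mul_comm]
  rw [this]
  refine ⟨mul_ne_zero hd hc, ?_⟩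
  ext i j
  simp only [vecMulVec_apply, Matrix.smul_apply, Pi.smul_apply, smul_eq_mul]
  field_simp

theorem L7 {k : ℕ} {ψ : Matrix (Fin (k+3)) (Fin (k+3)) ℂ → Matrix (Fin (k+3)) (Fin (k+3)) ℂ} (hψ : Fr ψ)
    (h1 : ∀ m, m ≠ 0 → SI ψ m) (h2 : ∀ h, h ≠ 0 → TI (fun A => ψ Aᵀ) h) :
    ∃ (T : Matrix (Fin (k+3)) (Fin (k+3)) ℂ) (τ : ℂ →+* ℂ), IsUnit T ∧
      ∀ m h, h ⬝ᵥ m = 1 → ψ (vecMulVec m h) = T * vecMulVec (τ ∘ m) (τ ∘ h) * T⁻¹ := by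
  have ea : ∀ m : Fin (k+3) → ℂ, ∃ y : Fin (k+3) → ℂ, m ≠ 0 → (y ≠ 0 ∧ ∀ h, h ⬝ᵥ m = 1 →
      ψ (vecMulVec m h) *ᵥ y = y) := by
    intro m
    by_cases hm : m = 0
    · exact ⟨0, fun h => absurd hm h⟩
    obtain ⟨h, hh⟩ := exists_dot_one hm
    obtain ⟨y, g, hy, e⟩ := hψ.r1 hh
    refine ⟨y, fun _ => ⟨by rintro rfl; simp at hy, fun h' hh' => ?_⟩⟩
    have : y ∈ im (ψ (vecMulVec m h)) := by rw [e, mem_im hy]; exact ⟨1, by simp⟩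
    rw [h1 m hm h h' hh hh'] at this
    exact this
  have eb : ∀ h : Fin (k+3) → ℂ, ∃ y : Fin (k+3) → ℂ, h ≠ 0 → (y ≠ 0 ∧ ∀ m, h ⬝ᵥ m = 1 →
      y ᵥ* ψ (vecMulVec m h) = y) := by
    intro h
    by_cases h0 : h = 0
    · exact ⟨0, fun h => absurd h0 h⟩
    obtain ⟨m, hh⟩ := exists_dot_one h0
    have hh2 := hh
    rw [dotProduct_comm] at hh2
    obtain ⟨y, g, hy, e⟩ := hψ.r1 hh2
    refine ⟨g, fun _ => ⟨by rintro rfl; simp at hy, fun m' hm' => ?_⟩⟩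
    have : g ∈ co (ψ (vecMulVec m h)) := by rw [e, mem_co hy]; exact ⟨1, by simp⟩
    have q := h2 h h0 m m' hh (by rw [dotProduct_comm]; exact hm')
    simp only [transpose_vecMulVec] at q
    rw [q] at this
    exact this
  choose a ha using ea
  choose b hb using eb
  have val : ∀ m h, h ⬝ᵥ m = 1 → b h ⬝ᵥ a m ≠ 0 ∧
      ψ (vecMulVec m h) = (b h ⬝ᵥ a m)⁻¹ • vecMulVec (a m) (b h) := by
    intro m h hm
    have m0 : m ≠ 0 := by rintro rfl; simp at hm
    have h0 : h ≠ 0 := by rintro rfl; simp at hm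
    exact (hψ.r1 hm).of_mem (ha m m0).1 (hb h h0).1 ((ha m m0).2 h hm) ((hb h h0).2 m hm)
  obtain ⟨T, τ, hT, hTa, hTb⟩ := ftpg a b (by
    intro m m0 h h0
    constructor
    · intro hm
      obtain ⟨m1, hm1⟩ := exists_dot_one h0
      rw [dotProduct_comm] at hm1
      obtain ⟨f, fm, fm1⟩ := exists_two m0 hm hm1
      have o := hψ.orth hm1 hm fm1 fm
      rw [← (hb h h0).2 m1 hm1, ← (ha m m0).2 f fm, ← dotProduct_mulVec, mulVec_mulVec, o]
      simp
    · intro hz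
      by_contra hm
      set t := h ⬝ᵥ m with ht
      have q1 : (t⁻¹ • h) ⬝ᵥ m = 1 := by rw [smul_dotProduct, smul_eq_mul]; exact inv_mul_cancel₀ hm
      have q2 : h ⬝ᵥ (t⁻¹ • m) = 1 := by rw [dotProduct_smul, smul_eq_mul]; exact inv_mul_cancel₀ hm
      have e : vecMulVec m (t⁻¹ • h) = vecMulVec (t⁻¹ • m) h := by
        ext i j; simp [vecMulVec_apply]; ring
      have z1 := (ha m m0).2 _ q1
      have z2 := (hb h h0).2 _ q2
      rw [← e] at z2
      exact ((hψ.r1 q1).of_mem (ha m m0).1 (hb h h0).1 z1 z2).1 hz)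
  refine ⟨T, τ, hT, ?_⟩
  intro m h hm
  have m0 : m ≠ 0 := by rintro rfl; simp at hm
  have h0 : h ≠ 0 := by rintro rfl; simp at hm
  obtain ⟨n1, e⟩ := val m h hm
  obtain ⟨c, hc, ec⟩ := hTa m m0
  obtain ⟨d, hd, ed⟩ := hTb h h0
  have hTd : IsUnit T.det := (Matrix.isUnit_iff_isUnit_det T).1 hT
  have eb : b h = d • ((τ ∘ h) ᵥ* T⁻¹) := by
    rw [← smul_vecMul, ← ed, vecMul_vecMul, Matrix.mul_nonsing_inv _ hTd, vecMul_one]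
  have dd : (τ ∘ h) ⬝ᵥ (τ ∘ m) = 1 := by
    rw [← RingHom.map_dotProduct, hm, map_one]
  have dot : b h ⬝ᵥ a m = d * c := by
    rw [eb, ec, smul_dotProduct, dotProduct_smul, ← dotProduct_mulVec, mulVec_mulVec,
      Matrix.nonsing_inv_mul _ hTd, one_mulVec, dd]
    simp
  rw [e, dot, mul_vecMulVec, vecMulVec_mul, eb, ec]
  ext i j
  simp only [vecMulVec_apply, Matrix.smul_apply, Pi.smul_apply, smul_eq_mul]
  field_simp

theorem thmB {k : ℕ} {ψ : Matrix (Fin (k+3)) (Fin (k+3)) ℂ → Matrix (Fin (k+3)) (Fin (k+3)) ℂ} (hψ : Fr ψ) :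
    ∃ (T : Matrix (Fin (k+3)) (Fin (k+3)) ℂ) (τ : ℂ →+* ℂ), IsUnit T ∧
      ((∀ m h, h ⬝ᵥ m = 1 → ψ (vecMulVec m h) = T * vecMulVec (τ ∘ m) (τ ∘ h) * T⁻¹) ∨
      (∀ m h, h ⬝ᵥ m = 1 → (ψ (vecMulVec m h))ᵀ = T * vecMulVec (τ ∘ m) (τ ∘ h) * T⁻¹)) := by
  rcases L6 (by omega) hψ with ⟨h1, h2⟩ | ⟨h1, h2⟩
  · obtain ⟨T, τ, hT, h⟩ := L7 hψ h1 h2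
    exact ⟨T, τ, hT, Or.inl h⟩
  · obtain ⟨T, τ, hT, h⟩ := L7 hψ.outT
      (fun m hm h h' a b => by
        simp only [im_transpose]; exact h1 m hm h h' a b)
      (fun m hm h h' a b => by
        simp only [co_transpose]; exact h2 m hm h h' a b)
    exact ⟨T, τ, hT, Or.inr h⟩
end


structure Pres {n : ℕ} (Φ : Matrix (Fin n) (Fin n) ℂ → Matrix (Fin n) (Fin n) ℂ) : Prop where
  cont : ContinuousOn Φ {X | X.det = 1}
  comm : ∀ X Y, X.det = 1 → Y.det = 1 → X * Y = Y * X → Φ X * Φ Y = Φ Y * Φ X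
  shrink : ∀ X, X.det = 1 → spectrum ℂ (Φ X) ⊆ spectrum ℂ X

theorem conn_const {C : Set ℂ} (hC : C.Countable) {α : Type} [Finite α] (K : {z : ℂ // z ∉ C} → α)
    (hK : ∀ a, IsClosed (K ⁻¹' {a})) (x y) : K x = K y := by
  letI : TopologicalSpace α := ⊥
  haveI : DiscreteTopology α := ⟨rfl⟩
  have hconn : IsPreconnected (Cᶜ : Set ℂ) :=
    (Set.Countable.isPathConnected_compl_of_one_lt_rank
      (by rw [Complex.rank_real_complex]; norm_num) hC).isConnected.isPreconnected
  haveI : PreconnectedSpace {z : ℂ // z ∉ C} := Subtype.preconnectedSpace hconn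
  have hc : Continuous K := by
    rw [continuous_iff_isClosed]
    intro s _
    have : K ⁻¹' s = ⋃ a ∈ s, K ⁻¹' {a} := by ext z; simp
    rw [this]
    exact (Set.toFinite s).isClosed_biUnion (fun a _ => hK a)
  exact PreconnectedSpace.constant inferInstance hc

section
variable {n : ℕ}

noncomputable def XX (S : Matrix (Fin n) (Fin n) ℂ) (μ : Fin n → ℂ) : Matrix (Fin n) (Fin n) ℂ :=
  S * diagonal (fun i => Complex.exp (μ i)) * S⁻¹

theorem det_conj' {S : Matrix (Fin n) (Fin n) ℂ} (hS : S.det ≠ 0) (M : Matrix (Fin n) (Fin n) ℂ) :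
    (S * M * S⁻¹).det = M.det := by
  rw [det_mul, det_mul, det_nonsing_inv, Ring.inverse_eq_inv']
  field_simp

theorem XX_det {S : Matrix (Fin n) (Fin n) ℂ} (hS : S.det ≠ 0) {μ : Fin n → ℂ} (hμ : ∑ i, μ i = 0) :
    (XX S μ).det = 1 := by
  rw [XX, det_conj' hS, det_diagonal, ← Complex.exp_sum, hμ, Complex.exp_zero]

theorem mem_spec_iff_s12 {M : Matrix (Fin n) (Fin n) ℂ} {t : ℂ} :
    t ∈ spectrum ℂ M ↔ M.charpoly.eval t = 0 := by
  rw [Matrix.mem_spectrum_iff_isRoot_charpoly]; rfl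

theorem spec_conj_s12 {S : Matrix (Fin n) (Fin n) ℂ} (hS : S.det ≠ 0) (l : Fin n → ℂ) {t : ℂ} :
    t ∈ spectrum ℂ (S * diagonal l * S⁻¹) ↔ ∃ j, t = l j := by
  rw [mem_spec_iff_s12, eval_charpoly]
  have : scalar (Fin n) t - S * diagonal l * S⁻¹ = S * (diagonal (fun i => t - l i)) * S⁻¹ := by
    have e : diagonal (fun i => t - l i) = scalar (Fin n) t - diagonal l := by
      ext i j; by_cases h : i = j <;> simp [h, diagonal_apply]
    rw [e, mul_sub, sub_mul]
    congr 1
    rw [← (scalar_commute t (fun _ => mul_comm _ _) S).eq, mul_assoc,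
      mul_nonsing_inv _ (isUnit_iff_ne_zero.2 hS), mul_one]
  rw [this, det_conj' hS, det_diagonal, Finset.prod_eq_zero_iff]
  simp [sub_eq_zero]

theorem spec_XX {S : Matrix (Fin n) (Fin n) ℂ} (hS : S.det ≠ 0) (μ : Fin n → ℂ) {t : ℂ} :
    t ∈ spectrum ℂ (XX S μ) ↔ ∃ j, t = Complex.exp (μ j) := spec_conj_s12 hS _

/-- distinct eigenvalues give diagonalization -/
theorem diagonalize_s12 {M : Matrix (Fin n) (Fin n) ℂ} {l : Fin n → ℂ} (hl : Function.Injective l)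
    (h : ∀ j, l j ∈ spectrum ℂ M) : ∃ R : Matrix (Fin n) (Fin n) ℂ, R.det ≠ 0 ∧ M = R * diagonal l * R⁻¹ := by
  have ev : ∀ j, ∃ v : Fin n → ℂ, v ≠ 0 ∧ M *ᵥ v = l j • v := by
    intro j
    have := h j
    rw [mem_spec_iff_s12, eval_charpoly] at this
    obtain ⟨v, hv, e⟩ := Matrix.exists_mulVec_eq_zero_iff.2 this
    refine ⟨v, hv, ?_⟩
    rw [sub_mulVec, sub_eq_zero] at e
    rw [← e]; simp
  choose v hv e using ev
  have li : LinearIndependent ℂ v := by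
    refine Module.End.eigenvectors_linearIndependent' (M.mulVecLin) l hl v ?_
    intro j
    rw [Module.End.hasEigenvector_iff, Module.End.mem_eigenspace_iff]
    exact ⟨by simpa using e j, hv j⟩
  let R : Matrix (Fin n) (Fin n) ℂ := (Matrix.of v)ᵀ
  have hR : IsUnit R := by
    rw [← Matrix.linearIndependent_cols_iff_isUnit]
    exact li
  have hR' : R.det ≠ 0 := isUnit_iff_ne_zero.1 ((Matrix.isUnit_iff_isUnit_det R).1 hR)
  refine ⟨R, hR', ?_⟩
  have : M * R = R * diagonal l := by
    ext i j
    rw [mul_diagonal]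
    have := congrFun (e j) i
    simp only [Pi.smul_apply, smul_eq_mul] at this
    rw [mul_comm]
    exact this
  rw [← this, mul_assoc, mul_nonsing_inv _ (isUnit_iff_ne_zero.2 hR'), mul_one]

theorem det_line_countable {S0 S1 : Matrix (Fin n) (Fin n) ℂ} (h : S0.det ≠ 0) :
    {z : ℂ | (S0 + z • (S1 - S0)).det = 0}.Countable := by
  let p : Polynomial ℂ := (S0.map Polynomial.C + (Polynomial.X : Polynomial ℂ) • (S1 - S0).map Polynomial.C).det
  have hp : ∀ z, p.eval z = (S0 + z • (S1 - S0)).det := by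
    intro z
    rw [← Polynomial.coe_evalRingHom, RingHom.map_det]
    congr 1
    ext i j
    simp
  have p0 : p ≠ 0 := by
    intro e
    have := hp 0
    rw [e] at this
    simp at this
    exact h this.symm
  refine (p.roots.toFinset.finite_toSet.subset ?_).countable
  intro z hz
  simp only [Finset.mem_coe, Multiset.mem_toFinset]
  rw [Polynomial.mem_roots p0, Polynomial.IsRoot, hp]
  exact hz

theorem exp_line_countable {μ0 μ1 : Fin n → ℂ} (h : Function.Injective fun i => Complex.exp (μ0 i)) :
    {z : ℂ | ¬ Function.Injective fun i => Complex.exp ((μ0 + z • (μ1 - μ0)) i)}.Countable := by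
  have : {z : ℂ | ¬ Function.Injective fun i => Complex.exp ((μ0 + z • (μ1 - μ0)) i)} ⊆
      ⋃ (i : Fin n) (j : Fin n) (k : ℤ), {z : ℂ | i ≠ j ∧
        (μ0 + z • (μ1 - μ0)) i = (μ0 + z • (μ1 - μ0)) j + k * (2 * Real.pi * Complex.I)} := by
    intro z hz
    simp only [Set.mem_ofPred_eq, Function.Injective] at hz
    push Not at hz
    obtain ⟨i, j, e, ne⟩ := hz
    rw [Complex.exp_eq_exp_iff_exists_int] at e
    obtain ⟨k, hk⟩ := e
    simp only [Set.mem_iUnion]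
    exact ⟨i, j, k, ne, hk⟩
  refine Set.Countable.mono this ?_
  refine Set.countable_iUnion fun i => Set.countable_iUnion fun j => Set.countable_iUnion fun k => ?_
  refine Set.Subsingleton.countable ?_
  rintro z ⟨ne, hz⟩ w ⟨_, hw⟩
  simp only [Pi.add_apply, Pi.smul_apply, Pi.sub_apply, smul_eq_mul] at hz hw
  by_contra hzw
  have h1 : (z - w) * ((μ1 i - μ0 i) - (μ1 j - μ0 j)) = 0 := by linear_combination hz - hw
  have h2 := (mul_eq_zero.1 h1).resolve_left (sub_ne_zero.2 hzw)
  apply ne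
  apply h
  simp only
  rw [Complex.exp_eq_exp_iff_exists_int]
  exact ⟨k, by linear_combination hz - z * h2⟩

end


section
variable {n : ℕ}

theorem charpoly_factor {M : Matrix (Fin n) (Fin n) ℂ} {l : Fin n → ℂ} (hl : Function.Injective l)
    (h : ∀ t, t ∈ spectrum ℂ M → ∃ j, t = l j) : ∃ m : Fin n → Fin (n + 1),
      (∀ t, M.charpoly.eval t = ∏ j, (t - l j) ^ (m j : ℕ)) := by
  classical
  have hs : M.charpoly.Splits := IsAlgClosed.splits _
  have hcard : M.charpoly.roots.card = n := by
    rw [← hs.natDegree_eq_card_roots, charpoly_natDegree_eq_dim, Fintype.card_fin]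
  refine ⟨fun j => ⟨M.charpoly.roots.count (l j), by
    have := Multiset.count_le_card (l j) M.charpoly.roots
    omega⟩, fun t => ?_⟩
  have e := hs.eq_prod_roots_of_monic (charpoly_monic M)
  conv_lhs => rw [e]
  rw [Finset.prod_multiset_map_count, Polynomial.eval_prod]
  have sub : M.charpoly.roots.toFinset ⊆ Finset.univ.image l := by
    intro t ht
    rw [Multiset.mem_toFinset, Polynomial.mem_roots (charpoly_monic M).ne_zero] at ht
    obtain ⟨j, rfl⟩ := h t (mem_spec_iff_s12.2 ht)
    exact Finset.mem_image_of_mem _ (Finset.mem_univ _)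
  rw [Finset.prod_subset sub, Finset.prod_image hl.injOn]
  · simp
  · intro t _ ht
    rw [Multiset.mem_toFinset] at ht
    rw [Multiset.count_eq_zero_of_notMem ht]
    simp

def AA (Φ : Matrix (Fin n) (Fin n) ℂ → Matrix (Fin n) (Fin n) ℂ)
    (S : Matrix (Fin n) (Fin n) ℂ) (μ : Fin n → ℂ) : Set (Fin n) :=
  {j | Complex.exp (μ j) ∈ spectrum ℂ (Φ (XX S μ))}

theorem AA_iff {Φ : Matrix (Fin n) (Fin n) ℂ → Matrix (Fin n) (Fin n) ℂ} (hΦ : Pres Φ)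
    {S : Matrix (Fin n) (Fin n) ℂ} (hS : S.det ≠ 0) {μ : Fin n → ℂ} (hμ : ∑ i, μ i = 0)
    (hi : Function.Injective fun i => Complex.exp (μ i)) (A : Set (Fin n)) :
    AA Φ S μ = A ↔ ∃ m : Fin n → Fin (n + 1), (∀ j, j ∈ A ↔ (m j : ℕ) ≠ 0) ∧
      ∀ t, (scalar (Fin n) t - Φ (XX S μ)).det = ∏ j, (t - Complex.exp (μ j)) ^ (m j : ℕ) := by
  have fact : ∀ m : Fin n → Fin (n + 1),
      (∀ t, (scalar (Fin n) t - Φ (XX S μ)).det = ∏ j, (t - Complex.exp (μ j)) ^ (m j : ℕ)) →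
      ∀ j, j ∈ AA Φ S μ ↔ (m j : ℕ) ≠ 0 := by
    intro m hm j
    rw [AA, Set.mem_ofPred_eq, mem_spec_iff_s12, eval_charpoly, hm, Finset.prod_eq_zero_iff]
    constructor
    · rintro ⟨i, _, hi'⟩
      by_cases hz : (m i : ℕ) = 0
      · rw [hz] at hi'; simp at hi'
      · have := (pow_eq_zero_iff hz).1 hi'
        have := hi (sub_eq_zero.1 this)
        rw [this]; exact hz
    · intro hz
      exact ⟨j, Finset.mem_univ _, by rw [sub_self, zero_pow hz]⟩
  constructor
  · rintro rfl
    obtain ⟨m, hm⟩ := charpoly_factor hi (M := Φ (XX S μ)) (fun t ht =>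
      (spec_XX hS μ).1 (hΦ.shrink _ (XX_det hS hμ) ht))
    simp only [eval_charpoly] at hm
    exact ⟨m, fact m hm, hm⟩
  · rintro ⟨m, h1, h2⟩
    ext j
    rw [fact m h2, h1]

theorem AA_const {Φ : Matrix (Fin n) (Fin n) ℂ → Matrix (Fin n) (Fin n) ℂ} (hΦ : Pres Φ)
    {S0 S1 : Matrix (Fin n) (Fin n) ℂ} (hS0 : S0.det ≠ 0) (hS1 : S1.det ≠ 0)
    {μ0 μ1 : Fin n → ℂ} (hμ0 : ∑ i, μ0 i = 0) (hμ1 : ∑ i, μ1 i = 0)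
    (hi0 : Function.Injective fun i => Complex.exp (μ0 i))
    (hi1 : Function.Injective fun i => Complex.exp (μ1 i)) : AA Φ S0 μ0 = AA Φ S1 μ1 := by
  let C := {z : ℂ | (S0 + z • (S1 - S0)).det = 0} ∪
    {z : ℂ | ¬ Function.Injective fun i => Complex.exp ((μ0 + z • (μ1 - μ0)) i)}
  have hC : C.Countable := (det_line_countable hS0).union (exp_line_countable hi0)
  have g1 : ∀ z : {z : ℂ // z ∉ C}, (S0 + z.1 • (S1 - S0)).det ≠ 0 := fun z h => z.2 (Or.inl h)
  have g2 : ∀ z : {z : ℂ // z ∉ C}, Function.Injective fun i => Complex.exp ((μ0 + z.1 • (μ1 - μ0)) i) :=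
    fun z => by
      by_contra h
      exact z.2 (Or.inr h)
  have g3 : ∀ z : ℂ, ∑ i, (μ0 + z • (μ1 - μ0)) i = 0 := by
    intro z
    simp [Finset.sum_add_distrib, ← Finset.mul_sum, hμ0, hμ1]
  have hX : Continuous fun z : {z : ℂ // z ∉ C} => XX (S0 + z.1 • (S1 - S0)) (μ0 + z.1 • (μ1 - μ0)) := by
    unfold XX
    have c1 : Continuous fun z : {z : ℂ // z ∉ C} => S0 + z.1 • (S1 - S0) := by fun_prop
    have c2 : Continuous fun z : {z : ℂ // z ∉ C} =>
        diagonal (fun i => Complex.exp ((μ0 + z.1 • (μ1 - μ0)) i)) := by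
      apply Continuous.matrix_diagonal
      refine continuous_pi fun i => ?_
      simp only [Pi.add_apply, Pi.smul_apply]
      fun_prop
    refine (c1.mul c2).mul ?_
    simp only [Matrix.inv_def, Ring.inverse_eq_inv']
    exact (c1.matrix_det.inv₀ g1).smul c1.matrix_adjugate
  have hΦX : Continuous fun z : {z : ℂ // z ∉ C} => Φ (XX (S0 + z.1 • (S1 - S0)) (μ0 + z.1 • (μ1 - μ0))) :=
    hΦ.cont.comp_continuous hX (fun z => XX_det (g1 z) (g3 z))
  have z0 : (0 : ℂ) ∉ C := by
    rintro (h | h)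
    · simp at h; exact hS0 h
    · simp at h; exact h hi0
  have z1 : (1 : ℂ) ∉ C := by
    rintro (h | h)
    · simp at h; exact hS1 h
    · simp at h; exact h hi1
  have := conn_const hC
    (fun z => AA Φ (S0 + z.1 • (S1 - S0)) (μ0 + z.1 • (μ1 - μ0))) (by
      intro A
      have : ((fun z : {z : ℂ // z ∉ C} => AA Φ (S0 + z.1 • (S1 - S0)) (μ0 + z.1 • (μ1 - μ0))) ⁻¹' {A}) =
          ⋃ m ∈ {m : Fin n → Fin (n + 1) | ∀ j, j ∈ A ↔ (m j : ℕ) ≠ 0}, ⋂ t : ℂ,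
          {z : {z : ℂ // z ∉ C} |
            (scalar (Fin n) t - Φ (XX (S0 + z.1 • (S1 - S0)) (μ0 + z.1 • (μ1 - μ0)))).det
            = ∏ j, (t - Complex.exp ((μ0 + z.1 • (μ1 - μ0)) j)) ^ (m j : ℕ)} := by
        ext z
        simp only [Set.mem_preimage, Set.mem_singleton_iff]
        rw [AA_iff hΦ (g1 z) (g3 z) (g2 z)]
        simp
      rw [this]
      refine (Set.toFinite _).isClosed_biUnion fun m _ => isClosed_iInter fun t => isClosed_eq ?_ ?_
      · exact (continuous_const.sub hΦX).matrix_det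
      · simp only [Pi.add_apply, Pi.smul_apply]
        fun_prop) ⟨0, z0⟩ ⟨1, z1⟩
  simpa using this

theorem step1 (hn : 0 < n) {Φ : Matrix (Fin n) (Fin n) ℂ → Matrix (Fin n) (Fin n) ℂ} (hΦ : Pres Φ)
    {S : Matrix (Fin n) (Fin n) ℂ} (hS : S.det ≠ 0) {μ : Fin n → ℂ} (hμ : ∑ i, μ i = 0)
    (hi : Function.Injective fun i => Complex.exp (μ i)) (j : Fin n) :
    Complex.exp (μ j) ∈ spectrum ℂ (Φ (XX S μ)) := by
  haveI : Nonempty (Fin n) := ⟨⟨0, hn⟩⟩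
  obtain ⟨t, ht⟩ := spectrum.nonempty_of_isAlgClosed_of_finiteDimensional ℂ (Φ (XX S μ))
  obtain ⟨i, rfl⟩ := (spec_XX hS μ).1 (hΦ.shrink _ (XX_det hS hμ) ht)
  let σ : Equiv.Perm (Fin n) := Equiv.swap i j
  have hSσ : (S.submatrix id σ).det ≠ 0 := by
    rw [det_permute']
    refine mul_ne_zero ?_ hS
    rcases Int.units_eq_one_or (Equiv.Perm.sign σ) with h | h <;> simp [h]
  have hX : XX (S.submatrix id σ) (μ ∘ σ) = XX S μ := by
    unfold XX
    have : (S.submatrix id σ)⁻¹ = S⁻¹.submatrix σ id := by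
      have := Matrix.inv_submatrix_equiv S (Equiv.refl _) σ
      simpa using this
    rw [this]
    have : diagonal (fun i => Complex.exp ((μ ∘ σ) i)) =
        (diagonal fun i => Complex.exp (μ i)).submatrix σ σ := by
      rw [submatrix_diagonal_equiv]; rfl
    rw [this, submatrix_mul_equiv, submatrix_mul_equiv]; rfl
  have := AA_const hΦ hS hSσ hμ (μ1 := μ ∘ σ) (by rw [← hμ]; exact Equiv.sum_comp σ μ) hi
    (hi.comp σ.injective)
  have mem : i ∈ AA Φ S μ := ht
  rw [this] at mem
  simp only [AA, hX, Set.mem_ofPred_eq, Function.comp, σ, Equiv.swap_apply_left] at mem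
  exact mem

theorem good_mu (n : ℕ) : ∃ μ : Fin n → ℂ, ∑ i, μ i = 0 ∧ Function.Injective fun i => Complex.exp (μ i) := by
  rcases Nat.eq_zero_or_pos n with rfl | hn
  · exact ⟨0, by simp, fun i => i.elim0⟩
  let c : ℝ := (∑ i : Fin n, ((i : ℕ) : ℝ)) / n
  refine ⟨fun i => (((i : ℕ) - c : ℝ) : ℂ), ?_, ?_⟩
  · rw [← Complex.ofReal_sum, Finset.sum_sub_distrib]
    simp only [Finset.sum_const, Finset.card_univ, Fintype.card_fin, nsmul_eq_mul, c]
    have : (n : ℝ) ≠ 0 := by positivity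
    field_simp
    simp
  · intro i j h
    simp only [← Complex.ofReal_exp, Complex.ofReal_inj, Real.exp_eq_exp, sub_left_inj, Nat.cast_inj] at h
    exact Fin.ext h

theorem step2 (hn : 0 < n) {Φ : Matrix (Fin n) (Fin n) ℂ → Matrix (Fin n) (Fin n) ℂ} (hΦ : Pres Φ)
    {S : Matrix (Fin n) (Fin n) ℂ} (hS : S.det ≠ 0) :
    ∃ R : Matrix (Fin n) (Fin n) ℂ, R.det ≠ 0 ∧ ∀ μ : Fin n → ℂ, ∑ i, μ i = 0 →
      Φ (XX S μ) = XX R μ := by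
  obtain ⟨μ0, hμ0, hi0⟩ := good_mu n
  obtain ⟨R, hR, hR0⟩ := diagonalize_s12 hi0 (step1 hn hΦ hS hμ0 hi0)
  refine ⟨R, hR, ?_⟩
  have hRu := isUnit_iff_ne_zero.2 hR
  have hSu := isUnit_iff_ne_zero.2 hS
  have diag : ∀ μ : Fin n → ℂ, ∑ i, μ i = 0 → ∃ d : Fin n → ℂ, R⁻¹ * Φ (XX S μ) * R = diagonal d := by
    intro μ hμ
    have com : XX S μ * XX S μ0 = XX S μ0 * XX S μ := by
      unfold XX
      have : ∀ D D' : Matrix (Fin n) (Fin n) ℂ, S * D * S⁻¹ * (S * D' * S⁻¹) = S * (D * D') * S⁻¹ := by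
        intro D D'
        calc S * D * S⁻¹ * (S * D' * S⁻¹) = S * D * (S⁻¹ * S) * D' * S⁻¹ := by simp only [mul_assoc]
          _ = _ := by rw [nonsing_inv_mul _ hSu, mul_one]; simp only [mul_assoc]
      rw [this, this, diagonal_mul_diagonal, diagonal_mul_diagonal]
      simp only [mul_comm]
    have c2 := hΦ.comm _ _ (XX_det hS hμ) (XX_det hS hμ0) com
    rw [hR0] at c2
    set N := Φ (XX S μ) with hN
    set D := diagonal fun i => Complex.exp (μ0 i) with hD
    have c3 : (R⁻¹ * N * R) * D = D * (R⁻¹ * N * R) := by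
      have := congrArg (fun M => R⁻¹ * M * R) c2
      calc (R⁻¹ * N * R) * D = R⁻¹ * (N * (R * D * R⁻¹)) * R := by
            simp only [mul_assoc]; rw [nonsing_inv_mul _ hRu, mul_one]
        _ = R⁻¹ * (R * D * R⁻¹ * N) * R := this
        _ = _ := by simp only [← mul_assoc]; rw [nonsing_inv_mul _ hRu, one_mul]
    refine ⟨fun i => (R⁻¹ * N * R) i i, ?_⟩
    ext i j
    by_cases hij : i = j
    · subst hij; simp
    · rw [diagonal_apply_ne _ hij]
      have := congrFun (congrFun c3 i) j
      rw [hD, mul_diagonal, diagonal_mul] at this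
      have h2 : (R⁻¹ * N * R) i j * (Complex.exp (μ0 j) - Complex.exp (μ0 i)) = 0 := by
        linear_combination this
      refine (mul_eq_zero.1 h2).resolve_right (sub_ne_zero.2 fun h => hij (hi0 h).symm)
  have back : ∀ N D : Matrix (Fin n) (Fin n) ℂ, R⁻¹ * N * R = D → N = R * D * R⁻¹ := by
    rintro N D rfl
    have : R * (R⁻¹ * N * R) * R⁻¹ = (R * R⁻¹) * N * (R * R⁻¹) := by simp only [mul_assoc]
    rw [this, mul_nonsing_inv _ hRu, one_mul, mul_one]
  intro μ1 hμ1
  let μ : ℂ → Fin n → ℂ := fun z => μ0 + z • (μ1 - μ0)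
  have g3 : ∀ z : ℂ, ∑ i, μ z i = 0 := by
    intro z
    simp [μ, Finset.sum_add_distrib, ← Finset.mul_sum, hμ0, hμ1]
  let C := {z : ℂ | ¬ Function.Injective fun i => Complex.exp (μ z i)}
  have hC : C.Countable := exp_line_countable hi0
  have cμ : ∀ i, Continuous fun z => Complex.exp (μ z i) := by
    intro i
    simp only [μ, Pi.add_apply, Pi.smul_apply]
    fun_prop
  have hX : Continuous fun z : ℂ => XX S (μ z) := by
    unfold XX
    exact (continuous_const.mul (Continuous.matrix_diagonal (continuous_pi cμ))).mul continuous_const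
  have hd : Continuous fun z : ℂ => R⁻¹ * Φ (XX S (μ z)) * R :=
    (continuous_const.mul (hΦ.cont.comp_continuous hX fun z => XX_det hS (g3 z))).mul continuous_const
  have hdi : ∀ i, Continuous fun z : ℂ => (R⁻¹ * Φ (XX S (μ z)) * R) i i :=
    fun i => hd.matrix_elem i i
  have mem : ∀ z i, ∃ j, (R⁻¹ * Φ (XX S (μ z)) * R) i i = Complex.exp (μ z j) := by
    intro z i
    obtain ⟨d, e⟩ := diag (μ z) (g3 z)
    rw [e, diagonal_apply_eq]
    refine (spec_XX hS (μ z)).1 (hΦ.shrink _ (XX_det hS (g3 z)) ?_)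
    rw [back _ _ e, spec_conj_s12 hR]
    exact ⟨i, rfl⟩
  have main : ∀ i z, (R⁻¹ * Φ (XX S (μ z)) * R) i i = Complex.exp (μ z i) := by
    intro i
    choose K hK using fun z => mem z i
    have inj : ∀ z : {z : ℂ // z ∉ C}, Function.Injective fun i => Complex.exp (μ z.1 i) := by
      intro z; by_contra h; exact z.2 h
    have z0 : (0 : ℂ) ∉ C := by
      intro h; simp [C, μ] at h; exact h hi0
    have cst := conn_const hC (fun z => K z.1) (by
      intro a
      have : (fun z : {z : ℂ // z ∉ C} => K z.1) ⁻¹' {a} =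
          {z | (R⁻¹ * Φ (XX S (μ z.1)) * R) i i = Complex.exp (μ z.1 a)} := by
        ext z
        simp only [Set.mem_preimage, Set.mem_singleton_iff, Set.mem_ofPred_eq]
        rw [hK z.1]
        exact ⟨fun h => by rw [h], fun h => inj z h⟩
      rw [this]
      exact isClosed_eq ((hdi i).comp continuous_subtype_val) ((cμ a).comp continuous_subtype_val))
    have K0 : K 0 = i := by
      apply inj ⟨0, z0⟩
      simp only
      rw [← hK 0]
      have m0 : μ 0 = μ0 := by simp [μ]
      rw [m0, hR0]
      have : R⁻¹ * (R * diagonal (fun i => Complex.exp (μ0 i)) * R⁻¹) * R =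
          diagonal (fun i => Complex.exp (μ0 i)) := by
        calc _ = (R⁻¹ * R) * diagonal (fun i => Complex.exp (μ0 i)) * (R⁻¹ * R) := by
              simp only [mul_assoc]
          _ = _ := by rw [nonsing_inv_mul _ hRu, one_mul, mul_one]
      rw [this, diagonal_apply_eq]
    have dense : Dense (Cᶜ : Set ℂ) := hC.dense_compl ℝ
    have := Continuous.ext_on dense (hdi i) (cμ i) (fun z hz => by
      have := cst ⟨z, hz⟩ ⟨0, z0⟩
      simp only at this
      rw [hK z, this, K0])
    exact fun z => congrFun this z
  obtain ⟨d, e⟩ := diag μ1 hμ1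
  have m1 : μ 1 = μ1 := by simp [μ]
  rw [back _ _ e, XX]
  congr 2
  congr 1
  ext i
  have := main i 1
  rw [m1, e, diagonal_apply_eq] at this
  exact this

theorem exists_log (hn : 0 < n) {l : Fin n → ℂ} (hl : ∏ i, l i = 1) :
    ∃ μ : Fin n → ℂ, ∑ i, μ i = 0 ∧ ∀ i, Complex.exp (μ i) = l i := by
  have h0 : ∀ i, l i ≠ 0 := by
    intro i h
    rw [Finset.prod_eq_zero (Finset.mem_univ i) h] at hl
    exact zero_ne_one hl
  have h1 : Complex.exp (∑ i, Complex.log (l i)) = 1 := by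
    rw [Complex.exp_sum, ← hl]
    exact Finset.prod_congr rfl fun i _ => Complex.exp_log (h0 i)
  obtain ⟨k, hk⟩ := Complex.exp_eq_one_iff.1 h1
  refine ⟨fun i => Complex.log (l i) - if i = ⟨0, hn⟩ then k * (2 * Real.pi * Complex.I) else 0, ?_, ?_⟩
  · rw [Finset.sum_sub_distrib, hk]; simp
  · intro i
    rw [Complex.exp_sub, Complex.exp_log (h0 i)]
    split_ifs
    · rw [Complex.exp_int_mul_two_pi_mul_I, div_one]
    · simp

theorem thmA (hn : 0 < n) {Φ : Matrix (Fin n) (Fin n) ℂ → Matrix (Fin n) (Fin n) ℂ} (hΦ : Pres Φ)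
    {S : Matrix (Fin n) (Fin n) ℂ} (hS : S.det ≠ 0) :
    ∃ R : Matrix (Fin n) (Fin n) ℂ, R.det ≠ 0 ∧ ∀ l : Fin n → ℂ, ∏ i, l i = 1 →
      Φ (S * diagonal l * S⁻¹) = R * diagonal l * R⁻¹ := by
  obtain ⟨R, hR, h⟩ := step2 hn hΦ hS
  refine ⟨R, hR, fun l hl => ?_⟩
  obtain ⟨μ, hμ, e⟩ := exists_log hn hl
  have := h μ hμ
  simp only [XX, e] at this
  exact this

end


section
variable {n : ℕ}

theorem diag_of_separable {W : Matrix (Fin n) (Fin n) ℂ} (h : W.charpoly.Separable) :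
    ∃ (S : Matrix (Fin n) (Fin n) ℂ) (l : Fin n → ℂ), S.det ≠ 0 ∧ W = S * diagonal l * S⁻¹ := by
  classical
  have hs : W.charpoly.Splits := IsAlgClosed.splits _
  have hcard : W.charpoly.roots.toFinset.card = n := by
    rw [Multiset.toFinset_card_of_nodup (Polynomial.nodup_roots h), ← hs.natDegree_eq_card_roots,
      charpoly_natDegree_eq_dim, Fintype.card_fin]
  let e := (W.charpoly.roots.toFinset.equivFinOfCardEq hcard).symm
  have hinj : Function.Injective (fun i => (e i : ℂ)) := Subtype.val_injective.comp e.injective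
  obtain ⟨S, hS, e'⟩ := diagonalize_s12 (M := W) hinj (fun j => by
    rw [mem_spec_iff_s12]
    have := (e j).2
    rw [Multiset.mem_toFinset, Polynomial.mem_roots (charpoly_monic W).ne_zero] at this
    exact this)
  exact ⟨S, _, hS, e'⟩

theorem line_sep (X : Matrix (Fin n) (Fin n) ℂ) : ∃ (Z : Matrix (Fin n) (Fin n) ℂ) (r : Polynomial ℂ),
    r ≠ 0 ∧ ∀ z : ℂ, r.eval z ≠ 0 → (X + z • Z).charpoly.Separable := by
  let Y : Matrix (Fin n) (Fin n) ℂ := diagonal (fun i => ((i : ℕ) : ℂ))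
  have hY : Y.charpoly.Separable := by
    rw [charpoly_diagonal, Polynomial.separable_prod_X_sub_C_iff]
    intro i j h
    exact Fin.ext (Nat.cast_injective (R := ℂ) h)
  let Q := (X.map Polynomial.C + (Polynomial.X : Polynomial ℂ) • (Y - X).map Polynomial.C).charpoly
  let r := Polynomial.resultant Q Q.derivative n (n - 1)
  have hQ : ∀ z, Q.map (Polynomial.evalRingHom z) = (X + z • (Y - X)).charpoly := by
    intro z
    rw [← charpoly_map]
    congr 1
    ext i j
    simp
  have hr : ∀ z, r.eval z = 0 ↔ ¬ (X + z • (Y - X)).charpoly.Separable := by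
    intro z
    have hd : (X + z • (Y - X)).charpoly.natDegree = n := by
      rw [charpoly_natDegree_eq_dim, Fintype.card_fin]
    have h1 : r.eval z = Polynomial.resultant (X + z • (Y - X)).charpoly
        (X + z • (Y - X)).charpoly.derivative := by
      rw [Polynomial.natDegree_derivative, hd, ← hQ, Polynomial.derivative_map,
        Polynomial.resultant_map_map]
      rfl
    rw [h1, Polynomial.resultant_eq_zero_iff]
    simp only [Polynomial.Separable, and_iff_right_iff_imp]
    intro _
    exact Or.inl (charpoly_monic _).ne_zero
  refine ⟨Y - X, r, ?_, fun z hz => ?_⟩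
  · intro h0
    have := (hr 1).1 (by rw [h0]; simp)
    simp at this
    exact this hY
  · by_contra h
    exact hz ((hr z).2 h)

theorem density (hn : 0 < n) {Φ : Matrix (Fin n) (Fin n) ℂ → Matrix (Fin n) (Fin n) ℂ}
    (hc : ContinuousOn Φ {X | X.det = 1}) (T T' : Matrix (Fin n) (Fin n) ℂ)
    (h : ∀ (S : Matrix (Fin n) (Fin n) ℂ) (l : Fin n → ℂ), S.det ≠ 0 → ∏ i, l i = 1 →
      Φ (S * diagonal l * S⁻¹) = T * (S * diagonal l * S⁻¹) * T')
    (X : Matrix (Fin n) (Fin n) ℂ) (hX : X.det = 1) : Φ X = T * X * T' := by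
  obtain ⟨Z, r, r0, hr⟩ := line_sep X
  let c : ℂ → ℂ := fun z => Complex.exp (-(Complex.log (X + z • Z).det) / n)
  let W : ℂ → Matrix (Fin n) (Fin n) ℂ := fun z => c z • (X + z • Z)
  have n0 : (n : ℂ) ≠ 0 := by exact_mod_cast hn.ne'
  have cl : Continuous fun z : ℂ => X + z • Z := by fun_prop
  have cd : Continuous fun z : ℂ => (X + z • Z).det := cl.matrix_det
  have cc : ContinuousAt c 0 := by
    refine ContinuousAt.cexp (ContinuousAt.div_const (ContinuousAt.neg ?_) _)
    refine ContinuousAt.clog cd.continuousAt ?_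
    simp [hX]
  have cW : ContinuousAt W 0 := cc.smul cl.continuousAt
  have W0 : W 0 = X := by simp [W, c, hX]
  have ev1 : ∀ᶠ z in nhdsWithin (0 : ℂ) {0}ᶜ, (X + z • Z).det ≠ 0 := by
    refine Filter.Eventually.filter_mono nhdsWithin_le_nhds ?_
    exact cd.continuousAt.eventually_ne (by simp [hX])
  have ev2 : ∀ᶠ z in nhdsWithin (0 : ℂ) {0}ᶜ, r.eval z ≠ 0 := by
    have hfin : (({z | r.eval z = 0} : Set ℂ) \ {0}).Finite := by
      refine (r.roots.toFinset.finite_toSet.subset ?_)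
      intro z hz
      simp only [Finset.mem_coe, Multiset.mem_toFinset]
      rw [Polynomial.mem_roots r0]
      exact hz.1
    have := hfin.isClosed.isOpen_compl.mem_nhds (show (0 : ℂ) ∈ (({z | r.eval z = 0} : Set ℂ) \ {0})ᶜ by simp)
    filter_upwards [nhdsWithin_le_nhds this, self_mem_nhdsWithin] with z hz hz'
    intro h0
    exact hz ⟨h0, hz'⟩
  have hdet : ∀ z, (X + z • Z).det ≠ 0 → (W z).det = 1 := by
    intro z hz
    simp only [W, det_smul, Fintype.card_fin, c]
    rw [← Complex.exp_nat_mul, mul_div_cancel₀ _ n0, Complex.exp_neg, Complex.exp_log hz]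
    exact inv_mul_cancel₀ hz
  have key : ∀ᶠ z in nhdsWithin (0 : ℂ) {0}ᶜ, Φ (W z) = T * W z * T' := by
    filter_upwards [ev1, ev2] with z h1 h2
    obtain ⟨S, l, hS, e⟩ := diag_of_separable (hr z h2)
    have hW : W z = S * diagonal (c z • l) * S⁻¹ := by
      simp only [W]
      rw [e, diagonal_smul, mul_smul_comm, smul_mul_assoc]
    have hd := hdet z h1
    rw [hW, det_conj' hS, det_diagonal] at hd
    rw [hW, h S _ hS hd]
  have t1 : Filter.Tendsto (fun z => Φ (W z)) (nhdsWithin (0 : ℂ) {0}ᶜ) (nhds (Φ X)) := by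
    refine (hc X hX).tendsto.comp ?_
    rw [tendsto_nhdsWithin_iff]
    refine ⟨?_, ?_⟩
    · have := cW.tendsto
      rw [W0] at this
      exact this.mono_left nhdsWithin_le_nhds
    · filter_upwards [ev1] with z hz
      exact hdet z hz
  have t2 : Filter.Tendsto (fun z => T * W z * T') (nhdsWithin (0 : ℂ) {0}ᶜ) (nhds (T * X * T')) := by
    have := cW.tendsto
    rw [W0] at this
    exact ((this.const_mul T).mul_const T').mono_left nhdsWithin_le_nhds
  exact tendsto_nhds_unique (t1.congr' key) t2

end


section
variable {n : ℕ}

theorem sum_vv (x f : Fin n → Fin n → ℂ) (l : Fin n → ℂ) :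
    (Matrix.of x)ᵀ * diagonal l * Matrix.of f = ∑ i, l i • vecMulVec (x i) (f i) := by
  ext a b
  rw [Matrix.mul_apply, Matrix.sum_apply]
  refine Finset.sum_congr rfl fun i _ => ?_
  rw [mul_diagonal]
  simp [vecMulVec_apply]
  ring

theorem Biorth.inv {x f : Fin n → Fin n → ℂ} (h : Biorth x f) :
    (Matrix.of x)ᵀ.det ≠ 0 ∧ (Matrix.of x)ᵀ⁻¹ = Matrix.of f := by
  have h1 : (Matrix.of f) * (Matrix.of x)ᵀ = 1 := by
    ext i j
    rw [Matrix.mul_apply, Matrix.one_apply]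
    exact h i j
  refine ⟨?_, Matrix.inv_eq_left_inv h1⟩
  intro h0
  have := congrArg det h1
  rw [det_mul, h0, det_one, mul_zero] at this
  exact zero_ne_one this

theorem biorth_of_inv {R : Matrix (Fin n) (Fin n) ℂ} (hR : R.det ≠ 0) :
    Biorth (fun i => Rᵀ i) (fun i => R⁻¹ i) := by
  intro i j
  have := congrFun (congrFun (nonsing_inv_mul R (isUnit_iff_ne_zero.2 hR)) i) j
  rw [Matrix.mul_apply, Matrix.one_apply] at this
  exact this

theorem conj_eq_sum {R : Matrix (Fin n) (Fin n) ℂ} (l : Fin n → ℂ) :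
    R * diagonal l * R⁻¹ = ∑ i, l i • vecMulVec (Rᵀ i) (R⁻¹ i) := by
  exact sum_vv (fun i => Rᵀ i) (fun i => R⁻¹ i) l

noncomputable def psi (Φ : Matrix (Fin n) (Fin n) ℂ → Matrix (Fin n) (Fin n) ℂ)
    (P : Matrix (Fin n) (Fin n) ℂ) : Matrix (Fin n) (Fin n) ℂ :=
  ((2 : ℂ) ^ (n - 1) - 2⁻¹)⁻¹ • (Φ ((2 : ℂ)⁻¹ • 1 + ((2 : ℂ) ^ (n - 1) - 2⁻¹) • P) - (2 : ℂ)⁻¹ • 1)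

theorem ab_ne (hn : 0 < n) : ((2 : ℂ) ^ (n - 1) - 2⁻¹) ≠ 0 := by
  intro h
  have h1 : (2 : ℂ) ^ (n - 1) * 2 = 1 := by linear_combination 2 * h
  rw [← pow_succ] at h1
  have h2 : (2 : ℕ) ^ (n - 1 + 1) = 1 := by exact_mod_cast h1
  simp at h2

theorem D1 (hn : 0 < n) {Φ : Matrix (Fin n) (Fin n) ℂ → Matrix (Fin n) (Fin n) ℂ} (hΦ : Pres Φ)
    {x f : Fin n → Fin n → ℂ} (h : Biorth x f) : ∃ y g : Fin n → Fin n → ℂ, Biorth y g ∧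
      (∀ i, psi Φ (vecMulVec (x i) (f i)) = vecMulVec (y i) (g i)) ∧
      ∀ l : Fin n → ℂ, ∏ i, l i = 1 →
        Φ (∑ i, l i • vecMulVec (x i) (f i)) = ∑ i, l i • vecMulVec (y i) (g i) := by
  obtain ⟨hS, hSi⟩ := h.inv
  obtain ⟨R, hR, hh⟩ := thmA hn hΦ hS
  have key : ∀ l : Fin n → ℂ, ∏ i, l i = 1 →
        Φ (∑ i, l i • vecMulVec (x i) (f i)) = ∑ i, l i • vecMulVec (Rᵀ i) (R⁻¹ i) := by
    intro l hl
    rw [← sum_vv, ← hSi, hh l hl, conj_eq_sum]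
  have hyg := biorth_of_inv hR
  refine ⟨fun i => Rᵀ i, fun i => R⁻¹ i, hyg, ?_, key⟩
  intro i
  have gen : ∀ x f : Fin n → Fin n → ℂ, Biorth x f →
      ∑ j, ((2 : ℂ)⁻¹ + if j = i then ((2 : ℂ) ^ (n - 1) - 2⁻¹) else 0) • vecMulVec (x j) (f j)
      = (2 : ℂ)⁻¹ • 1 + ((2 : ℂ) ^ (n - 1) - 2⁻¹) • vecMulVec (x i) (f i) := by
    intro x f h
    simp only [add_smul, Finset.sum_add_distrib, ← Finset.smul_sum, h.sum_eq_one, ite_smul, zero_smul]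
    simp
  have hp : ∏ j : Fin n, ((2 : ℂ)⁻¹ + if j = i then ((2 : ℂ) ^ (n - 1) - 2⁻¹) else 0) = 1 := by
    rw [← Finset.mul_prod_erase _ _ (Finset.mem_univ i)]
    have : ∀ j ∈ Finset.univ.erase i,
        ((2 : ℂ)⁻¹ + if j = i then ((2 : ℂ) ^ (n - 1) - 2⁻¹) else 0) = 2⁻¹ := by
      intro j hj
      simp [Finset.ne_of_mem_erase hj]
    rw [Finset.prod_congr rfl this]
    simp
  have k := key _ hp
  rw [gen x f h, gen _ _ hyg] at k
  rw [psi, k, add_sub_cancel_left, smul_smul, inv_mul_cancel₀ (ab_ne hn), one_smul]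

theorem psi_fr (hn : 0 < n) {Φ : Matrix (Fin n) (Fin n) ℂ → Matrix (Fin n) (Fin n) ℂ} (hΦ : Pres Φ) :
    Fr (psi Φ) := by
  intro x f h
  obtain ⟨y, g, a, b, _⟩ := D1 hn hΦ h
  exact ⟨y, g, a, b⟩

theorem D2 (hn : 0 < n) {Φ : Matrix (Fin n) (Fin n) ℂ → Matrix (Fin n) (Fin n) ℂ} (hΦ : Pres Φ)
    {x f : Fin n → Fin n → ℂ} (h : Biorth x f) {l : Fin n → ℂ} (hl : ∏ i, l i = 1) :
        Φ (∑ i, l i • vecMulVec (x i) (f i)) = ∑ i, l i • psi Φ (vecMulVec (x i) (f i)) := by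
  obtain ⟨y, g, a, b, c⟩ := D1 hn hΦ h
  rw [c l hl]
  simp only [b]

theorem D2det {x f : Fin n → Fin n → ℂ} (h : Biorth x f) {l : Fin n → ℂ} (hl : ∏ i, l i = 1) :
    (∑ i, l i • vecMulVec (x i) (f i)).det = 1 := by
  obtain ⟨hS, hSi⟩ := h.inv
  rw [← sum_vv, ← hSi, det_conj' hS, det_diagonal, hl]

/-- the straight case -/
theorem tau_id {k : ℕ} {Φ : Matrix (Fin (k+3)) (Fin (k+3)) ℂ → Matrix (Fin (k+3)) (Fin (k+3)) ℂ}
    (hΦ : Pres Φ) {T : Matrix (Fin (k+3)) (Fin (k+3)) ℂ} {τ : ℂ →+* ℂ} (hT : IsUnit T)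
    (h : ∀ m h, h ⬝ᵥ m = 1 → psi Φ (vecMulVec m h) = T * vecMulVec (τ ∘ m) (τ ∘ h) * T⁻¹) :
    ∀ u, τ u = u := by
  have hTd : IsUnit T.det := (Matrix.isUnit_iff_isUnit_det T).1 hT
  let e : Fin (k+3) → Fin (k+3) → ℂ := fun i => Pi.single i 1
  have n10 : (1 : Fin (k+3)) ≠ 0 := by simp [Fin.ext_iff]
  have n20 : (2 : Fin (k+3)) ≠ 0 := by
    intro h2
    have h3 := congrArg Fin.val h2
    have h4 : ((2 : Fin (k+3)) : ℕ) = 2 := Nat.mod_eq_of_lt (show 2 < k + 3 by omega)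
    rw [h4] at h3
    simp at h3
  have n21 : (2 : Fin (k+3)) ≠ 1 := by
    intro h2
    have h3 := congrArg Fin.val h2
    have h4 : ((2 : Fin (k+3)) : ℕ) = 2 := Nat.mod_eq_of_lt (show 2 < k + 3 by omega)
    rw [h4] at h3
    simp at h3
  let X : ℂ → Matrix (Fin (k+3)) (Fin (k+3)) ℂ := fun d =>
    1 + Matrix.single 1 0 1 + d • Matrix.single 0 0 1 + ((1 + d)⁻¹ - 1) • Matrix.single 2 2 1
  let x : ℂ → Fin (k+3) → Fin (k+3) → ℂ := fun d i => if i = 0 then e 0 + d⁻¹ • e 1 else e i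
  let f : ℂ → Fin (k+3) → Fin (k+3) → ℂ := fun d i => if i = 1 then e 1 - d⁻¹ • e 0 else e i
  let l : ℂ → Fin (k+3) → ℂ := fun d i => if i = 0 then 1 + d else if i = 2 then (1 + d)⁻¹ else 1
  have bi : ∀ d, Biorth (x d) (f d) := by
    intro d i j
    simp only [x, f, e]
    by_cases hi : i = 1
    · by_cases hj : j = 0
      · subst hi hj; simp [n10, n10.symm, dotProduct_add, sub_dotProduct]
      · subst hi; simp [hj, sub_dotProduct, Pi.single_apply, eq_comm]
    · by_cases hj : j = 0
      · subst hj; simp [hi, dotProduct_add, Pi.single_apply, eq_comm]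
      · simp [hi, hj, Pi.single_apply, eq_comm]
  have hl : ∀ d, 1 + d ≠ 0 → ∏ i, l d i = 1 := by
    intro d hd
    rw [← Finset.mul_prod_erase _ _ (Finset.mem_univ 0),
      ← Finset.mul_prod_erase _ _ (show (2 : Fin (k+3)) ∈ Finset.univ.erase 0 by simp [n20]),
      Finset.prod_eq_one]
    · simp [l, n20, hd]
    · intro i hi
      simp only [Finset.mem_erase, Finset.mem_univ, and_true] at hi
      simp [l, hi.1, hi.2]
  have lsum : ∀ d (P : Fin (k+3) → Matrix (Fin (k+3)) (Fin (k+3)) ℂ), ∑ i, P i = 1 →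
      ∑ i, l d i • P i = 1 + d • P 0 + ((1 + d)⁻¹ - 1) • P 2 := by
    intro d P hP
    rw [← hP]
    have : ∀ i, l d i • P i = P i + ((if i = 0 then d • P 0 else 0) +
        (if i = 2 then ((1 + d)⁻¹ - 1) • P 2 else 0)) := by
      intro i
      simp only [l]
      by_cases h0 : i = 0
      · subst h0; simp [n20.symm, add_smul]
      · by_cases h2 : i = 2
        · subst h2; simp [n20, sub_smul]
        · simp [h0, h2]
    simp only [this, Finset.sum_add_distrib]
    simp [add_assoc]
  have Xeq : ∀ d, d ≠ 0 → X d = ∑ i, l d i • vecMulVec (x d i) (f d i) := by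
    intro d hd
    rw [lsum d _ (bi d).sum_eq_one]
    have q0 : vecMulVec (x d 0) (f d 0) = Matrix.single 0 0 1 + d⁻¹ • Matrix.single 1 0 1 := by
      ext i j
      simp only [x, f, e, if_true, n10.symm, if_false, vecMulVec_apply, Matrix.add_apply,
        Matrix.smul_apply, Matrix.single_apply, Pi.add_apply, Pi.smul_apply, Pi.single_apply, smul_eq_mul]
      by_cases hj : j = 0 <;> by_cases h0 : i = 0 <;> by_cases h1 : i = 1 <;> simp_all [eq_comm]
    have q2 : vecMulVec (x d 2) (f d 2) = Matrix.single 2 2 1 := by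
      ext i j
      simp only [x, f, e, n20, n21, if_false, vecMulVec_apply, Matrix.single_apply, Pi.single_apply]
      by_cases hj : j = 2 <;> by_cases h0 : i = 2 <;> simp_all [eq_comm]
    rw [q0, q2, smul_add, smul_smul, mul_inv_cancel₀ hd, one_smul]
    simp only [X]
    abel
  have Xdet : ∀ d, 1 + d ≠ 0 → (X d).det = 1 := by
    intro d hd
    by_cases h0 : d = 0
    · subst h0
      have : X 0 = Matrix.transvection 1 0 1 := by simp [X, Matrix.transvection]
      rw [this, det_transvection_of_ne _ _ n10]
    · rw [Xeq d h0]
      exact D2det (bi d) (hl d hd)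
  have val : ∀ d, d ≠ 0 → 1 + d ≠ 0 → (T⁻¹ * Φ (X d) * T) 1 0 = d * τ d⁻¹ := by
    intro d h0 h1
    rw [Xeq d h0, D2 (by omega) hΦ (bi d) (hl d h1)]
    have dot1 : ∀ i, f d i ⬝ᵥ x d i = 1 := fun i => by simpa using bi d i i
    have : ∑ i, l d i • psi Φ (vecMulVec (x d i) (f d i)) =
        T * (∑ i, l d i • vecMulVec (τ ∘ x d i) (τ ∘ f d i)) * T⁻¹ := by
      rw [Finset.mul_sum, Finset.sum_mul]
      refine Finset.sum_congr rfl fun i _ => ?_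
      rw [h _ _ (dot1 i), mul_smul_comm, smul_mul_assoc]
    rw [this]
    have c : ∀ N : Matrix (Fin (k+3)) (Fin (k+3)) ℂ, T⁻¹ * (T * N * T⁻¹) * T = N := by
      intro N
      calc _ = (T⁻¹ * T) * N * (T⁻¹ * T) := by simp only [mul_assoc]
        _ = _ := by rw [nonsing_inv_mul _ hTd, one_mul, mul_one]
    have biτ : Biorth (fun i => τ ∘ x d i) (fun i => τ ∘ f d i) := by
      intro i j
      simp only
      rw [← RingHom.map_dotProduct, bi d i j]
      split_ifs <;> simp
    rw [c, lsum d _ biτ.sum_eq_one]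
    simp [vecMulVec_apply, x, f, e, n10, n10.symm, n20, n21.symm, n20.symm, n21]
  have G : Filter.Tendsto (fun d => (T⁻¹ * Φ (X d) * T) 1 0) (nhds 0) (nhds ((T⁻¹ * Φ (X 0) * T) 1 0)) := by
    have ev : ∀ᶠ d in nhds (0 : ℂ), 1 + d ≠ 0 := by
      have : ContinuousAt (fun d : ℂ => 1 + d) 0 := by fun_prop
      exact this.eventually_ne (by simp)
    have cX : ContinuousAt X 0 := by
      simp only [X]
      have : ContinuousAt (fun d : ℂ => (1 + d)⁻¹) 0 := by
        refine ContinuousAt.inv₀ (by fun_prop) (by simp)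
      fun_prop
    have t1 : Filter.Tendsto (fun d => Φ (X d)) (nhds 0) (nhds (Φ (X 0))) := by
      refine (hΦ.cont (X 0) (Xdet 0 (by simp))).tendsto.comp ?_
      rw [tendsto_nhdsWithin_iff]
      refine ⟨cX.tendsto, ?_⟩
      filter_upwards [ev] with d hd
      exact Xdet d hd
    have t2 := (t1.const_mul T⁻¹).mul_const T
    exact ((continuous_id.matrix_elem 1 0).tendsto _).comp t2
  have lim : ∀ u, u ≠ 0 → τ u / u = (T⁻¹ * Φ (X 0) * T) 1 0 := by
    intro u hu
    have tk : Filter.Tendsto (fun N : ℕ => (u * ((N : ℂ) + 1))⁻¹) Filter.atTop (nhds 0) := by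
      have := (tendsto_one_div_add_atTop_nhds_zero_nat (𝕜 := ℂ)).const_mul u⁻¹
      rw [mul_zero] at this
      refine this.congr fun N => ?_
      rw [mul_inv, one_div]
    have t := G.comp tk
    have ev : ∀ᶠ N : ℕ in Filter.atTop, 1 + (u * ((N : ℂ) + 1))⁻¹ ≠ 0 := by
      have : ContinuousAt (fun d : ℂ => 1 + d) 0 := by fun_prop
      exact tk.eventually (this.eventually_ne (by simp))
    have cst : Filter.Tendsto (fun _ : ℕ => τ u / u) Filter.atTop (nhds ((T⁻¹ * Φ (X 0) * T) 1 0)) := by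
      refine t.congr' ?_
      filter_upwards [ev] with N hN
      have hN1 : (N : ℂ) + 1 ≠ 0 := by exact_mod_cast Nat.succ_ne_zero N
      simp only [Function.comp]
      rw [val _ (inv_ne_zero (mul_ne_zero hu hN1)) hN, inv_inv, map_mul, map_add, map_natCast, map_one]
      field_simp
    exact tendsto_nhds_unique tendsto_const_nhds cst
  intro u
  by_cases hu : u = 0
  · rw [hu, map_zero]
  · have h1 := lim u hu
    rw [← lim 1 one_ne_zero, map_one, div_one, div_eq_one_iff_eq hu] at h1
    exact h1

theorem straight {k : ℕ} {Φ : Matrix (Fin (k+3)) (Fin (k+3)) ℂ → Matrix (Fin (k+3)) (Fin (k+3)) ℂ}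
    (hΦ : Pres Φ) {T : Matrix (Fin (k+3)) (Fin (k+3)) ℂ} {τ : ℂ →+* ℂ} (hT : IsUnit T)
    (h : ∀ m h, h ⬝ᵥ m = 1 → psi Φ (vecMulVec m h) = T * vecMulVec (τ ∘ m) (τ ∘ h) * T⁻¹)
    (X : Matrix (Fin (k+3)) (Fin (k+3)) ℂ) (hX : X.det = 1) : Φ X = T * X * T⁻¹ := by
  have ti := tau_id hΦ hT h
  have tc : ∀ m : Fin (k+3) → ℂ, τ ∘ m = m := fun m => funext fun i => ti _
  refine density (by omega) hΦ.cont T T⁻¹ ?_ X hX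
  intro S l hS hl
  have b := biorth_of_inv hS
  rw [conj_eq_sum, D2 (by omega) hΦ b hl, Finset.mul_sum, Finset.sum_mul]
  refine Finset.sum_congr rfl fun i _ => ?_
  have dot1 : S⁻¹ i ⬝ᵥ Sᵀ i = 1 := by simpa using b i i
  rw [h _ _ dot1, tc, tc, mul_smul_comm, smul_mul_assoc]

theorem Pres.tr {Φ : Matrix (Fin n) (Fin n) ℂ → Matrix (Fin n) (Fin n) ℂ} (hΦ : Pres Φ) :
    Pres (fun X => (Φ X)ᵀ) where
  cont := by
    have : Continuous fun A : Matrix (Fin n) (Fin n) ℂ => Aᵀ := continuous_id.matrix_transpose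
    exact this.comp_continuousOn hΦ.cont
  comm := by
    intro X Y hX hY h
    have := congrArg transpose (hΦ.comm X Y hX hY h)
    rw [transpose_mul, transpose_mul] at this
    exact this.symm
  shrink := by
    intro X hX t ht
    refine hΦ.shrink X hX ?_
    rw [mem_spec_iff_s12] at ht ⊢
    rwa [charpoly_transpose] at ht

theorem psi_tr {Φ : Matrix (Fin n) (Fin n) ℂ → Matrix (Fin n) (Fin n) ℂ} (P : Matrix (Fin n) (Fin n) ℂ) :
    psi (fun X => (Φ X)ᵀ) P = (psi Φ P)ᵀ := by
  simp [psi, transpose_sub, transpose_smul]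

theorem main_Phi {k : ℕ} {Φ : Matrix (Fin (k+3)) (Fin (k+3)) ℂ → Matrix (Fin (k+3)) (Fin (k+3)) ℂ}
    (hΦ : Pres Φ) : ∃ T : Matrix (Fin (k+3)) (Fin (k+3)) ℂ, IsUnit T ∧
      ((∀ X, X.det = 1 → Φ X = T * X * T⁻¹) ∨ (∀ X, X.det = 1 → Φ X = T * Xᵀ * T⁻¹)) := by
  obtain ⟨T, τ, hT, h | h⟩ := thmB (psi_fr (by omega) hΦ)
  · exact ⟨T, hT, Or.inl fun X hX => straight hΦ hT h X hX⟩
  · have hTd : IsUnit T.det := (Matrix.isUnit_iff_isUnit_det T).1 hT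
    refine ⟨(T⁻¹)ᵀ, ?_, Or.inr fun X hX => ?_⟩
    · rw [Matrix.isUnit_iff_isUnit_det, det_transpose]
      exact Matrix.isUnit_nonsing_inv_det _ hTd
    · have := straight hΦ.tr hT (fun m h' hm => by rw [psi_tr]; exact h m h' hm) X hX
      have := congrArg transpose this
      simp only [transpose_transpose, transpose_mul] at this
      rw [this, ← transpose_nonsing_inv, nonsing_inv_nonsing_inv _ hTd, mul_assoc]

end


/-- For `n ≥ 3`, any continuous, commutativity-preserving and
spectrum-shrinking map `φ : SL(n) → M_n` is of the form `φ(X) = T X T⁻¹` or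
`φ(X) = T Xᵗ T⁻¹` for some `T ∈ GL(n)`. -/
theorem preserver_SLn (n : ℕ) (hn : 3 ≤ n)
    (φ : {X : Matrix (Fin n) (Fin n) ℂ // X.det = 1} → Matrix (Fin n) (Fin n) ℂ)
    (hcont : Continuous φ)
    (hcomm : ∀ X Y, X.val * Y.val = Y.val * X.val → φ X * φ Y = φ Y * φ X)
    (hshrink : ∀ X, spectrum ℂ (φ X) ⊆ spectrum ℂ X.val) :
    ∃ T : Matrix (Fin n) (Fin n) ℂ, IsUnit T ∧
      ((∀ X, φ X = T * X.val * T⁻¹) ∨ (∀ X, φ X = T * X.val.transpose * T⁻¹)) := by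
  classical
  obtain ⟨k, rfl⟩ : ∃ k, n = k + 3 := ⟨n - 3, by omega⟩
  let Φ : Matrix (Fin (k+3)) (Fin (k+3)) ℂ → Matrix (Fin (k+3)) (Fin (k+3)) ℂ :=
    fun X => if h : X.det = 1 then φ ⟨X, h⟩ else 0
  have hΦe : ∀ X (h : X.det = 1), Φ X = φ ⟨X, h⟩ := fun X h => dif_pos h
  have hΦ : Pres Φ := by
    refine ⟨?_, ?_, ?_⟩
    · rw [continuousOn_iff_continuous_domRestrict]
      have : Set.domRestrict {X : Matrix (Fin (k+3)) (Fin (k+3)) ℂ | X.det = 1} Φ = φ := by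
        funext X
        exact hΦe X.1 X.2
      rw [this]
      exact hcont
    · intro X Y hX hY h
      rw [hΦe X hX, hΦe Y hY]
      exact hcomm _ _ h
    · intro X hX
      rw [hΦe X hX]
      exact hshrink ⟨X, hX⟩
  obtain ⟨T, hT, h⟩ := main_Phi hΦ
  refine ⟨T, hT, h.imp ?_ ?_⟩
  · intro h X
    rw [← h X.1 X.2, hΦe X.1 X.2]
  · intro h X
    rw [← h X.1 X.2, hΦe X.1 X.2]
end
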